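/- If p and p' both belong to the class 𝓜(ℝⁿ), then there exists a constant c_p, depending only on n, p and the kernel K, such that ‖Tf‖_{L^{p(·)}} ≤ c_p ‖f‖_{L^{p(·)}} for every f ∈ L^{p(·)}(ℝⁿ); that is, the Calderón–Zygmund singular integral T (defined on the dense subset L^∞_c and extended by continuity) is bounded on L^{p(·)}(ℝⁿ). -/

import Mathlib

/-!
The operator `T` need not be compared with a sharp maximal function: a bilinear estimate
`∫ |T f| g ≤ C ∫ (M f) (M_d g)`, with `M_d` the dyadic maximal function, reduces the theorem to
Hölder's inequality and the boundedness of `M` on `L^{p(·)}` and on `L^{p'(·)}`.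

The kernel `K` is truncated smoothly to the kernels `kt K δ R`, which satisfy the standard size and
regularity bounds uniformly in `δ` and `R` (`HK.sk`). Their Fourier transforms are uniformly bounded
(`SK.fourier`): near the origin because the integral over spheres vanishes, away from the origin by
translating by half a period. Plancherel's identity gives a uniform `L²` bound, and the
Calderón-Zygmund decomposition a uniform weak type `(1,1)` bound (`weak11`).

The bilinear estimate comes from a pointwise recursion on dyadic cubes (`local_step`). Let `Q*` be a
fixed dilation of `Q`. By the weak type bounds, `|T (f 1_{Q*})|` is at most a constant times the
average of `|f|` over `Q*`, except on disjoint dyadic subcubes `P` of total measure at most `|Q| / 2`;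
on these it exceeds such a bound by at most `|T (f 1_{P*})|`. Iterating, the average terms live on
disjoint sets occupying at least half of each cube, and the remainder tends to zero (`bilinear`).

For the norm bound (`trunc_bound`), suppose that the modular `m = ∫ (|T f| / λ) ^ p` exceeds `1` for a
truncated operator. The function `g = (|T f| / λ) ^ (p - 1)` then has norm at most `m` in `L^{p'(·)}`,
while `∫ |T f| g = λ m`. The bilinear estimate bounds this by a constant times `‖f‖ m`, a contradiction
once `λ` is a large multiple of `‖f‖`.

The passage to `T` uses Fatou's lemma, and needs the almost everywhere existence of the principal
value as well as its agreement with the limit of the smooth truncations (`pv_exists`). This follows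
from Cotlar's inequality (`cotlar`), which yields a weak type `(2,2)` bound for all truncations
simultaneously, and from the density of Lipschitz functions in `L²`, for which cancellation makes the
truncations converge uniformly.
-/

open MeasureTheory ENNReal Filter Set Topology

noncomputable section

namespace VarExp

/-- Euclidean space ℝⁿ. -/
abbrev E (n : ℕ) := EuclideanSpace ℝ (Fin n)

/-- An axis-parallel cube in ℝⁿ. -/
def IsCube {n : ℕ} (Q : Set (E n)) : Prop :=
  ∃ (a : E n) (h : ℝ), 0 < h ∧ Q = {x : E n | ∀ i, a i ≤ x i ∧ x i ≤ a i + h}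

/-- The average of `f` over a set `Q` (w.r.t. Lebesgue measure). -/
def cubeAvg {n : ℕ} (Q : Set (E n)) (f : E n → ℝ) : ℝ :=
  (volume Q).toReal⁻¹ * ∫ x in Q, f x

/-- The BMO seminorm `‖b‖_* = sup_Q |Q|⁻¹ ∫_Q |b - b_Q|`. -/
def bmoNorm {n : ℕ} (b : E n → ℝ) : ℝ≥0∞ :=
  ⨆ (Q : Set (E n)) (_ : IsCube Q),
    (∫⁻ x in Q, ENNReal.ofReal |b x - cubeAvg Q b|) / volume Q

/-- `b ∈ BMO(ℝⁿ)`. -/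
def MemBMO {n : ℕ} (b : E n → ℝ) : Prop :=
  LocallyIntegrable b volume ∧ bmoNorm b < ⊤

/-- Hardy-Littlewood maximal function (over axis-parallel cubes) of an
`ℝ≥0∞`-valued function. -/
def emaximal {n : ℕ} (f : E n → ℝ≥0∞) (x : E n) : ℝ≥0∞ :=
  ⨆ (Q : Set (E n)) (_ : IsCube Q ∧ x ∈ Q), (∫⁻ y in Q, f y) / volume Q

/-- Hardy-Littlewood maximal function of a real function. -/
def maximal {n : ℕ} (f : E n → ℝ) : E n → ℝ≥0∞ :=
  emaximal (fun y => ENNReal.ofReal |f y|)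

/-- Luxemburg-Nakano norm of an `ℝ≥0∞`-valued function for a variable exponent `p`. -/
def eLux {n : ℕ} (p : E n → ℝ) (f : E n → ℝ≥0∞) : ℝ≥0∞ :=
  sInf {lam : ℝ≥0∞ | lam ≠ 0 ∧ ∫⁻ x, (f x / lam) ^ (p x) ≤ 1}

/-- Luxemburg-Nakano norm `‖f‖_{L^{p(·)}}` of a real function. -/
def vNorm {n : ℕ} (p : E n → ℝ) (f : E n → ℝ) : ℝ≥0∞ :=
  eLux p (fun x => ENNReal.ofReal |f x|)

/-- Membership `f ∈ L^{p(·)}(ℝⁿ)`: the modular of `λf` is finite for some `λ > 0`. -/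
def MemVarLp {n : ℕ} (p : E n → ℝ) (f : E n → ℝ) : Prop :=
  AEStronglyMeasurable f volume ∧
    ∃ lam : ℝ, 0 < lam ∧ ∫⁻ x, (ENNReal.ofReal (lam * |f x|)) ^ (p x) < ⊤

/-- Condition (*): `p` measurable, `1 ≤ p`, `1 < p_- := essinf p` and
`p_+ := esssup p < ∞` (i.e. `p` essentially bounded above). -/
def GoodExp {n : ℕ} (p : E n → ℝ) : Prop :=
  Measurable p ∧ (∀ x, 1 ≤ p x) ∧ 1 < essInf p volume ∧
    ∃ B : ℝ, ∀ᵐ x ∂(volume : Measure (E n)), p x ≤ B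

/-- The constant `r_p := 1 + 1/p_- - 1/p_+`. -/
def rp {n : ℕ} (p : E n → ℝ) : ℝ :=
  1 + (essInf p volume)⁻¹ - (essSup p volume)⁻¹

/-- The conjugate exponent `p'(x) = p(x)/(p(x)-1)`. -/
def conjExp {n : ℕ} (p : E n → ℝ) : E n → ℝ := fun x => p x / (p x - 1)

/-- The class `𝓜(ℝⁿ)`: `p` satisfies (*) and the Hardy-Littlewood maximal operator
is bounded on `L^{p(·)}(ℝⁿ)`. -/
def MemClassM {n : ℕ} (p : E n → ℝ) : Prop :=
  GoodExp p ∧ ∃ c : ℝ≥0∞, c ≠ ⊤ ∧ ∀ f : E n → ℝ, AEStronglyMeasurable f volume →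
    eLux p (maximal f) ≤ c * vNorm p f

/-- Bounded measurable functions with compact support. -/
def MemLinftyC {n : ℕ} (f : E n → ℝ) : Prop :=
  Measurable f ∧ (∃ C : ℝ, ∀ x, |f x| ≤ C) ∧ HasCompactSupport f

/-- The Calderón-Zygmund kernel data: `Ω` is homogeneous of degree zero, infinitely
differentiable away from the origin (equivalently, on the unit sphere), and has
mean value zero over the unit sphere (expressed, via homogeneity, as mean zero
over the annulus `1 ≤ ‖x‖ ≤ 2`). -/
structure IsCZKernel {n : ℕ} (Ω : E n → ℝ) : Prop where
  hom : ∀ (x : E n) (t : ℝ), 0 < t → Ω (t • x) = Ω x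
  smooth : ContDiffOn ℝ (⊤ : ℕ∞) Ω {x : E n | x ≠ 0}
  mean : ∫ x in {x : E n | 1 ≤ ‖x‖ ∧ ‖x‖ ≤ 2}, Ω x = 0

/-- The kernel `K(x) = Ω(x)/|x|ⁿ`. -/
def kernelFn {n : ℕ} (Ω : E n → ℝ) : E n → ℝ := fun x => Ω x / ‖x‖ ^ n

/-- The truncated kernel `K_ε = K·χ_{|y|>ε}`. -/
def kernelEps {n : ℕ} (Ω : E n → ℝ) (ε : ℝ) : E n → ℝ :=
  fun y => if ε < ‖y‖ then kernelFn Ω y else 0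

/-- The truncated singular integral `T_ε f(x) = ∫_{|y|>ε} K(y) f(x-y) dy`. -/
def Teps {n : ℕ} (Ω : E n → ℝ) (ε : ℝ) (f : E n → ℝ) (x : E n) : ℝ :=
  ∫ y in {y : E n | ε < ‖y‖}, kernelFn Ω y * f (x - y)

/-- The principal value singular integral `T f(x) = lim_{ε→0⁺} T_ε f(x)`. -/
def Tsing {n : ℕ} (Ω : E n → ℝ) (f : E n → ℝ) (x : E n) : ℝ :=
  limUnder (𝓝[>] (0 : ℝ)) (fun ε => Teps Ω ε f x)

/-- The commutator `[b,T]f = b·Tf - T(bf)`. -/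
def commutator {n : ℕ} (b : E n → ℝ) (Ω : E n → ℝ) (f : E n → ℝ) : E n → ℝ :=
  fun x => b x * Tsing Ω f x - Tsing Ω (fun y => b y * f y) x

/-- The non-increasing rearrangement `f^*(t)` (ℝ≥0∞-valued, `t ∈ ℝ≥0∞`). -/
def rearr {n : ℕ} (f : E n → ℝ) (t : ℝ≥0∞) : ℝ≥0∞ :=
  sInf {α : ℝ≥0∞ | volume {x : E n | α < ENNReal.ofReal |f x|} ≤ t}

/-- The local sharp maximal function
`M_λ^# f(x) = sup_{Q ∋ x} inf_c ((f-c)χ_Q)^*(λ|Q|)`. -/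
def localSharp {n : ℕ} (lam : ℝ) (f : E n → ℝ) (x : E n) : ℝ≥0∞ :=
  ⨆ (Q : Set (E n)) (_ : IsCube Q ∧ x ∈ Q),
    ⨅ c : ℝ, rearr (Q.indicator (fun y => f y - c)) (ENNReal.ofReal lam * volume Q)

/-- The sharp maximal function
`f_δ^#(x) = sup_{Q ∋ x} inf_c (|Q|⁻¹ ∫_Q |f-c|^δ)^{1/δ}`. -/
def sharpDelta {n : ℕ} (δ : ℝ) (f : E n → ℝ) (x : E n) : ℝ≥0∞ :=
  ⨆ (Q : Set (E n)) (_ : IsCube Q ∧ x ∈ Q),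
    ⨅ c : ℝ, ((∫⁻ y in Q, ENNReal.ofReal (|f y - c| ^ δ)) / volume Q) ^ (1 / δ)

/-- `f ∈ L^δ_loc(ℝⁿ)` (local δ-integrability over cubes). -/
def MemLdeltaLoc {n : ℕ} (δ : ℝ) (f : E n → ℝ) : Prop :=
  AEStronglyMeasurable f volume ∧
    ∀ Q : Set (E n), IsCube Q → ∫⁻ y in Q, ENNReal.ofReal (|f y| ^ δ) < ⊤

/-- `f ∈ L log L(Q)`: `∫_Q |f| log⁺|f| < ∞`. -/
def MemLlogL {n : ℕ} (Q : Set (E n)) (f : E n → ℝ) : Prop :=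
  AEStronglyMeasurable f volume ∧
    ∫⁻ x in Q, ENNReal.ofReal (|f x| * Real.log (max |f x| 1)) < ⊤

/-- `g ∈ L_exp(Q)`: `∫_Q exp(λ|g|) < ∞` for some `λ > 0`. -/
def MemLexp {n : ℕ} (Q : Set (E n)) (g : E n → ℝ) : Prop :=
  AEStronglyMeasurable g volume ∧
    ∃ lam : ℝ, 0 < lam ∧ ∫⁻ x in Q, ENNReal.ofReal (Real.exp (lam * |g x|)) < ⊤

/-- `f^{**}(t) = t⁻¹ ∫_0^t f^*(s) ds`. -/
def starStar {n : ℕ} (f : E n → ℝ) (t : ℝ) : ℝ≥0∞ :=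
  (∫⁻ s in Set.Ioc (0 : ℝ) t, rearr f (ENNReal.ofReal s)) / ENNReal.ofReal t

/-- The Zygmund norm `‖f‖_{L log L(Q)} = ∫_0^{|Q|} (fχ_Q)^{**}(t) dt`. -/
def llogLNorm {n : ℕ} (Q : Set (E n)) (f : E n → ℝ) : ℝ≥0∞ :=
  ∫⁻ t in Set.Ioc (0 : ℝ) (volume Q).toReal, starStar (Q.indicator f) t

/-- The norm `‖g‖_{L_exp(Q)} = sup_{0<t<|Q|} g^{**}(t)/(1 + log(|Q|/t))`. -/
def lexpNorm {n : ℕ} (Q : Set (E n)) (g : E n → ℝ) : ℝ≥0∞ :=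
  ⨆ (t : ℝ) (_ : t ∈ Set.Ioo (0 : ℝ) (volume Q).toReal),
    starStar (Q.indicator g) t / ENNReal.ofReal (1 + Real.log ((volume Q).toReal / t))

/-- The Orlicz-type norm `‖f‖⁰ = sup {∫ |fg| : ‖g‖_{L^{p'(·)}} ≤ 1}`. -/
def orliczNorm {n : ℕ} (p : E n → ℝ) (f : E n → ℝ) : ℝ≥0∞ :=
  ⨆ (g : E n → ℝ) (_ : MemVarLp (conjExp p) g ∧ vNorm (conjExp p) g ≤ 1),
    ∫⁻ x, ENNReal.ofReal |f x * g x|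

/-- The associate (Köthe dual) norm of `L^{p(·)}`:
`‖g‖' = sup {∫ |gh| : ‖h‖_{L^{p(·)}} ≤ 1}`. -/
def assocNorm {n : ℕ} (p : E n → ℝ) (g : E n → ℝ) : ℝ≥0∞ :=
  ⨆ (h : E n → ℝ) (_ : MemVarLp p h ∧ vNorm p h ≤ 1),
    ∫⁻ x, ENNReal.ofReal |g x * h x|

/-! ### Centred maximal function over balls -/

/-- Volume of the closed unit ball. -/
def vn (n : ℕ) : ℝ≥0∞ := volume (Metric.closedBall (0 : E n) 1)

lemma vn_ne_top (n : ℕ) : vn n ≠ ⊤ := (Metric.isBounded_closedBall.measure_lt_top).ne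

lemma vn_ne_zero (n : ℕ) : vn n ≠ 0 := by
  unfold vn
  exact (Metric.measure_closedBall_pos volume _ one_pos).ne'

lemma volume_cball {n : ℕ} (x : E n) {r : ℝ} (hr : 0 ≤ r) :
    volume (Metric.closedBall x r) = ENNReal.ofReal r ^ n * vn n := by
  rw [vn, Measure.addHaar_closedBall' _ _ hr, finrank_euclideanSpace_fin, ENNReal.ofReal_pow hr]

/-- Centred Hardy-Littlewood maximal function over Euclidean balls. -/
def bmax {n : ℕ} (F : E n → ℝ≥0∞) (x : E n) : ℝ≥0∞ :=
  ⨆ (r : ℝ) (_ : 0 < r), (∫⁻ y in Metric.closedBall x r, F y) / volume (Metric.closedBall x r)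

lemma lintegral_cball_le {n : ℕ} (F : E n → ℝ≥0∞) (x : E n) {r : ℝ} (hr : 0 < r) :
    ∫⁻ y in Metric.closedBall x r, F y ≤ ENNReal.ofReal r ^ n * vn n * bmax F x := by
  have h : (∫⁻ y in Metric.closedBall x r, F y) / volume (Metric.closedBall x r) ≤ bmax F x :=
    le_iSup₂_of_le (f := fun (r : ℝ) (_ : 0 < r) => (∫⁻ y in Metric.closedBall x r, F y) /
      volume (Metric.closedBall x r)) r hr le_rfl
  rw [ENNReal.div_le_iff_le_mul (Or.inl (Metric.measure_closedBall_pos volume _ hr).ne')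
    (Or.inl (Metric.isBounded_closedBall.measure_lt_top).ne), volume_cball x hr.le, mul_comm] at h
  exact h

lemma bmax_one_le {n : ℕ} (x : E n) : bmax (fun _ : E n => (1 : ℝ≥0∞)) x ≤ 1 := by
  refine iSup₂_le fun r hr => ?_
  simp only [lintegral_const, MeasurableSet.univ, Measure.restrict_apply, univ_inter, one_mul]
  exact ENNReal.div_self_le_one

/-- A dyadic decomposition of the exterior of a ball into annuli. -/
lemma annuli_far {n : ℕ} (F : E n → ℝ≥0∞) (hF : Measurable F) (x : E n) {δ : ℝ} (hδ : 0 < δ) :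
    ∫⁻ y in {y | δ ≤ ‖x - y‖}, ENNReal.ofReal (δ / ‖x - y‖ ^ (n + 1)) * F y
      ≤ 2 ^ (n + 1) * vn n * bmax F x := by
  have hmeas : MeasurableSet {y : E n | δ ≤ ‖x - y‖} :=
    measurableSet_le measurable_const (by fun_prop)
  set T : ℕ → E n → ℝ≥0∞ := fun k => (Metric.closedBall x (2 ^ (k + 1) * δ)).indicator
    (fun y => ENNReal.ofReal (δ / (2 ^ k * δ) ^ (n + 1)) * F y) with hT
  have hTm : ∀ k, Measurable (T k) := fun k =>
    (hF.const_mul _).indicator Metric.isClosed_closedBall.measurableSet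
  have h1 : ∀ y ∈ {y : E n | δ ≤ ‖x - y‖},
      ENNReal.ofReal (δ / ‖x - y‖ ^ (n + 1)) * F y ≤ ∑' k, T k y := by
    intro y hy
    simp only [mem_ofPred_eq] at hy
    obtain ⟨k, hk1, hk2⟩ := exists_nat_pow_near ((one_le_div hδ).2 hy) one_lt_two
    rw [le_div_iff₀ hδ] at hk1
    rw [div_lt_iff₀ hδ] at hk2
    refine le_trans ?_ (ENNReal.le_tsum k)
    have hmem : y ∈ Metric.closedBall x (2 ^ (k + 1) * δ) := by
      rw [Metric.mem_closedBall, dist_comm, dist_eq_norm]; exact hk2.le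
    simp only [hT, indicator_of_mem hmem]
    gcongr
  have h2 : ∀ k, ∫⁻ y, T k y ≤ 2⁻¹ ^ k * (2 ^ n * vn n * bmax F x) := by
    intro k
    rw [hT, lintegral_indicator Metric.isClosed_closedBall.measurableSet, lintegral_const_mul _ hF]
    calc _ ≤ ENNReal.ofReal (δ / (2 ^ k * δ) ^ (n + 1)) *
          (ENNReal.ofReal (2 ^ (k + 1) * δ) ^ n * vn n * bmax F x) := by
            gcongr; exact lintegral_cball_le F x (by positivity)
      _ = ENNReal.ofReal (δ / (2 ^ k * δ) ^ (n + 1) * (2 ^ (k + 1) * δ) ^ n) * (vn n * bmax F x) := by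
            rw [ENNReal.ofReal_mul (p := δ / (2 ^ k * δ) ^ (n + 1)) (by positivity),
              ENNReal.ofReal_pow (by positivity)]
            ring
      _ = ENNReal.ofReal (2⁻¹ ^ k * 2 ^ n) * (vn n * bmax F x) := by
            congr 2
            have h3 : (2 : ℝ) ^ k ≠ 0 := by positivity
            rw [inv_pow, pow_succ (2 : ℝ) k]
            generalize (2 : ℝ) ^ k = a at h3
            have h4 := hδ.ne'
            simp only [mul_pow, pow_succ]
            field_simp
      _ = _ := by
            rw [ENNReal.ofReal_mul (by positivity), ENNReal.ofReal_pow (by positivity),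
              ENNReal.ofReal_pow (by positivity), ENNReal.ofReal_inv_of_pos (by positivity)]
            simp only [ENNReal.ofReal_ofNat]
            ring
  calc _ ≤ ∫⁻ y in {y : E n | δ ≤ ‖x - y‖}, ∑' k, T k y := setLIntegral_mono' hmeas h1
    _ ≤ ∫⁻ y, ∑' k, T k y := setLIntegral_le_lintegral _ _
    _ = ∑' k, ∫⁻ y, T k y := lintegral_tsum fun k => (hTm k).aemeasurable
    _ ≤ ∑' k : ℕ, 2⁻¹ ^ k * (2 ^ n * vn n * bmax F x) := ENNReal.tsum_le_tsum h2
    _ = _ := by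
        rw [ENNReal.tsum_mul_right, ENNReal.tsum_geometric, ENNReal.one_sub_inv_two, inv_inv]; ring

/-- A dyadic decomposition of a ball centred at the origin: the integral of `‖y‖ ^ (1 - n)` over a
ball of radius `r` is `O(r)`. -/
lemma annuli_near {n : ℕ} {r : ℝ} (hr : 0 < r) :
    ∫⁻ y : E n in Metric.closedBall 0 r, ENNReal.ofReal (‖y‖ / ‖y‖ ^ n)
      ≤ 2 ^ (n + 1) * vn n * ENNReal.ofReal r := by
  set T : ℕ → E n → ℝ≥0∞ := fun k => (Metric.closedBall 0 (2⁻¹ ^ k * r)).indicator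
    (fun y => ENNReal.ofReal ((2⁻¹ ^ k * r) / (2⁻¹ ^ (k + 1) * r) ^ n)) with hT
  have hTm : ∀ k, Measurable (T k) := fun k =>
    measurable_const.indicator Metric.isClosed_closedBall.measurableSet
  have h1 : ∀ y ∈ Metric.closedBall (0 : E n) r,
      ENNReal.ofReal (‖y‖ / ‖y‖ ^ n) ≤ ∑' k, T k y := by
    intro y hy
    rw [mem_closedBall_zero_iff] at hy
    rcases eq_or_ne y 0 with rfl | hy0
    · simp
    have hyp : 0 < ‖y‖ := norm_pos_iff.2 hy0
    obtain ⟨k, hk1, hk2⟩ := exists_nat_pow_near ((one_le_div hyp).2 hy) one_lt_two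
    rw [le_div_iff₀ hyp] at hk1
    rw [div_lt_iff₀ hyp] at hk2
    have ha : ‖y‖ ≤ 2⁻¹ ^ k * r := by
      rw [inv_pow, ← div_eq_inv_mul, le_div_iff₀ (by positivity)]; linarith
    have hb : 2⁻¹ ^ (k + 1) * r ≤ ‖y‖ := by
      rw [inv_pow, ← div_eq_inv_mul, div_le_iff₀ (by positivity)]; linarith
    refine le_trans ?_ (ENNReal.le_tsum k)
    have hmem : y ∈ Metric.closedBall (0 : E n) (2⁻¹ ^ k * r) := by
      rwa [mem_closedBall_zero_iff]
    simp only [hT, indicator_of_mem hmem]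
    gcongr
  have h2 : ∀ k, ∫⁻ y, T k y ≤ 2⁻¹ ^ k * (2 ^ n * vn n * ENNReal.ofReal r) := by
    intro k
    rw [hT, lintegral_indicator Metric.isClosed_closedBall.measurableSet, setLIntegral_const,
      volume_cball _ (by positivity), ← mul_assoc, ← ENNReal.ofReal_pow (by positivity),
      ← ENNReal.ofReal_mul (by positivity)]
    have : (2⁻¹ ^ k * r / (2⁻¹ ^ (k + 1) * r) ^ n * (2⁻¹ ^ k * r) ^ n : ℝ) = 2⁻¹ ^ k * (2 ^ n * r) := by
      have h3 : (2⁻¹ : ℝ) ^ k ≠ 0 := by positivity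
      rw [pow_succ]
      generalize (2⁻¹ : ℝ) ^ k = a at h3
      have h4 := hr.ne'
      simp only [mul_pow, inv_pow]
      field_simp
    rw [this, ENNReal.ofReal_mul (by positivity), ENNReal.ofReal_pow (by positivity),
      ENNReal.ofReal_mul (by positivity), ENNReal.ofReal_pow (by positivity),
      ENNReal.ofReal_inv_of_pos (by positivity), ENNReal.ofReal_ofNat]
    exact le_of_eq (by ring)
  calc _ ≤ ∫⁻ y in Metric.closedBall (0 : E n) r, ∑' k, T k y :=
        setLIntegral_mono' Metric.isClosed_closedBall.measurableSet h1
    _ ≤ ∫⁻ y, ∑' k, T k y := setLIntegral_le_lintegral _ _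
    _ = ∑' k, ∫⁻ y, T k y := lintegral_tsum fun k => (hTm k).aemeasurable
    _ ≤ ∑' k : ℕ, 2⁻¹ ^ k * (2 ^ n * vn n * ENNReal.ofReal r) := ENNReal.tsum_le_tsum h2
    _ = _ := by
        rw [ENNReal.tsum_mul_right, ENNReal.tsum_geometric, ENNReal.one_sub_inv_two, inv_inv]; ring

/-- Weak type `(1,1)` of the centred maximal function, from the Vitali covering lemma. -/
lemma bmax_weak {n : ℕ} (hn : 0 < n) (F : E n → ℝ≥0∞) (hFi : ∫⁻ y, F y ≠ ⊤) {t : ℝ≥0∞}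
    (ht : t ≠ 0) (ht' : t ≠ ⊤) : t * volume {x | t < bmax F x} ≤ 4 ^ n * ∫⁻ y, F y := by
  set S : Set (E n) := {x | t < bmax F x}
  have h1 : ∀ x : S, ∃ r : ℝ, 0 < r ∧
      t * volume (Metric.closedBall (x : E n) r) < ∫⁻ y in Metric.closedBall (x : E n) r, F y := by
    rintro ⟨x, hx⟩
    simp only [S, bmax, mem_ofPred_eq, lt_iSup_iff] at hx
    obtain ⟨r, hr, h⟩ := hx
    refine ⟨r, hr, ?_⟩
    rwa [ENNReal.lt_div_iff_mul_lt (Or.inl (Metric.measure_closedBall_pos volume _ hr).ne')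
      (Or.inl (Metric.isBounded_closedBall.measure_lt_top).ne)] at h
  choose r hr0 hr using h1
  set I := ∫⁻ y, F y
  have hR : ∀ x : S, r x ≤ (max 1 (I / (t * vn n)).toReal) := by
    intro x
    by_contra! hc
    have hr1 : 1 < r x := lt_of_le_of_lt (le_max_left _ _) hc
    have hr2 := lt_of_le_of_lt (le_max_right _ _) hc
    have h := (hr x).trans_le (setLIntegral_le_lintegral _ _)
    rw [volume_cball _ (hr0 x).le] at h
    have h3 : I / (t * vn n) < ENNReal.ofReal (r x) := by
      rw [ENNReal.lt_ofReal_iff_toReal_lt]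
      · exact hr2
      · exact (ENNReal.div_lt_top hFi (mul_ne_zero ht (vn_ne_zero n))).ne
    rw [ENNReal.div_lt_iff (Or.inl (mul_ne_zero ht (vn_ne_zero n)))
      (Or.inl (ENNReal.mul_ne_top ht' (vn_ne_top n)))] at h3
    refine lt_irrefl I (h3.trans_le (le_trans ?_ h.le))
    have h4 : ENNReal.ofReal (r x) ≤ ENNReal.ofReal (r x) ^ n :=
      le_self_pow (by rw [← ENNReal.ofReal_one]; exact ENNReal.ofReal_le_ofReal hr1.le) hn.ne'
    calc _ = t * (ENNReal.ofReal (r x) * vn n) := by ring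
      _ ≤ _ := by gcongr
  obtain ⟨u, -, hdis, hcov⟩ := Vitali.exists_disjoint_subfamily_covering_enlargement_closedBall
    (univ : Set S) (fun x => (x : E n)) r _ (fun a _ => hR a) 4 (by norm_num)
  have hcount : u.Countable := hdis.countable_of_nonempty_interior fun a _ => by
    refine ⟨a, ?_⟩
    exact Metric.ball_subset_interior_closedBall (Metric.mem_ball_self (hr0 a))
  have hsub : S ⊆ ⋃ b ∈ u, Metric.closedBall (b : E n) (4 * r b) := by
    intro x hx
    obtain ⟨b, hb, hbs⟩ := hcov ⟨x, hx⟩ (mem_univ _)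
    exact mem_biUnion hb (hbs (Metric.mem_closedBall_self (hr0 _).le))
  calc t * volume S ≤ t * ∑' b : u, volume (Metric.closedBall (b : E n) (4 * r b)) := by
        gcongr
        exact (measure_mono hsub).trans (measure_biUnion_le _ hcount _)
    _ = ∑' b : u, 4 ^ n * (t * volume (Metric.closedBall (b : E n) (r b))) := by
        rw [← ENNReal.tsum_mul_left]
        congr 1; ext b
        rw [volume_cball _ (hr0 _).le, volume_cball _ (by have := hr0 b; positivity),
          ENNReal.ofReal_mul (by norm_num), ENNReal.ofReal_ofNat]
        ring
    _ ≤ ∑' b : u, 4 ^ n * ∫⁻ y in Metric.closedBall (b : E n) (r b), F y := by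
        gcongr with b
        exact (hr b).le
    _ = 4 ^ n * ∫⁻ y in ⋃ b ∈ u, Metric.closedBall ((b : S) : E n) (r b), F y := by
        rw [ENNReal.tsum_mul_left, lintegral_biUnion hcount
          (fun b _ => Metric.isClosed_closedBall.measurableSet) hdis]
    _ ≤ _ := by gcongr; exact setLIntegral_le_lintegral _ _

/-! ### Dyadic cubes and stopping cubes -/

/-- The half-open dyadic cube of generation `c.1` (side length `2 ^ (-c.1)`) with index `c.2`. -/
def dc {n : ℕ} (c : ℤ × (Fin n → ℤ)) : Set (E n) := {x | ∀ i, ⌊x i * 2 ^ c.1⌋ = c.2 i}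

/-- Side length of a dyadic cube of generation `k`. -/
def sd (k : ℤ) : ℝ := ((2 : ℝ) ^ k)⁻¹

/-- Index of the dyadic cube of generation `k` containing `x`. -/
def idx {n : ℕ} (k : ℤ) (x : E n) : Fin n → ℤ := fun i => ⌊x i * 2 ^ k⌋

/-- The lower corner of a dyadic cube. -/
def corner {n : ℕ} (c : ℤ × (Fin n → ℤ)) : E n := WithLp.toLp 2 fun i => c.2 i * sd c.1

lemma sd_pos (k : ℤ) : 0 < sd k := by unfold sd; positivity

lemma sd_sub_one (k : ℤ) : sd (k - 1) = 2 * sd k := by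
  unfold sd; rw [zpow_sub_one₀ (by norm_num)]; simp

lemma sd_anti {k l : ℤ} (h : k ≤ l) : sd l ≤ sd k := by
  unfold sd; gcongr; norm_num

lemma sd_lt {k l : ℤ} (h : k < l) : 2 * sd l ≤ sd k := by
  rw [← sd_sub_one]; exact sd_anti (by omega)

lemma mem_dc {n : ℕ} {c : ℤ × (Fin n → ℤ)} {x : E n} : x ∈ dc c ↔ idx c.1 x = c.2 := by
  simp [dc, idx, funext_iff]

lemma mem_dc_idx {n : ℕ} (k : ℤ) (x : E n) : x ∈ dc (k, idx k x) := mem_dc.2 rfl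

lemma mem_dc_iff {n : ℕ} {c : ℤ × (Fin n → ℤ)} {x : E n} :
    x ∈ dc c ↔ ∀ i, c.2 i * sd c.1 ≤ x i ∧ x i < (c.2 i + 1) * sd c.1 := by
  have h : (0 : ℝ) < 2 ^ c.1 := by positivity
  simp only [dc, mem_ofPred_eq, Int.floor_eq_iff, sd, ← div_eq_mul_inv, div_le_iff₀ h, lt_div_iff₀ h]

lemma corner_mem {n : ℕ} (c : ℤ × (Fin n → ℤ)) : corner c ∈ dc c := by
  rw [mem_dc_iff]
  intro i
  have := sd_pos c.1
  simp only [corner]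
  constructor <;> nlinarith

lemma dc_eq_preimage {n : ℕ} (c : ℤ × (Fin n → ℤ)) :
    dc c = (WithLp.ofLp : E n → Fin n → ℝ) ⁻¹'
      (pi univ fun i => Ico (c.2 i * sd c.1) ((c.2 i + 1) * sd c.1)) := by
  ext x; rw [mem_dc_iff]; simp

lemma dc_meas {n : ℕ} (c : ℤ × (Fin n → ℤ)) : MeasurableSet (dc c) := by
  rw [dc_eq_preimage]
  exact (MeasurableSet.univ_pi fun i => measurableSet_Ico).preimage
    (PiLp.volume_preserving_ofLp (Fin n)).measurable

lemma dc_vol {n : ℕ} (c : ℤ × (Fin n → ℤ)) : volume (dc c) = ENNReal.ofReal (sd c.1) ^ n := by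
  rw [dc_eq_preimage, (PiLp.volume_preserving_ofLp (Fin n)).measure_preimage
    (MeasurableSet.univ_pi fun i => measurableSet_Ico).nullMeasurableSet, Real.volume_pi_Ico]
  simp [add_mul]

lemma dc_vol_ne_top {n : ℕ} (c : ℤ × (Fin n → ℤ)) : volume (dc c) ≠ ⊤ := by
  rw [dc_vol]; exact ENNReal.pow_ne_top ENNReal.ofReal_ne_top

lemma dc_vol_ne_zero {n : ℕ} (c : ℤ × (Fin n → ℤ)) : volume (dc c) ≠ 0 := by
  rw [dc_vol]; exact pow_ne_zero _ (by simpa using sd_pos c.1)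

/-- The closed dyadic cube: it is an `IsCube`, and differs from `dc c` by a null set. -/
def dcc {n : ℕ} (c : ℤ × (Fin n → ℤ)) : Set (E n) :=
  {x | ∀ i, c.2 i * sd c.1 ≤ x i ∧ x i ≤ c.2 i * sd c.1 + sd c.1}

lemma dc_subset_dcc {n : ℕ} (c : ℤ × (Fin n → ℤ)) : dc c ⊆ dcc c := by
  intro x hx i
  have := mem_dc_iff.1 hx i
  exact ⟨this.1, by linarith [this.2]⟩

lemma dcc_isCube {n : ℕ} (c : ℤ × (Fin n → ℤ)) : IsCube (dcc c) :=
  ⟨corner c, sd c.1, sd_pos _, rfl⟩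

lemma cube_eq_preimage {n : ℕ} (a : E n) (h : ℝ) :
    {x : E n | ∀ i, a i ≤ x i ∧ x i ≤ a i + h} = (WithLp.ofLp : E n → Fin n → ℝ) ⁻¹'
      (pi univ fun i => Icc (a i) (a i + h)) := by
  ext x
  simp only [mem_ofPred_eq, mem_preimage, mem_univ_pi, mem_Icc]

lemma cube_meas {n : ℕ} (a : E n) (h : ℝ) :
    MeasurableSet {x : E n | ∀ i, a i ≤ x i ∧ x i ≤ a i + h} := by
  rw [cube_eq_preimage]
  exact (MeasurableSet.univ_pi fun i => measurableSet_Icc).preimage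
    (PiLp.volume_preserving_ofLp (Fin n)).measurable

lemma cube_vol {n : ℕ} (a : E n) (h : ℝ) :
    volume {x : E n | ∀ i, a i ≤ x i ∧ x i ≤ a i + h} = ENNReal.ofReal h ^ n := by
  rw [cube_eq_preimage, (PiLp.volume_preserving_ofLp (Fin n)).measure_preimage
    (MeasurableSet.univ_pi fun i => measurableSet_Icc).nullMeasurableSet, pi_univ_Icc,
    Real.volume_Icc_pi]
  simp

lemma dcc_vol {n : ℕ} (c : ℤ × (Fin n → ℤ)) : volume (dcc c) = ENNReal.ofReal (sd c.1) ^ n :=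
  cube_vol (corner c) (sd c.1)

lemma dc_ae_eq_dcc {n : ℕ} (c : ℤ × (Fin n → ℤ)) : dc c =ᵐ[volume] dcc c :=
  ae_eq_of_subset_of_measure_ge (dc_subset_dcc c) (by rw [dc_vol, dcc_vol])
    (dc_meas c).nullMeasurableSet (by rw [dcc_vol, ← dc_vol]; exact dc_vol_ne_top c)

lemma norm_le_of_coord {n : ℕ} (x : E n) {a : ℝ} (h : ∀ i, |x i| ≤ a) : ‖x‖ ≤ n * a := by
  rcases Nat.eq_zero_or_pos n with rfl | hn
  · have : x = 0 := Subsingleton.elim _ _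
    simp [this]
  have ha : 0 ≤ a := (abs_nonneg _).trans (h ⟨0, hn⟩)
  rw [EuclideanSpace.norm_eq]
  refine Real.sqrt_le_iff.2 ⟨by positivity, ?_⟩
  calc ∑ i, ‖x i‖ ^ 2 ≤ ∑ i : Fin n, a ^ 2 := by
        gcongr with i; exact h i
    _ = n * a ^ 2 := by simp
    _ ≤ (n * a) ^ 2 := by
        have : (1 : ℝ) ≤ n := by exact_mod_cast hn
        rw [mul_pow]; gcongr; nlinarith

lemma dcc_dist {n : ℕ} {c : ℤ × (Fin n → ℤ)} {x y : E n} (hx : x ∈ dcc c) (hy : y ∈ dcc c) :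
    ‖x - y‖ ≤ n * sd c.1 := by
  refine norm_le_of_coord _ fun i => ?_
  have h1 := hx i
  have h2 := hy i
  rw [PiLp.sub_apply, abs_le]
  constructor <;> linarith

lemma dc_dist {n : ℕ} {c : ℤ × (Fin n → ℤ)} {x y : E n} (hx : x ∈ dc c) (hy : y ∈ dc c) :
    ‖x - y‖ ≤ n * sd c.1 := dcc_dist (dc_subset_dcc c hx) (dc_subset_dcc c hy)

lemma idx_nest {n : ℕ} {k l : ℤ} (h : k ≤ l) {x y : E n} (hxy : idx l x = idx l y) :
    idx k x = idx k y := by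
  obtain ⟨N, hN⟩ := Int.eq_ofNat_of_zero_le (sub_nonneg.2 h)
  have key : ∀ t : ℝ, ⌊t * 2 ^ k⌋ = ⌊t * 2 ^ l⌋ / ((2 ^ N : ℕ) : ℤ) := by
    intro t
    rw [← Int.floor_div_natCast]
    congr 1
    have : l = k + N := by omega
    rw [this, zpow_add₀ (by norm_num)]
    push_cast
    rw [zpow_natCast]; field_simp
  ext i
  have := congrFun hxy i
  simp only [idx] at this ⊢
  rw [key, key, this]

lemma dc_nest {n : ℕ} {c c' : ℤ × (Fin n → ℤ)} (h : c.1 ≤ c'.1) {x : E n} (hx : x ∈ dc c)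
    (hx' : x ∈ dc c') : dc c' ⊆ dc c := by
  intro y hy
  rw [mem_dc] at *
  rw [← hx]
  exact idx_nest h (hy.trans hx'.symm)

lemma dc_eq_of_mem {n : ℕ} {c c' : ℤ × (Fin n → ℤ)} (h : c.1 = c'.1) {x : E n} (hx : x ∈ dc c)
    (hx' : x ∈ dc c') : c = c' := by
  rw [mem_dc] at *
  rw [Prod.ext_iff]
  exact ⟨h, by rw [← hx, ← hx', h]⟩

lemma tendsto_sd : Tendsto (fun k : ℕ => sd k) atTop (𝓝 0) := by
  unfold sd
  simp only [zpow_natCast, ← inv_pow]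
  exact tendsto_pow_atTop_nhds_zero_of_lt_one (by norm_num) (by norm_num)

/-- Lebesgue differentiation along dyadic cubes. -/
lemma dyadic_lebesgue {n : ℕ} (F : E n → ℝ≥0∞) (hF : Measurable F) (hFi : ∫⁻ y, F y ≠ ⊤) :
    ∀ᵐ x, Tendsto (fun k : ℕ => (∫⁻ y in dc ((k : ℤ), idx k x), F y) / volume (dc ((k : ℤ), idx k x)))
      atTop (𝓝 (F x)) := by
  set C0 : ℝ≥0∞ := 3 ^ n + (ENNReal.ofReal (3 * n)) ^ n * vn n with hC0
  have hC0t : C0 ≠ ⊤ := by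
    rw [hC0]
    exact ENNReal.add_ne_top.2 ⟨ENNReal.pow_ne_top (by norm_num),
      ENNReal.mul_ne_top (ENNReal.pow_ne_top ENNReal.ofReal_ne_top) (vn_ne_top n)⟩
  have hb : ∀ (x : E n), ∃ᶠ r in 𝓝[>] (0 : ℝ), volume (Metric.closedBall x (3 * r)) ≤
      (C0.toNNReal : ℝ≥0∞) * volume (Metric.closedBall x r) := by
    intro x
    refine Eventually.frequently ?_
    filter_upwards [self_mem_nhdsWithin] with r hr
    have hr : 0 < r := hr
    rw [volume_cball _ (by positivity), volume_cball _ hr.le, ENNReal.coe_toNNReal hC0t,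
      ENNReal.ofReal_mul (by norm_num), ENNReal.ofReal_ofNat, mul_pow, mul_assoc]
    gcongr
    exact le_self_add
  have h1 := (Vitali.vitaliFamily (volume : Measure (E n)) C0.toNNReal hb).ae_tendsto_lintegral_div
    hF.aemeasurable hFi
  filter_upwards [h1] with x hx
  have h2 : Tendsto (fun k : ℕ => dcc ((k : ℤ), idx k x)) atTop
      ((Vitali.vitaliFamily (volume : Measure (E n)) C0.toNNReal hb).filterAt x) := by
    rw [VitaliFamily.tendsto_filterAt_iff]
    have hsub : ∀ k : ℕ, dcc ((k : ℤ), idx k x) ⊆ Metric.closedBall x (n * sd k) := by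
      intro k y hy
      rw [Metric.mem_closedBall, dist_eq_norm]
      exact dcc_dist hy (dc_subset_dcc _ (mem_dc_idx _ _))
    constructor
    · refine Eventually.of_forall fun k => ⟨?_, ?_, n * sd k, hsub k, ?_⟩
      · have : dcc ((k : ℤ), idx k x) = ⋂ i, {y : E n | (idx k x i) * sd k ≤ y i ∧
            y i ≤ (idx k x i) * sd k + sd k} := by
          ext y; simp [dcc]
        rw [this]
        refine isClosed_iInter fun i => ?_
        have hci : Continuous fun y : E n => y i := by fun_prop
        exact (isClosed_le continuous_const hci).inter (isClosed_le hci continuous_const)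
      · have hs := sd_pos k
        refine ⟨WithLp.toLp 2 fun i => idx k x i * sd k + sd k / 2, mem_interior.2
          ⟨⋂ i, {y : E n | (idx k x i) * sd k < y i ∧ y i < (idx k x i) * sd k + sd k}, ?_, ?_, ?_⟩⟩
        · intro y hy i
          have := mem_iInter.1 hy i
          exact ⟨this.1.le, this.2.le⟩
        · refine isOpen_iInter_of_finite fun i => ?_
          have hci : Continuous fun y : E n => y i := by fun_prop
          exact (isOpen_lt continuous_const hci).inter (isOpen_lt hci continuous_const)
        · refine mem_iInter.2 fun i => ?_
          simp only [mem_ofPred_eq]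
          constructor <;> linarith
      · have hs := sd_pos k
        rw [volume_cball _ (by positivity), dcc_vol, ENNReal.coe_toNNReal hC0t, ← mul_assoc,
          ENNReal.ofReal_mul (by positivity), mul_pow, hC0, add_mul]
        refine le_trans (le_of_eq ?_) le_add_self
        ring
    · intro ε hε
      have h3 : Tendsto (fun k : ℕ => n * sd k) atTop (𝓝 0) := by
        simpa using tendsto_sd.const_mul (n : ℝ)
      filter_upwards [h3.eventually_le_const hε] with k hk
      exact (hsub k).trans (Metric.closedBall_subset_closedBall hk)
  have h3 := hx.comp h2
  refine h3.congr fun k => ?_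
  simp only [Function.comp]
  rw [setLIntegral_congr (dc_ae_eq_dcc _), measure_congr (dc_ae_eq_dcc _)]

/-- Calderón-Zygmund stopping cubes of `F` at height `t`. -/
lemma cz_decomp {n : ℕ} (hn : 0 < n) (F : E n → ℝ≥0∞) (hF : Measurable F) (hFi : ∫⁻ y, F y ≠ ⊤)
    {t : ℝ≥0∞} (ht : t ≠ 0) (ht' : t ≠ ⊤) :
    ∃ S : Set (ℤ × (Fin n → ℤ)), S.PairwiseDisjoint dc ∧
      (∀ c ∈ S, t * volume (dc c) ≤ ∫⁻ y in dc c, F y) ∧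
      (∀ c ∈ S, t * volume (dc c) < ∫⁻ y in dc c, F y) ∧
      (∀ c ∈ S, ∫⁻ y in dc c, F y ≤ 2 ^ n * t * volume (dc c)) ∧
      ∀ᵐ x, x ∉ (⋃ c ∈ S, dc c) → F x ≤ t := by
  set S : Set (ℤ × (Fin n → ℤ)) := {c | t * volume (dc c) < ∫⁻ y in dc c, F y ∧
    ∀ c' : ℤ × (Fin n → ℤ), c'.1 < c.1 → dc c ⊆ dc c' →
      ∫⁻ y in dc c', F y ≤ t * volume (dc c')} with hS
  refine ⟨S, ?_, fun c hc => hc.1.le, fun c hc => hc.1, ?_, ?_⟩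
  · intro c hc c' hc' hne
    by_contra hd
    obtain ⟨x, hx, hx'⟩ := not_disjoint_iff.1 hd
    rcases lt_trichotomy c.1 c'.1 with h | h | h
    · exact absurd hc.1 (not_lt.2 (hc'.2 c h (dc_nest h.le hx hx')))
    · exact hne (dc_eq_of_mem h hx hx')
    · exact absurd hc'.1 (not_lt.2 (hc.2 c' h (dc_nest h.le hx' hx)))
  · intro c hc
    have hx := mem_dc_idx (c.1 - 1) (corner c)
    have hsub : dc c ⊆ dc (c.1 - 1, idx (c.1 - 1) (corner c)) :=
      dc_nest (by simp) hx (corner_mem c)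
    have h := hc.2 _ (by simp) hsub
    calc _ ≤ ∫⁻ y in dc (c.1 - 1, idx (c.1 - 1) (corner c)), F y := lintegral_mono_set hsub
      _ ≤ _ := h
      _ = _ := by
        rw [dc_vol, dc_vol, sd_sub_one, ENNReal.ofReal_mul (by norm_num), mul_pow]
        simp only [ENNReal.ofReal_ofNat]
        ring
  · filter_upwards [dyadic_lebesgue F hF hFi] with x hx hxS
    have key : ∀ k : ℤ, ∫⁻ y in dc (k, idx k x), F y ≤ t * volume (dc (k, idx k x)) := by
      by_contra! hex
      have hbd : ∃ b : ℤ, ∀ k : ℤ,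
          t * volume (dc (k, idx k x)) < ∫⁻ y in dc (k, idx k x), F y → b ≤ k := by
        have h1 : Tendsto (fun N : ℕ => ENNReal.ofReal (2 ^ N)) atTop (𝓝 ⊤) :=
          ENNReal.tendsto_ofReal_atTop.comp (tendsto_pow_atTop_atTop_of_one_lt one_lt_two)
        obtain ⟨N, hN⟩ := (h1.eventually (lt_mem_nhds
          (ENNReal.div_lt_top hFi ht))).exists
        refine ⟨-N, fun k hk => ?_⟩
        by_contra! hkN
        have h2 := hk.trans_le (setLIntegral_le_lintegral _ _)
        rw [dc_vol] at h2
        rw [ENNReal.div_lt_iff (Or.inl ht) (Or.inl ht'), mul_comm] at hN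
        refine lt_irrefl _ (hN.trans (lt_of_le_of_lt ?_ h2))
        gcongr
        have h3 : (2 : ℝ) ^ N ≤ sd k := by
          have := sd_anti hkN.le
          unfold sd at this ⊢
          rwa [zpow_neg, inv_inv, zpow_natCast] at this
        refine (ENNReal.ofReal_le_ofReal h3).trans (le_self_pow ?_ hn.ne')
        rw [← ENNReal.ofReal_one]
        exact ENNReal.ofReal_le_ofReal ((one_le_pow₀ one_le_two).trans h3)
      obtain ⟨k, hk, hmin⟩ := Int.exists_least_of_bdd hbd hex
      refine hxS (mem_biUnion (x := (k, idx k x)) ⟨hk, fun c' hc' hsub => ?_⟩ (mem_dc_idx k x))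
      have hxc' : x ∈ dc c' := hsub (mem_dc_idx k x)
      have he : c' = (c'.1, idx c'.1 x) := by
        rw [mem_dc] at hxc'; rw [hxc']
      by_contra! hcon
      rw [he] at hcon
      exact absurd (hmin _ hcon) (not_le.2 hc')
    refine le_of_tendsto' hx fun k => ?_
    exact ENNReal.div_le_of_le_mul (key k)

/-! ### Weak type (1,1) of Calderón-Zygmund convolutions -/

/-- Convolution of `f` with the kernel `k`. -/
def cT {n : ℕ} (k f : E n → ℝ) (x : E n) : ℝ := ∫ y, k (x - y) * f y

/-- Bounded Calderón-Zygmund convolution kernels; `A` controls both the regularity away from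
the origin and the `L²` operator norm. -/
structure CZK {n : ℕ} (k : E n → ℝ) (A : NNReal) : Prop where
  meas : Measurable k
  bdd : ∃ B : ℝ, ∀ x, |k x| ≤ B
  reg : ∀ u v, ‖u - v‖ ≤ ‖u‖ / 2 → |k u - k v| ≤ A * ‖u - v‖ / ‖u‖ ^ (n + 1)
  l2 : ∀ h : E n → ℝ, Measurable h → Integrable h → (∃ B : ℝ, ∀ x, |h x| ≤ B) →
    ∫⁻ x, ‖cT k h x‖ₑ ^ 2 ≤ (A : ℝ≥0∞) ^ 2 * ∫⁻ x, ‖h x‖ₑ ^ 2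

lemma cT_meas {n : ℕ} {k f : E n → ℝ} (hk : Measurable k) (hf : Measurable f) :
    Measurable (cT k f) := by
  unfold cT
  have : StronglyMeasurable (Function.uncurry fun x y : E n => k (x - y) * f y) := by
    apply Measurable.stronglyMeasurable
    exact (hk.comp (measurable_fst.sub measurable_snd)).mul (hf.comp measurable_snd)
  exact this.integral_prod_right.measurable

lemma cT_int {n : ℕ} {k f : E n → ℝ} (hk : Measurable k) (hb : ∃ B : ℝ, ∀ x, |k x| ≤ B)
    (hfi : Integrable f) (x : E n) : Integrable fun y => k (x - y) * f y := by
  obtain ⟨B, hB⟩ := hb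
  refine hfi.bdd_mul (c := B) ?_ (Eventually.of_forall fun y => hB _)
  exact (hk.comp (measurable_const.sub measurable_id)).aestronglyMeasurable

lemma bdd_sq {n : ℕ} {g : E n → ℝ} {M : ℝ≥0∞} (hg : Measurable g) (hM : ∀ᵐ x, ‖g x‖ₑ ≤ M) :
    ∫⁻ x, ‖g x‖ₑ ^ 2 ≤ M * ∫⁻ x, ‖g x‖ₑ := by
  rw [← lintegral_const_mul _ hg.enorm]
  refine lintegral_mono_ae ?_
  filter_upwards [hM] with x hx
  rw [sq]
  gcongr

/-- The constant of the weak type `(1,1)` bound. -/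
def Cw (n : ℕ) (A : NNReal) : ℝ≥0∞ := 4 * A ^ 2 * 2 ^ n + (2 * (n : ℝ≥0∞)) ^ n * vn n + 2 * (A * (2 ^ (n + 1) * vn n) * 2)

/-- Away from the doubled ball, the image of a function with mean zero on a dyadic cube is
integrable, by the regularity of the kernel. -/
lemma far_mean_zero {n : ℕ} {k : E n → ℝ} {A : NNReal} (hk : CZK k A) (hn : 0 < n)
    {b : E n → ℝ} (hbm : Measurable b) (hbi : Integrable b)
    (c : ℤ × (Fin n → ℤ)) (h0 : ∫ y in dc c, b y = 0) :
    ∫⁻ x in (Metric.closedBall (corner c) (2 * (n * sd c.1)))ᶜ, ‖∫ y in dc c, k (x - y) * b y‖ₑ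
      ≤ A * (2 ^ (n + 1) * vn n) * ∫⁻ y in dc c, ‖b y‖ₑ := by
  set δ : ℝ := n * sd c.1 with hδ
  have hδ0 : 0 < δ := mul_pos (by exact_mod_cast hn) (sd_pos _)
  set I := ∫⁻ y in dc c, ‖b y‖ₑ with hI
  have hpt : ∀ x ∈ (Metric.closedBall (corner c) (2 * δ))ᶜ, ‖∫ y in dc c, k (x - y) * b y‖ₑ
      ≤ A * ENNReal.ofReal (δ / ‖corner c - x‖ ^ (n + 1)) * I := by
    intro x hx
    have hx' : 2 * δ < ‖x - corner c‖ := by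
      simpa [Metric.mem_closedBall, dist_eq_norm] using hx
    have e1 : ∫ y in dc c, k (x - y) * b y = ∫ y in dc c, (k (x - y) - k (x - corner c)) * b y := by
      simp_rw [sub_mul]
      rw [integral_sub (cT_int hk.meas hk.bdd hbi x).integrableOn (hbi.const_mul _).integrableOn,
        integral_const_mul, h0]
      simp
    rw [e1, hI, ← lintegral_const_mul _ hbm.enorm]
    refine (enorm_integral_le_lintegral_enorm _).trans (setLIntegral_mono' (dc_meas c) fun y hy => ?_)
    rw [enorm_mul]
    gcongr
    have hd : ‖y - corner c‖ ≤ δ := dc_dist hy (corner_mem c)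
    have e2 : (x - corner c) - (x - y) = y - corner c := by abel
    have h1 := hk.reg (x - corner c) (x - y) (by rw [e2]; linarith)
    rw [e2] at h1
    rw [Real.enorm_eq_ofReal_abs, abs_sub_comm, norm_sub_rev (corner c) x,
      ← ENNReal.ofReal_coe_nnreal, ← ENNReal.ofReal_mul A.coe_nonneg]
    refine ENNReal.ofReal_le_ofReal (h1.trans ?_)
    rw [mul_div_assoc]
    gcongr
  refine (setLIntegral_mono' Metric.isClosed_closedBall.measurableSet.compl hpt).trans ?_
  rw [lintegral_mul_const _ (by fun_prop)]
  rw [lintegral_const_mul _ (by fun_prop)]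
  gcongr
  have h2 := annuli_far (fun _ : E n => (1 : ℝ≥0∞)) measurable_const (corner c) hδ0
  simp only [mul_one] at h2
  refine le_trans (lintegral_mono_set ?_) (h2.trans ?_)
  · intro x hx
    have hx' : 2 * δ < ‖x - corner c‖ := by
      simpa [Metric.mem_closedBall, dist_eq_norm] using hx
    rw [norm_sub_rev] at hx'
    simp only [mem_ofPred_eq]; linarith
  · calc _ ≤ 2 ^ (n + 1) * vn n * 1 := by gcongr; exact bmax_one_le _
      _ = _ := mul_one _

/-- The good part of the Calderón-Zygmund decomposition: average `f` over the given disjoint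
dyadic cubes and leave it unchanged elsewhere. -/
lemma exists_good {n : ℕ} {f : E n → ℝ} (hf : Measurable f) (S : Set (ℤ × (Fin n → ℤ)))
    (hd : S.PairwiseDisjoint dc) :
    ∃ g : E n → ℝ, Measurable g ∧ (∀ x ∉ ⋃ c ∈ S, dc c, g x = f x) ∧
      ∀ c ∈ S, ∀ x ∈ dc c, g x = (volume (dc c)).toReal⁻¹ * ∫ y in dc c, f y := by
  classical
  set m : (ℤ × (Fin n → ℤ)) → ℝ := fun c => (volume (dc c)).toReal⁻¹ * ∫ y in dc c, f y with hm
  set g : E n → ℝ := fun x => if h : ∃ c ∈ S, x ∈ dc c then m h.choose else f x with hg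
  have h1 : ∀ x ∉ ⋃ c ∈ S, dc c, g x = f x := by
    intro x hx
    have : ¬ ∃ c ∈ S, x ∈ dc c := by simpa using hx
    simp only [hg, dif_neg this]
  have h2 : ∀ c ∈ S, ∀ x ∈ dc c, g x = m c := by
    intro c hc x hx
    have h : ∃ c ∈ S, x ∈ dc c := ⟨c, hc, hx⟩
    simp only [hg, dif_pos h]
    congr 1
    exact hd.elim_set h.choose_spec.1 hc x h.choose_spec.2 hx
  refine ⟨g, ?_, h1, h2⟩
  intro B hB
  have : g ⁻¹' B = ((⋃ c ∈ S, dc c)ᶜ ∩ f ⁻¹' B) ∪ ⋃ c ∈ S, {x | x ∈ dc c ∧ m c ∈ B} := by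
    ext x
    by_cases hx : x ∈ ⋃ c ∈ S, dc c
    · obtain ⟨c, hc, hxc⟩ := mem_iUnion₂.1 hx
      simp only [mem_preimage, mem_union, mem_inter_iff, mem_compl_iff, hx, not_true, false_and,
        false_or, h2 c hc x hxc]
      simp only [mem_iUnion₂, mem_ofPred_eq]
      constructor
      · intro h; exact ⟨c, hc, hxc, h⟩
      · rintro ⟨c', hc', hxc', h⟩
        rwa [hd.elim_set hc hc' x hxc hxc']
    · have h3 : x ∉ ⋃ c ∈ S, {x | x ∈ dc c ∧ m c ∈ B} := fun h => by
        obtain ⟨c, hc, hxc, _⟩ := mem_iUnion₂.1 h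
        exact hx (mem_iUnion₂.2 ⟨c, hc, hxc⟩)
      simp only [mem_preimage, mem_union, mem_inter_iff, mem_compl_iff, hx, not_false_eq_true,
        true_and, h1 x hx, h3, or_false]
  rw [this]
  refine (((MeasurableSet.biUnion S.to_countable fun c _ => dc_meas c).compl).inter (hf hB)).union
    (MeasurableSet.biUnion S.to_countable fun c _ => ?_)
  exact (dc_meas c).inter (MeasurableSet.const _)

/-- Weak type `(1,1)` with a constant depending only on `n` and `A`, by the Calderón-Zygmund
decomposition: the good part is handled in `L²`, the bad part by `far_mean_zero`. -/
lemma weak11 {n : ℕ} (hn : 0 < n) {k : E n → ℝ} {A : NNReal} (hk : CZK k A)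
    {f : E n → ℝ} (hf : Measurable f) (hfi : Integrable f) (hfb : ∃ B : ℝ, ∀ x, |f x| ≤ B)
    {t : ℝ≥0∞} (ht : t ≠ 0) (ht' : t ≠ ⊤) :
    t * volume {x | t < ‖cT k f x‖ₑ} ≤ Cw n A * ∫⁻ y, ‖f y‖ₑ := by
  set J := ∫⁻ y, ‖f y‖ₑ with hJ
  obtain ⟨S, hd, hS1, -, hS3, hS4⟩ := cz_decomp hn (fun y => ‖f y‖ₑ) hf.enorm hfi.2.ne ht ht'
  obtain ⟨g, hg, hg1, hg2⟩ := exists_good hf S hd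
  obtain ⟨B, hB⟩ := hfb
  set U := ⋃ c ∈ S, dc c with hU
  have hUm : MeasurableSet U := MeasurableSet.biUnion S.to_countable fun c _ => dc_meas c
  have hUI : ∀ F : E n → ℝ≥0∞, ∫⁻ y in U, F y = ∑' c : S, ∫⁻ y in dc c, F y := fun F =>
    lintegral_biUnion S.to_countable (fun c _ => dc_meas c) hd F
  have hv : ∀ c : ℤ × (Fin n → ℤ), 0 < (volume (dc c)).toReal := fun c =>
    ENNReal.toReal_pos (dc_vol_ne_zero c) (dc_vol_ne_top c)
  -- on each stopping cube the good function has no more mass than `f`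
  have hgc : ∀ c ∈ S, ∀ x ∈ dc c, ‖g x‖ₑ * volume (dc c) ≤ ∫⁻ y in dc c, ‖f y‖ₑ := by
    intro c hc x hx
    rw [hg2 c hc x hx, enorm_mul, Real.enorm_of_nonneg (inv_nonneg.2 (hv c).le),
      ENNReal.ofReal_inv_of_pos (hv c), ENNReal.ofReal_toReal (dc_vol_ne_top c), mul_comm,
      ← mul_assoc, ENNReal.mul_inv_cancel (dc_vol_ne_zero c) (dc_vol_ne_top c), one_mul]
    exact enorm_integral_le_lintegral_enorm _
  have hgc' : ∀ c ∈ S, ∫⁻ y in dc c, ‖g y‖ₑ ≤ ∫⁻ y in dc c, ‖f y‖ₑ := by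
    intro c hc
    have h : ∀ y ∈ dc c, ‖g y‖ₑ = ‖g (corner c)‖ₑ := fun y hy => by
      rw [hg2 c hc y hy, hg2 c hc _ (corner_mem c)]
    rw [setLIntegral_congr_fun (dc_meas c) h, setLIntegral_const]
    exact hgc c hc _ (corner_mem c)
  have hgI : ∫⁻ y, ‖g y‖ₑ ≤ J := by
    rw [hJ, ← lintegral_add_compl _ hUm, ← lintegral_add_compl (fun y => ‖f y‖ₑ) hUm, hUI, hUI]
    refine add_le_add (ENNReal.tsum_le_tsum fun c => hgc' c c.2) ?_
    exact (setLIntegral_congr_fun hUm.compl fun y hy => by rw [hg1 y hy]).le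
  have hgi : Integrable g := ⟨hg.aestronglyMeasurable, lt_of_le_of_lt hgI hfi.2⟩
  have hgt : ∀ᵐ x, ‖g x‖ₑ ≤ 2 ^ n * t := by
    filter_upwards [hS4] with x hx
    by_cases hxU : x ∈ U
    · obtain ⟨c, hc, hxc⟩ := mem_iUnion₂.1 hxU
      exact (ENNReal.mul_le_mul_iff_left (dc_vol_ne_zero c) (dc_vol_ne_top c)).1
        ((hgc c hc x hxc).trans (hS3 c hc))
    · rw [hg1 x hxU]
      refine (hx hxU).trans ?_
      calc t = 1 * t := (one_mul t).symm
        _ ≤ _ := by gcongr; exact one_le_pow₀ (by norm_num)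
  have hgb : ∃ B' : ℝ, ∀ x, |g x| ≤ B' := by
    refine ⟨B, fun x => ?_⟩
    by_cases hxU : x ∈ U
    · obtain ⟨c, hc, hxc⟩ := mem_iUnion₂.1 hxU
      rw [hg2 c hc x hxc, abs_mul, abs_of_pos (inv_pos.2 (hv c)), inv_mul_le_iff₀ (hv c), mul_comm]
      exact norm_setIntegral_le_of_norm_le_const (f := f) (dc_vol_ne_top c).lt_top fun y _ => hB y
    · rw [hg1 x hxU]; exact hB x
  -- the good part
  have hG : t * volume {x | t / 2 ≤ ‖cT k g x‖ₑ} ≤ 4 * A ^ 2 * 2 ^ n * J := by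
    have h1 := mul_meas_ge_le_lintegral (μ := volume) ((cT_meas hk.meas hg).enorm.pow_const 2)
      ((t / 2) ^ 2)
    have h2 := (hk.l2 g hg hgi hgb).trans (mul_le_mul_right (bdd_sq hg hgt) _)
    have h3 : volume {x | t / 2 ≤ ‖cT k g x‖ₑ} ≤ volume {x | (t / 2) ^ 2 ≤ ‖cT k g x‖ₑ ^ 2} := by
      refine measure_mono fun x hx => ?_
      simp only [mem_ofPred_eq] at hx ⊢
      gcongr
    have h4 : t * (t * volume {x | t / 2 ≤ ‖cT k g x‖ₑ}) ≤ t * (4 * A ^ 2 * 2 ^ n * J) := by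
      calc t * (t * volume {x | t / 2 ≤ ‖cT k g x‖ₑ})
          = 4 * ((t / 2) ^ 2 * volume {x | t / 2 ≤ ‖cT k g x‖ₑ}) := by
            have : t = 2 * (t / 2) := (ENNReal.mul_div_cancel (by norm_num) (by norm_num)).symm
            generalize volume {x | t / 2 ≤ ‖cT k g x‖ₑ} = w
            generalize t / 2 = s at this
            rw [this]; ring
        _ ≤ 4 * (A ^ 2 * (2 ^ n * t * J)) := by
            refine mul_le_mul_right ?_ _
            refine le_trans (mul_le_mul_right h3 _) (h1.trans (h2.trans ?_))
            gcongr
        _ = _ := by ring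
    exact (ENNReal.mul_le_mul_iff_right ht ht').1 h4
  -- the exceptional set
  set V := ⋃ c ∈ S, Metric.closedBall (corner c) (2 * (n * sd c.1)) with hV
  have hVt : t * volume V ≤ (2 * (n : ℝ≥0∞)) ^ n * vn n * J := by
    have hsum : ∑' c : S, t * volume (dc (c : ℤ × (Fin n → ℤ))) ≤ J := by
      refine (ENNReal.tsum_le_tsum fun c => hS1 _ c.2).trans ?_
      rw [← hUI]; exact setLIntegral_le_lintegral _ _
    calc t * volume V ≤ t * ∑' c : S, volume (Metric.closedBall (corner (c : ℤ × (Fin n → ℤ)))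
            (2 * (n * sd c.1.1))) := by
          gcongr
          exact measure_biUnion_le volume S.to_countable _
      _ = ∑' c : S, (2 * (n : ℝ≥0∞)) ^ n * vn n * (t * volume (dc (c : ℤ × (Fin n → ℤ)))) := by
          rw [← ENNReal.tsum_mul_left]
          refine tsum_congr fun c => ?_
          have := sd_pos c.1.1
          rw [volume_cball _ (by positivity), dc_vol, ← mul_assoc 2, ENNReal.ofReal_mul (by positivity),
            ENNReal.ofReal_mul (by positivity), ENNReal.ofReal_natCast, mul_pow]
          simp only [ENNReal.ofReal_ofNat]
          ring
      _ ≤ _ := by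
          rw [ENNReal.tsum_mul_left]; gcongr
  -- the bad part
  set b : E n → ℝ := fun y => f y - g y with hb
  have hbm : Measurable b := hf.sub hg
  have hbi : Integrable b := hfi.sub hgi
  have hbU : ∀ y ∉ U, b y = 0 := fun y hy => by simp only [hb, hg1 y hy, sub_self]
  have hb0 : ∀ c ∈ S, ∫ y in dc c, b y = 0 := by
    intro c hc
    simp only [hb]
    rw [integral_sub hfi.integrableOn hgi.integrableOn, setIntegral_congr_fun (dc_meas c) (hg2 c hc),
      setIntegral_const, smul_eq_mul, measureReal_def, ← mul_assoc, mul_inv_cancel₀ (hv c).ne',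
      one_mul, sub_self]
  have hbI : ∀ c ∈ S, ∫⁻ y in dc c, ‖b y‖ₑ ≤ 2 * ∫⁻ y in dc c, ‖f y‖ₑ := by
    intro c hc
    calc ∫⁻ y in dc c, ‖b y‖ₑ ≤ ∫⁻ y in dc c, (‖f y‖ₑ + ‖g y‖ₑ) :=
          lintegral_mono fun y => enorm_sub_le
      _ = (∫⁻ y in dc c, ‖f y‖ₑ) + ∫⁻ y in dc c, ‖g y‖ₑ := lintegral_add_left hf.enorm _
      _ ≤ _ := by rw [two_mul]; exact add_le_add_right (hgc' c hc) _
  have hTb : ∀ x, ‖cT k b x‖ₑ ≤ ∑' c : S, ‖∫ y in dc (c : ℤ × (Fin n → ℤ)), k (x - y) * b y‖ₑ := by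
    intro x
    have e1 : cT k b x = ∫ y in U, k (x - y) * b y := by
      rw [setIntegral_eq_integral_of_forall_compl_eq_zero]
      · rfl
      · intro y hy; rw [hbU y hy, mul_zero]
    rw [e1, hU, biUnion_eq_iUnion, integral_iUnion (fun c : S => dc_meas _)
      (fun (c c' : S) hcc => hd c.2 c'.2 (fun h => hcc (Subtype.ext h)))
      (cT_int hk.meas hk.bdd hbi x).integrableOn]
    exact enorm_tsum_le_tsum_enorm
  have hbad : ∫⁻ x in Vᶜ, ‖cT k b x‖ₑ ≤ A * (2 ^ (n + 1) * vn n) * 2 * J := by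
    calc ∫⁻ x in Vᶜ, ‖cT k b x‖ₑ
        ≤ ∫⁻ x in Vᶜ, ∑' c : S, ‖∫ y in dc (c : ℤ × (Fin n → ℤ)), k (x - y) * b y‖ₑ :=
          lintegral_mono hTb
      _ = ∑' c : S, ∫⁻ x in Vᶜ, ‖∫ y in dc (c : ℤ × (Fin n → ℤ)), k (x - y) * b y‖ₑ := by
          refine lintegral_tsum fun c => ?_
          have h := cT_meas hk.meas (hbm.indicator (dc_meas (c : ℤ × (Fin n → ℤ))))
          refine (Measurable.aemeasurable ?_)
          refine Measurable.enorm ?_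
          have e : (fun x => ∫ y in dc (c : ℤ × (Fin n → ℤ)), k (x - y) * b y) =
              cT k ((dc (c : ℤ × (Fin n → ℤ))).indicator b) := by
            ext x
            simp only [cT]
            rw [← integral_indicator (dc_meas _)]
            congr 1; ext y
            by_cases hy : y ∈ dc (c : ℤ × (Fin n → ℤ)) <;> simp [hy]
          rw [e]; exact h
      _ ≤ ∑' c : S, A * (2 ^ (n + 1) * vn n) * (2 * ∫⁻ y in dc (c : ℤ × (Fin n → ℤ)), ‖f y‖ₑ) := by
          refine ENNReal.tsum_le_tsum fun c => ?_
          refine (lintegral_mono_set ?_).trans ((far_mean_zero hk hn hbm hbi c (hb0 c c.2)).trans ?_)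
          · exact compl_subset_compl.2 (subset_biUnion_of_mem (u := fun c : ℤ × (Fin n → ℤ) =>
              Metric.closedBall (corner c) (2 * (n * sd c.1))) c.2)
          · gcongr; exact hbI c c.2
      _ ≤ _ := by
          rw [ENNReal.tsum_mul_left, ENNReal.tsum_mul_left, ← hUI, mul_assoc _ 2]
          gcongr
          exact setLIntegral_le_lintegral _ _
  have hVm : MeasurableSet V :=
    MeasurableSet.biUnion S.to_countable fun c _ => Metric.isClosed_closedBall.measurableSet
  have hBt : t * volume {x | x ∉ V ∧ t / 2 ≤ ‖cT k b x‖ₑ}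
      ≤ 2 * (A * (2 ^ (n + 1) * vn n) * 2) * J := by
    have h1 := mul_meas_ge_le_lintegral (μ := volume.restrict Vᶜ) (cT_meas hk.meas hbm).enorm (t / 2)
    rw [Measure.restrict_apply' hVm.compl] at h1
    have h2 : {x | x ∉ V ∧ t / 2 ≤ ‖cT k b x‖ₑ} = {x | t / 2 ≤ ‖cT k b x‖ₑ} ∩ Vᶜ := by
      ext x; simp [and_comm]
    rw [h2]
    calc _ = 2 * (t / 2 * volume ({x | t / 2 ≤ ‖cT k b x‖ₑ} ∩ Vᶜ)) := by
          rw [← mul_assoc, ENNReal.mul_div_cancel (by norm_num) (by norm_num)]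
      _ ≤ 2 * (A * (2 ^ (n + 1) * vn n) * 2 * J) := mul_le_mul_right (h1.trans hbad) _
      _ = _ := by ring
  have hTT : ∀ x, ‖cT k f x‖ₑ ≤ ‖cT k g x‖ₑ + ‖cT k b x‖ₑ := by
    intro x
    have : cT k f x = cT k g x + cT k b x := by
      simp only [cT]
      rw [← integral_add (cT_int hk.meas hk.bdd hgi x) (cT_int hk.meas hk.bdd hbi x)]
      congr 1; ext y; simp only [hb]; ring
    rw [this]; exact enorm_add_le _ _
  have hsub : {x | t < ‖cT k f x‖ₑ} ⊆ {x | t / 2 ≤ ‖cT k g x‖ₑ} ∪ (V ∪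
      {x | x ∉ V ∧ t / 2 ≤ ‖cT k b x‖ₑ}) := by
    intro x hx
    by_contra hcon
    simp only [mem_union, mem_ofPred_eq, not_or, not_and, not_le] at hcon hx
    have h1 := hcon.2.2 hcon.2.1
    have h2 := ENNReal.add_lt_add hcon.1 h1
    rw [ENNReal.add_halves] at h2
    exact absurd (hx.trans_le (hTT x)) (not_lt.2 h2.le)
  calc t * volume {x | t < ‖cT k f x‖ₑ}
      ≤ t * (volume {x | t / 2 ≤ ‖cT k g x‖ₑ} + (volume V +
          volume {x | x ∉ V ∧ t / 2 ≤ ‖cT k b x‖ₑ})) := by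
        gcongr
        exact (measure_mono hsub).trans ((measure_union_le _ _).trans
          (add_le_add_right (measure_union_le _ _) _))
    _ ≤ 4 * A ^ 2 * 2 ^ n * J + ((2 * (n : ℝ≥0∞)) ^ n * vn n * J +
          2 * (A * (2 ^ (n + 1) * vn n) * 2) * J) := by
        rw [mul_add, mul_add]
        exact add_le_add hG (add_le_add hVt hBt)
    _ = _ := by rw [Cw]; ring

/-! ### Dyadic maximal function and exceptional sets -/

/-- Dyadic maximal function. -/
def dmax {n : ℕ} (g : E n → ℝ≥0∞) (x : E n) : ℝ≥0∞ :=
  ⨆ k : ℤ, (∫⁻ y in dc (k, idx k x), g y) / volume (dc (k, idx k x))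

lemma idx_meas {n : ℕ} (k : ℤ) : Measurable (idx k : E n → Fin n → ℤ) := by
  refine measurable_pi_iff.2 fun i => ?_
  unfold idx
  exact Int.measurable_floor.comp (by fun_prop)

lemma dmax_meas {n : ℕ} (g : E n → ℝ≥0∞) : Measurable (dmax g) := by
  refine Measurable.iSup fun k => ?_
  have h : Measurable fun c : Fin n → ℤ => (∫⁻ y in dc (k, c), g y) / volume (dc (k, c)) :=
    Measurable.of_discrete
  exact h.comp (idx_meas k)

lemma dmax_le {n : ℕ} (g : E n → ℝ≥0∞) (x : E n) : dmax g x ≤ emaximal g x := by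
  refine iSup_le fun k => ?_
  rw [setLIntegral_congr (dc_ae_eq_dcc _), measure_congr (dc_ae_eq_dcc _)]
  exact le_iSup₂_of_le (dcc (k, idx k x)) ⟨dcc_isCube _, dc_subset_dcc _ (mem_dc_idx k x)⟩ le_rfl

lemma avg_le_dmax {n : ℕ} (g : E n → ℝ≥0∞) {c : ℤ × (Fin n → ℤ)} {x : E n} (hx : x ∈ dc c) :
    (∫⁻ y in dc c, g y) / volume (dc c) ≤ dmax g x := by
  have h : c = (c.1, idx c.1 x) := by rw [mem_dc.1 hx]
  rw [h]
  exact le_iSup (fun k : ℤ => (∫⁻ y in dc (k, idx k x), g y) / volume (dc (k, idx k x))) c.1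

/-- The dilated ball attached to a dyadic cube. -/
def star {n : ℕ} (c : ℤ × (Fin n → ℤ)) : Set (E n) :=
  Metric.closedBall (corner c) (3 * (n * sd c.1))

lemma star_meas {n : ℕ} (c : ℤ × (Fin n → ℤ)) : MeasurableSet (star c) :=
  Metric.isClosed_closedBall.measurableSet

/-- The mass of `f` on the dilated ball, divided by the volume of the cube. -/
def av {n : ℕ} (f : E n → ℝ) (c : ℤ × (Fin n → ℤ)) : ℝ≥0∞ :=
  (∫⁻ y in star c, ‖f y‖ₑ) / volume (dc c)

lemma av_mul {n : ℕ} (f : E n → ℝ) (c : ℤ × (Fin n → ℤ)) :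
    av f c * volume (dc c) = ∫⁻ y, ‖(star c).indicator f y‖ₑ := by
  rw [av, ENNReal.div_mul_cancel (dc_vol_ne_zero c) (dc_vol_ne_top c), ← lintegral_indicator (star_meas c)]
  congr 1; ext y
  rw [enorm_indicator_eq_indicator_enorm]

lemma av_le_emax {n : ℕ} (hn : 0 < n) (f : E n → ℝ) {c : ℤ × (Fin n → ℤ)} {x : E n} (hx : x ∈ dc c) :
    av f c ≤ (6 * (n : ℝ≥0∞)) ^ n * emaximal (fun y => ‖f y‖ₑ) x := by
  have hs := sd_pos c.1
  set r : ℝ := 3 * (n * sd c.1) with hr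
  have hn' : (0 : ℝ) < n := by exact_mod_cast hn
  have hr0 : 0 < r := by positivity
  set a : E n := WithLp.toLp 2 fun i => corner c i - r with ha
  set Q : Set (E n) := {x : E n | ∀ i, a i ≤ x i ∧ x i ≤ a i + 2 * r} with hQ
  have hsub : star c ⊆ Q := by
    intro y hy i
    have h1 : ‖y - corner c‖ ≤ r := by simpa [star, Metric.mem_closedBall, dist_eq_norm] using hy
    have h2 := (PiLp.norm_apply_le (y - corner c) i).trans h1
    rw [Real.norm_eq_abs, abs_le] at h2
    simp only [PiLp.sub_apply] at h2
    simp only [ha]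
    constructor <;> linarith [h2.1, h2.2]
  have hx' : x ∈ Q := by
    refine hsub ?_
    rw [star, Metric.mem_closedBall, dist_eq_norm]
    refine (dc_dist hx (corner_mem c)).trans ?_
    nlinarith [mul_pos hn' hs]
  have hV : volume Q = (6 * (n : ℝ≥0∞)) ^ n * volume (dc c) := by
    rw [hQ, cube_vol, dc_vol, hr, ← mul_pow]
    congr 1
    rw [ENNReal.ofReal_mul (by norm_num), ENNReal.ofReal_mul (by norm_num),
      ENNReal.ofReal_mul (by positivity), ENNReal.ofReal_natCast]
    simp only [ENNReal.ofReal_ofNat]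
    ring
  have h6 : (6 * (n : ℝ≥0∞)) ^ n ≠ 0 := pow_ne_zero _ (mul_ne_zero (by norm_num) (by exact_mod_cast hn.ne'))
  have h6' : (6 * (n : ℝ≥0∞)) ^ n ≠ ⊤ := ENNReal.pow_ne_top (ENNReal.mul_ne_top (by norm_num) (by simp))
  have hM : (∫⁻ y in Q, ‖f y‖ₑ) / volume Q ≤ emaximal (fun y => ‖f y‖ₑ) x :=
    le_iSup₂_of_le (f := fun (Q : Set (E n)) (_ : IsCube Q ∧ x ∈ Q) => (∫⁻ y in Q, ‖f y‖ₑ) / volume Q)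
      Q ⟨⟨a, 2 * r, by positivity, rfl⟩, hx'⟩ le_rfl
  refine le_trans ?_ (mul_le_mul_right hM _)
  rw [hV, av, ENNReal.div_eq_inv_mul, ENNReal.div_eq_inv_mul, ENNReal.mul_inv (Or.inl h6) (Or.inl h6'),
    ← mul_assoc, ← mul_assoc, ENNReal.mul_inv_cancel h6 h6', one_mul]
  gcongr

lemma bmax_zero {n : ℕ} {F : E n → ℝ≥0∞} (h : ∫⁻ y, F y = 0) (x : E n) : bmax F x = 0 := by
  refine le_antisymm (iSup₂_le fun r hr => ?_) zero_le
  have : ∫⁻ y in Metric.closedBall x r, F y = 0 :=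
    le_antisymm ((setLIntegral_le_lintegral _ _).trans h.le) zero_le
  rw [this, ENNReal.zero_div]

lemma cT_zero {n : ℕ} (k : E n → ℝ) {f : E n → ℝ} (hf : Measurable f) (h : ∫⁻ y, ‖f y‖ₑ = 0) (x : E n) :
    cT k f x = 0 := by
  rw [lintegral_eq_zero_iff hf.enorm] at h
  refine integral_eq_zero_of_ae ?_
  filter_upwards [h] with y hy
  simp only [Pi.zero_apply, enorm_eq_zero] at hy
  simp [hy]

/-- The height of the exceptional sets, relative to the average. -/
def C1 (n : ℕ) (A : NNReal) : ℝ≥0∞ := 2 ^ (n + 4) * (Cw n A + 4 ^ n)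

lemma Cw_ne_top (n : ℕ) (A : NNReal) : Cw n A ≠ ⊤ := by
  have := vn_ne_top n
  unfold Cw
  finiteness

lemma C1_ne_top (n : ℕ) (A : NNReal) : C1 n A ≠ ⊤ := by
  have := Cw_ne_top n A
  unfold C1
  finiteness

lemma C1_ne_zero (n : ℕ) (A : NNReal) : C1 n A ≠ 0 := by
  unfold C1
  refine mul_ne_zero (by positivity) (fun h => ?_)
  have := (add_eq_zero.1 h).2
  exact absurd this (by positivity)

/-- Bounded measurable integrable functions. -/
structure FB {n : ℕ} (f : E n → ℝ) : Prop where
  meas : Measurable f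
  int : Integrable f
  bdd : ∃ B : ℝ, ∀ x, |f x| ≤ B

lemma FB.ind {n : ℕ} {f : E n → ℝ} (h : FB f) {s : Set (E n)} (hs : MeasurableSet s) :
    FB (s.indicator f) := by
  refine ⟨h.meas.indicator hs, h.int.indicator hs, ?_⟩
  obtain ⟨B, hB⟩ := h.bdd
  refine ⟨B, fun x => ?_⟩
  by_cases hx : x ∈ s
  · simpa [hx] using hB x
  · simpa [hx] using (abs_nonneg _).trans (hB x)

lemma av_ne_top {n : ℕ} {f : E n → ℝ} (h : FB f) (c : ℤ × (Fin n → ℤ)) : av f c ≠ ⊤ :=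
  ENNReal.div_ne_top ((setLIntegral_le_lintegral _ _).trans_lt h.int.2).ne (dc_vol_ne_zero c)

/-- A weak type `(1,1)` inequality at height `C1 n A * a`, with `a` the average, says that the
exceptional set occupies at most a fraction `2 ^ (-(n + 4))` of the cube. -/
lemma from_weak {n : ℕ} {A : NNReal} {a V w C : ℝ≥0∞} (ha : a ≠ 0) (ha' : a ≠ ⊤)
    (hC : C ≤ Cw n A + 4 ^ n) (h : C1 n A * a * w ≤ C * (a * V)) : 2 ^ (n + 4) * w ≤ V := by
  have h0 : (Cw n A + 4 ^ n) * a ≠ 0 := mul_ne_zero (fun h => by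
    have := (add_eq_zero.1 h).2
    exact absurd this (by positivity)) ha
  have h1 : (Cw n A + 4 ^ n) * a ≠ ⊤ := by
    have := Cw_ne_top n A
    finiteness
  refine (ENNReal.mul_le_mul_iff_right h0 h1).1 ?_
  calc (Cw n A + 4 ^ n) * a * (2 ^ (n + 4) * w) = C1 n A * a * w := by rw [C1]; ring
    _ ≤ C * (a * V) := h
    _ ≤ (Cw n A + 4 ^ n) * (a * V) := by gcongr
    _ = _ := by ring

/-- The localised function `f 1_{Q*}`, where `Q*` is the dilated ball, has a large image only on a
set of measure at most `2 ^ (-(n + 4)) |Q|`. -/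
lemma small_T {n : ℕ} (hn : 0 < n) {k : E n → ℝ} {A : NNReal} (hk : CZK k A) {f : E n → ℝ} (hf : FB f)
    (c : ℤ × (Fin n → ℤ)) : 2 ^ (n + 4) *
      volume {x | C1 n A * av f c < ‖cT k ((star c).indicator f) x‖ₑ} ≤ volume (dc c) := by
  have hF := hf.ind (star_meas c)
  by_cases h0 : av f c = 0
  · have h1 := av_mul f c
    rw [h0, zero_mul] at h1
    have : {x | C1 n A * av f c < ‖cT k ((star c).indicator f) x‖ₑ} = ∅ := by
      ext x; simp [cT_zero k hF.meas h1.symm x]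
    rw [this]; simp
  · have h1 := weak11 hn hk hF.meas hF.int hF.bdd (t := C1 n A * av f c)
      (mul_ne_zero (C1_ne_zero n A) h0) (ENNReal.mul_ne_top (C1_ne_top n A) (av_ne_top hf c))
    rw [← av_mul] at h1
    exact from_weak h0 (av_ne_top hf c) le_self_add h1

/-- The analogue of `small_T` for the centred maximal function. -/
lemma small_b {n : ℕ} (hn : 0 < n) (A : NNReal) {f : E n → ℝ} (hf : FB f)
    (c : ℤ × (Fin n → ℤ)) : 2 ^ (n + 4) *
      volume {x | C1 n A * av f c < bmax (fun y => ‖(star c).indicator f y‖ₑ) x} ≤ volume (dc c) := by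
  have hF := hf.ind (star_meas c)
  by_cases h0 : av f c = 0
  · have h1 := av_mul f c
    rw [h0, zero_mul] at h1
    have : {x | C1 n A * av f c < bmax (fun y => ‖(star c).indicator f y‖ₑ) x} = ∅ := by
      ext x; simp [bmax_zero h1.symm x]
    rw [this]; simp
  · have h1 := bmax_weak hn (fun y => ‖(star c).indicator f y‖ₑ) hF.int.2.ne (t := C1 n A * av f c)
      (mul_ne_zero (C1_ne_zero n A) h0) (ENNReal.mul_ne_top (C1_ne_top n A) (av_ne_top hf c))
    rw [← av_mul] at h1
    exact from_weak h0 (av_ne_top hf c) le_add_self h1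

/-- Off a measurable subset `G` of the cube of relative measure at most `2 ^ (-(n + 3))`, both
`T (f 1_{Q*})` and the maximal function of `f 1_{Q*}` are at most a constant times the average. -/
lemma exists_E {n : ℕ} (hn : 0 < n) {k : E n → ℝ} {A : NNReal} (hk : CZK k A) {f : E n → ℝ} (hf : FB f)
    (c : ℤ × (Fin n → ℤ)) : ∃ G : Set (E n), MeasurableSet G ∧ G ⊆ dc c ∧
      2 ^ (n + 3) * volume G ≤ volume (dc c) ∧ ∀ x ∈ dc c, x ∉ G →
        ‖cT k ((star c).indicator f) x‖ₑ ≤ C1 n A * av f c ∧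
        bmax (fun y => ‖(star c).indicator f y‖ₑ) x ≤ C1 n A * av f c := by
  have hF := hf.ind (star_meas c)
  set X := {x | C1 n A * av f c < ‖cT k ((star c).indicator f) x‖ₑ} with hX
  set Y := {x | C1 n A * av f c < bmax (fun y => ‖(star c).indicator f y‖ₑ) x} with hY
  refine ⟨dc c ∩ (toMeasurable volume X ∪ toMeasurable volume Y), ?_, inter_subset_left, ?_, ?_⟩
  · exact (dc_meas c).inter ((measurableSet_toMeasurable _ _).union (measurableSet_toMeasurable _ _))
  · have h1 := small_T hn hk hf c
    have h2 := small_b hn A hf c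
    have h3 : volume (dc c ∩ (toMeasurable volume X ∪ toMeasurable volume Y)) ≤ volume X + volume Y := by
      refine (measure_mono inter_subset_right).trans ((measure_union_le _ _).trans ?_)
      rw [measure_toMeasurable, measure_toMeasurable]
    refine (ENNReal.mul_le_mul_iff_right (a := 2) (by norm_num) (by norm_num)).1 ?_
    calc 2 * (2 ^ (n + 3) * volume (dc c ∩ (toMeasurable volume X ∪ toMeasurable volume Y)))
        ≤ 2 * (2 ^ (n + 3) * (volume X + volume Y)) := by gcongr
      _ = 2 ^ (n + 4) * volume X + 2 ^ (n + 4) * volume Y := by ring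
      _ ≤ volume (dc c) + volume (dc c) := add_le_add h1 h2
      _ = _ := (two_mul _).symm
  · intro x hx hxG
    have h : x ∉ X ∧ x ∉ Y := by
      constructor
      · exact fun h => hxG ⟨hx, Or.inl (subset_toMeasurable _ _ h)⟩
      · exact fun h => hxG ⟨hx, Or.inr (subset_toMeasurable _ _ h)⟩
    exact ⟨not_lt.1 h.1, not_lt.1 h.2⟩

/-! ### Local pointwise recursion -/

/-- The constant of the local pointwise recursion. -/
def C3 (n : ℕ) (A : NNReal) : ℝ≥0∞ :=
  C1 n A + (A * (2 ^ (n + 1) * vn n * C1 n A) + C1 n A * ((4 * (n : ℝ≥0∞)) ^ n * vn n * C1 n A))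

lemma C3_ne_top (n : ℕ) (A : NNReal) : C3 n A ≠ ⊤ := by
  have := vn_ne_top n
  have := C1_ne_top n A
  unfold C3
  finiteness

/-- If `h` vanishes on the dilated ball of the dyadic cube `c`, the oscillation of its image over
`c` is controlled by the maximal function, at any point of `c`, of a majorant `F`. -/
lemma far_osc {n : ℕ} (hn : 0 < n) {k : E n → ℝ} {A : NNReal} (hk : CZK k A) {h F : E n → ℝ}
    (hh : FB h) (hF : Measurable F) (c : ℤ × (Fin n → ℤ)) (h0 : ∀ y ∈ star c, h y = 0)
    (hle : ∀ y, ‖h y‖ₑ ≤ ‖F y‖ₑ)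
    {x x' : E n} (hx : x ∈ dc c) (hx' : x' ∈ dc c) :
    ‖cT k h x‖ₑ ≤ A * (2 ^ (n + 1) * vn n * bmax (fun y => ‖F y‖ₑ) x') + ‖cT k h x'‖ₑ := by
  have hs := sd_pos c.1
  have hn' : (0 : ℝ) < n := by exact_mod_cast hn
  set r : ℝ := n * sd c.1 with hr
  have hr0 : 0 < r := by positivity
  have e1 : cT k h x = (cT k h x - cT k h x') + cT k h x' := by ring
  rw [e1]
  refine (enorm_add_le _ _).trans (add_le_add_left ?_ _)
  have e2 : cT k h x - cT k h x' = ∫ y, (k (x - y) - k (x' - y)) * h y := by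
    simp only [cT]
    rw [← integral_sub (cT_int hk.meas hk.bdd hh.int x) (cT_int hk.meas hk.bdd hh.int x')]
    congr 1; ext y; ring
  rw [e2]
  have ha := annuli_far (fun y => ‖F y‖ₑ) hF.enorm x' hr0
  refine (enorm_integral_le_lintegral_enorm _).trans (le_trans ?_ (mul_le_mul_right ha _))
  have hm : MeasurableSet {y : E n | r ≤ ‖x' - y‖} := measurableSet_le measurable_const (by fun_prop)
  rw [← lintegral_const_mul _ (by fun_prop), ← lintegral_indicator hm]
  refine lintegral_mono fun y => ?_
  by_cases hy : y ∈ star c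
  · simp [h0 y hy]
  · have hy' : 3 * r < ‖y - corner c‖ := by
      simpa [star, Metric.mem_closedBall, dist_eq_norm] using hy
    have h1 : ‖x' - corner c‖ ≤ r := dc_dist hx' (corner_mem c)
    have h2 : ‖x' - x‖ ≤ r := dc_dist hx' hx
    have h3 : ‖y - corner c‖ ≤ ‖x' - y‖ + ‖x' - corner c‖ := by
      have : y - corner c = (x' - corner c) - (x' - y) := by abel
      rw [this, add_comm]; exact norm_sub_le _ _
    have h4 : 2 * r < ‖x' - y‖ := by linarith
    have h5 : y ∈ {y : E n | r ≤ ‖x' - y‖} := by simp only [mem_ofPred_eq]; linarith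
    rw [indicator_of_mem h5, enorm_mul, ← mul_assoc]
    refine mul_le_mul' ?_ (hle y)
    have e3 : (x' - y) - (x - y) = x' - x := by abel
    have h6 := hk.reg (x' - y) (x - y) (by rw [e3]; linarith)
    rw [e3] at h6
    rw [Real.enorm_eq_ofReal_abs, abs_sub_comm, ← ENNReal.ofReal_coe_nnreal,
      ← ENNReal.ofReal_mul A.coe_nonneg]
    refine ENNReal.ofReal_le_ofReal (h6.trans ?_)
    rw [mul_div_assoc]
    gcongr

/-- If `G` occupies at most a quarter of the cube `P`, some point of `P` off `G` has controlled
`T (f 1_{P*})`, since the exceptional set of `small_T` cannot fill the rest of `P`. -/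
lemma good_point {n : ℕ} (hn : 0 < n) {k : E n → ℝ} {A : NNReal} (hk : CZK k A) {f : E n → ℝ} (hf : FB f)
    (P : ℤ × (Fin n → ℤ)) {G : Set (E n)} (h4 : 4 * volume (dc P ∩ G) ≤ volume (dc P)) :
    ∃ x ∈ dc P, x ∉ G ∧ ‖cT k ((star P).indicator f) x‖ₑ ≤ C1 n A * av f P := by
  by_contra hcon
  push Not at hcon
  set X := {x | C1 n A * av f P < ‖cT k ((star P).indicator f) x‖ₑ} with hX
  have h1 := small_T hn hk hf P
  have hsub : dc P ⊆ (dc P ∩ G) ∪ X := by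
    intro x hx
    by_cases hxG : x ∈ G
    · exact Or.inl ⟨hx, hxG⟩
    · exact Or.inr (hcon x hx hxG)
  have h2 := (measure_mono hsub).trans (measure_union_le (μ := volume) _ _)
  have h3 : 4 * volume X ≤ volume (dc P) := by
    refine le_trans ?_ h1
    gcongr
    calc (4 : ℝ≥0∞) = 2 ^ 2 := by norm_num
      _ ≤ _ := pow_le_pow_right₀ (by norm_num) (by omega)
  have h5 : 4 * volume (dc P) ≤ 2 * volume (dc P) := by
    calc 4 * volume (dc P) ≤ 4 * (volume (dc P ∩ G) + volume X) := by gcongr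
      _ = 4 * volume (dc P ∩ G) + 4 * volume X := mul_add _ _ _
      _ ≤ volume (dc P) + volume (dc P) := add_le_add h4 h3
      _ = _ := (two_mul _).symm
  have h6 := (ENNReal.mul_le_mul_iff_left (dc_vol_ne_zero P) (dc_vol_ne_top P)).1 h5
  exact absurd h6 (by norm_num)

/-- The pointwise recursion: `T (f 1_{Q*})` is at most a constant times the average on `Q`, except
on disjoint dyadic subcubes `P` of total measure at most `|Q| / 2`, where it exceeds this by at most
`|T (f 1_{P*})|`. The subcubes are the stopping cubes of the indicator of the exceptional set of
`exists_E` at height `2 ^ (-(n + 2))`; the difference `T (f 1_{Q*}) - T (f 1_{P*})` has small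
oscillation on `P` and is bounded at the point provided by `good_point`. -/
lemma local_step {n : ℕ} (hn : 0 < n) {k : E n → ℝ} {A : NNReal} (hk : CZK k A) {f : E n → ℝ} (hf : FB f)
    (Q : ℤ × (Fin n → ℤ)) : ∃ S : Set (ℤ × (Fin n → ℤ)), S.PairwiseDisjoint dc ∧
      (∀ P ∈ S, dc P ⊆ dc Q) ∧ (2 * ∑' P : S, volume (dc (P : ℤ × (Fin n → ℤ))) ≤ volume (dc Q)) ∧
      (∀ᵐ x, x ∈ dc Q → x ∉ (⋃ P ∈ S, dc P) →
        ‖cT k ((star Q).indicator f) x‖ₑ ≤ C3 n A * av f Q) ∧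
      ∀ P ∈ S, ∀ x ∈ dc P, ‖cT k ((star Q).indicator f) x‖ₑ ≤
        C3 n A * av f Q + ‖cT k ((star P).indicator f) x‖ₑ := by
  obtain ⟨G, hGm, hGQ, hG1, hG2⟩ := exists_E hn hk hf Q
  set t : ℝ≥0∞ := (2 ^ (n + 2))⁻¹ with ht
  have ht0 : t ≠ 0 := by simp [ht]
  have htt : t ≠ ⊤ := by simp [ht]
  have htm : 2 ^ (n + 2) * t = 1 := ENNReal.mul_inv_cancel (by positivity) (by finiteness)
  have hi : ∀ P : ℤ × (Fin n → ℤ), ∫⁻ y in dc P, G.indicator (fun _ => (1 : ℝ≥0∞)) y = volume (dc P ∩ G) := by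
    intro P
    rw [lintegral_indicator hGm, setLIntegral_one, Measure.restrict_apply hGm, inter_comm]
  have hGfin : volume G ≠ ⊤ := ((measure_mono hGQ).trans_lt (dc_vol_ne_top Q).lt_top).ne
  obtain ⟨S, hd, hS1, hS2, hS3, hS4⟩ := cz_decomp hn (G.indicator fun _ => (1 : ℝ≥0∞))
    (measurable_const.indicator hGm) (by rw [lintegral_indicator hGm]; simpa using hGfin) ht0 htt
  simp only [hi] at hS1 hS2 hS3
  have hGt : 2 * volume G ≤ t * volume (dc Q) := by
    calc 2 * volume G = (2 ^ (n + 2) * t) * (2 * volume G) := by rw [htm, one_mul]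
      _ = t * (2 ^ (n + 3) * volume G) := by ring
      _ ≤ _ := by gcongr
  have hlt : ∀ P ∈ S, Q.1 < P.1 ∧ dc P ⊆ dc Q := by
    intro P hP
    have h0 : volume (dc P ∩ G) ≠ 0 := by
      have := hS2 P hP
      exact (lt_of_le_of_lt zero_le this).ne'
    obtain ⟨z, hzP, hzG⟩ := nonempty_of_measure_ne_zero h0
    have hzQ := hGQ hzG
    have h1 : Q.1 < P.1 := by
      by_contra hcon
      have h2 : dc Q ⊆ dc P := dc_nest (not_lt.1 hcon) hzP hzQ
      have h3 : 2 * (t * volume (dc P)) ≤ t * volume (dc P) := by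
        calc 2 * (t * volume (dc P)) ≤ 2 * volume (dc P ∩ G) := by gcongr; exact hS1 P hP
          _ ≤ 2 * volume G := by gcongr; exact inter_subset_right
          _ ≤ t * volume (dc Q) := hGt
          _ ≤ t * volume (dc P) := by gcongr
      have h4 : t * volume (dc P) ≠ 0 := mul_ne_zero ht0 (dc_vol_ne_zero P)
      have h5 : t * volume (dc P) ≠ ⊤ := ENNReal.mul_ne_top htt (dc_vol_ne_top P)
      have h6 : (2 : ℝ≥0∞) ≤ 1 := (ENNReal.mul_le_mul_iff_left h4 h5).1 (by simpa using h3)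
      exact absurd h6 (by norm_num)
    exact ⟨h1, dc_nest h1.le hzQ hzP⟩
  have hstar : ∀ P ∈ S, star P ⊆ star Q := by
    intro P hP
    obtain ⟨h1, h2⟩ := hlt P hP
    refine Metric.closedBall_subset_closedBall' ?_
    have h3 : dist (corner P) (corner Q) ≤ n * sd Q.1 := by
      rw [dist_eq_norm]; exact dc_dist (h2 (corner_mem P)) (corner_mem Q)
    have h4 := sd_lt h1
    have h5 := sd_pos P.1
    have hn' : (0 : ℝ) < n := by exact_mod_cast hn
    nlinarith
  refine ⟨S, hd, fun P hP => (hlt P hP).2, ?_, ?_, ?_⟩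
  · have h1 : t * ∑' P : S, volume (dc (P : ℤ × (Fin n → ℤ))) ≤ volume G := by
      rw [← ENNReal.tsum_mul_left]
      calc _ ≤ ∑' P : S, volume (dc (P : ℤ × (Fin n → ℤ)) ∩ G) :=
            ENNReal.tsum_le_tsum fun P => hS1 _ P.2
        _ = ∑' P : S, volume.restrict G (dc (P : ℤ × (Fin n → ℤ))) :=
            tsum_congr fun P => (Measure.restrict_apply (dc_meas _)).symm
        _ = volume.restrict G (⋃ P ∈ S, dc P) :=
            (measure_biUnion S.to_countable hd fun P _ => dc_meas P).symm
        _ ≤ volume.restrict G univ := measure_mono (subset_univ _)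
        _ = _ := by simp
    refine (ENNReal.mul_le_mul_iff_right ht0 htt).1 ?_
    calc t * (2 * ∑' P : S, volume (dc (P : ℤ × (Fin n → ℤ))))
        = 2 * (t * ∑' P : S, volume (dc (P : ℤ × (Fin n → ℤ)))) := by ring
      _ ≤ 2 * volume G := by gcongr
      _ ≤ _ := hGt
  · filter_upwards [hS4] with x hx hxQ hxU
    have h1 := hx hxU
    have hxG : x ∉ G := by
      intro hxG
      rw [indicator_of_mem hxG, ht, ENNReal.one_le_inv] at h1
      exact absurd h1 (not_le.2 (one_lt_pow₀ (by norm_num) (by omega)))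
    refine (hG2 x hxQ hxG).1.trans ?_
    gcongr
    exact le_self_add
  · intro P hP x hx
    have h4 : 4 * volume (dc P ∩ G) ≤ volume (dc P) := by
      calc 4 * volume (dc P ∩ G) ≤ 4 * (2 ^ n * t * volume (dc P)) := by gcongr; exact hS3 P hP
        _ = (2 ^ (n + 2) * t) * volume (dc P) := by ring
        _ = _ := by rw [htm, one_mul]
    obtain ⟨x', hx', hxG, hx1⟩ := good_point hn hk hf P h4
    obtain ⟨hq1, hq2⟩ := hG2 x' ((hlt P hP).2 hx') hxG
    set FQ := (star Q).indicator f with hFQ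
    set FP := (star P).indicator f with hFP
    have hFQ' : FB FQ := hf.ind (star_meas Q)
    have hFP' : FB FP := hf.ind (star_meas P)
    set h := (star P)ᶜ.indicator FQ with hh
    have hh' : FB h := hFQ'.ind (star_meas P).compl
    have hdec : ∀ y, FQ y = FP y + h y := by
      intro y
      by_cases hy : y ∈ star P
      · have := hstar P hP hy
        simp [hFQ, hFP, hh, hy, this]
      · simp [hFP, hh, hy]
    have hTdec : ∀ z, cT k FQ z = cT k FP z + cT k h z := by
      intro z
      simp only [cT]
      rw [← integral_add (cT_int hk.meas hk.bdd hFP'.int z) (cT_int hk.meas hk.bdd hh'.int z)]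
      congr 1; ext y; rw [hdec y]; ring
    have hosc := far_osc hn hk (F := FQ) hh' hFQ'.meas P (fun y hy => by simp [hh, hy])
      (fun y => by by_cases hy : y ∈ star P <;> simp [hh, hy]) hx hx'
    have hTh : ‖cT k h x'‖ₑ ≤ C1 n A * av f Q + C1 n A * av f P := by
      have : cT k h x' = cT k FQ x' - cT k FP x' := by rw [hTdec]; ring
      rw [this]
      exact enorm_sub_le.trans (add_le_add hq1 hx1)
    have hav : av f P ≤ (4 * (n : ℝ≥0∞)) ^ n * vn n * (C1 n A * av f Q) := by
      have hs := sd_pos P.1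
      have hn' : (0 : ℝ) < n := by exact_mod_cast hn
      rw [av, ENNReal.div_le_iff (dc_vol_ne_zero P) (dc_vol_ne_top P)]
      have hb : star P ⊆ Metric.closedBall x' (4 * (n * sd P.1)) := by
        refine Metric.closedBall_subset_closedBall' ?_
        have : dist (corner P) x' ≤ n * sd P.1 := by
          rw [dist_eq_norm]; exact dc_dist (corner_mem P) hx'
        linarith
      calc ∫⁻ y in star P, ‖f y‖ₑ = ∫⁻ y in star P, ‖FQ y‖ₑ :=
            setLIntegral_congr_fun (star_meas P) fun y hy => by
              rw [hFQ, indicator_of_mem (hstar P hP hy)]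
        _ ≤ ∫⁻ y in Metric.closedBall x' (4 * (n * sd P.1)), ‖FQ y‖ₑ := lintegral_mono_set hb
        _ ≤ _ := lintegral_cball_le _ _ (by positivity)
        _ ≤ ENNReal.ofReal (4 * (n * sd P.1)) ^ n * vn n * (C1 n A * av f Q) := by gcongr
        _ = _ := by
            rw [dc_vol, ← mul_assoc 4, ENNReal.ofReal_mul (by positivity),
              ENNReal.ofReal_mul (by norm_num), ENNReal.ofReal_natCast, mul_pow]
            simp only [ENNReal.ofReal_ofNat]
            ring
    rw [hTdec x]
    refine (enorm_add_le _ _).trans ?_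
    rw [add_comm]
    refine add_le_add_left ?_ _
    calc ‖cT k h x‖ₑ ≤ A * (2 ^ (n + 1) * vn n * bmax (fun y => ‖FQ y‖ₑ) x') + ‖cT k h x'‖ₑ := hosc
      _ ≤ A * (2 ^ (n + 1) * vn n * (C1 n A * av f Q)) + (C1 n A * av f Q + C1 n A *
            ((4 * (n : ℝ≥0∞)) ^ n * vn n * (C1 n A * av f Q))) := by
          gcongr
          exact hTh.trans (by gcongr)
      _ = _ := by rw [C3]; ring

/-! ### Bilinear control by maximal functions -/

/-- The constant of the bilinear maximal function bound. -/
def C4 (n : ℕ) (A : NNReal) : ℝ≥0∞ := 2 * C3 n A * (6 * (n : ℝ≥0∞)) ^ n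

lemma C4_ne_top (n : ℕ) (A : NNReal) : C4 n A ≠ ⊤ := by
  have := C3_ne_top n A
  unfold C4
  finiteness

/-- The recursion `local_step` applied `N` times. At each stage the part of the cube outside the
stopping cubes carries at least half of its measure, so the average terms are absorbed into the
integral of the maximal functions over pairwise disjoint sets. -/
lemma iterate {n : ℕ} (hn : 0 < n) {k : E n → ℝ} {A : NNReal} (hk : CZK k A) {f : E n → ℝ} (hf : FB f)
    {g : E n → ℝ≥0∞} (hg : Measurable g) {B : ℝ≥0∞}
    (hB : ∀ Q : ℤ × (Fin n → ℤ), ∀ x, ‖cT k ((star Q).indicator f) x‖ₑ * g x ≤ B) (N : ℕ) :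
    ∀ Q : ℤ × (Fin n → ℤ), ∫⁻ x in dc Q, ‖cT k ((star Q).indicator f) x‖ₑ * g x ≤
      C4 n A * (∫⁻ x in dc Q, emaximal (fun y => ‖f y‖ₑ) x * dmax g x) +
        B * (2⁻¹ ^ N * volume (dc Q)) := by
  induction N with
  | zero =>
    intro Q
    calc _ ≤ ∫⁻ x in dc Q, B := lintegral_mono (hB Q)
      _ = B * (2⁻¹ ^ 0 * volume (dc Q)) := by simp
      _ ≤ _ := le_add_self
  | succ N ih =>
    intro Q
    obtain ⟨S, hd, hsub, hvol, hoff, hon⟩ := local_step hn hk hf Q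
    set U := ⋃ P ∈ S, dc P with hU
    have hUm : MeasurableSet U := MeasurableSet.biUnion S.to_countable fun c _ => dc_meas c
    have hUQ : U ⊆ dc Q := iUnion₂_subset hsub
    have hUI : ∀ F : E n → ℝ≥0∞, ∫⁻ y in U, F y = ∑' c : S, ∫⁻ y in dc (c : ℤ × (Fin n → ℤ)), F y :=
      fun F => lintegral_biUnion S.to_countable (fun c _ => dc_meas c) hd F
    have hsplit : ∀ F : E n → ℝ≥0∞, ∫⁻ y in dc Q, F y = (∫⁻ y in U, F y) + ∫⁻ y in dc Q \ U, F y := by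
      intro F
      rw [← lintegral_inter_add_sdiff F (dc Q) hUm, inter_eq_self_of_subset_right hUQ]
    have hvU : volume U ≤ ∑' P : S, volume (dc (P : ℤ × (Fin n → ℤ))) :=
      measure_biUnion_le volume S.to_countable _
    set a := C3 n A * av f Q with ha
    set M := fun x => emaximal (fun y => ‖f y‖ₑ) x * dmax g x with hM
    have hTm : ∀ P : ℤ × (Fin n → ℤ), Measurable (cT k ((star P).indicator f)) := fun P =>
      cT_meas hk.meas (hf.meas.indicator (star_meas P))
    -- the main term
    have hmain : a * ∫⁻ x in dc Q, g x ≤ C4 n A * ∫⁻ x in dc Q \ U, M x := by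
      have h1 : volume (dc Q) ≤ 2 * volume (dc Q \ U) := by
        have h2 : volume (dc Q) = volume U + volume (dc Q \ U) := by
          rw [← measure_inter_add_sdiff (dc Q) hUm, inter_eq_self_of_subset_right hUQ]
        have h3 : 2 * volume U ≤ volume (dc Q) := le_trans (by gcongr) hvol
        have hUf : volume U ≠ ⊤ := ((measure_mono hUQ).trans_lt (dc_vol_ne_top Q).lt_top).ne
        have h4 : volume U ≤ volume (dc Q \ U) := by
          rw [h2, two_mul] at h3
          exact (ENNReal.add_le_add_iff_left hUf).1 h3
        rw [h2, two_mul]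
        gcongr
      set gq := (∫⁻ y in dc Q, g y) / volume (dc Q) with hgq
      have h2 : ∫⁻ y in dc Q, g y = gq * volume (dc Q) :=
        (ENNReal.div_mul_cancel (dc_vol_ne_zero Q) (dc_vol_ne_top Q)).symm
      have h3 : av f Q * gq * volume (dc Q \ U) ≤ (6 * (n : ℝ≥0∞)) ^ n * ∫⁻ x in dc Q \ U, M x := by
        have h6 : (6 * (n : ℝ≥0∞)) ^ n ≠ ⊤ :=
          ENNReal.pow_ne_top (ENNReal.mul_ne_top (by norm_num) (by simp))
        rw [← lintegral_const_mul' _ _ h6, ← setLIntegral_const]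
        refine setLIntegral_mono' ((dc_meas Q).diff hUm) fun x hx => ?_
        simp only [hM]
        rw [← mul_assoc]
        exact mul_le_mul' (av_le_emax hn f hx.1) (avg_le_dmax g hx.1)
      calc a * ∫⁻ x in dc Q, g x = C3 n A * (av f Q * gq * volume (dc Q)) := by rw [h2, ha]; ring
        _ ≤ C3 n A * (av f Q * gq * (2 * volume (dc Q \ U))) := by gcongr
        _ = 2 * C3 n A * (av f Q * gq * volume (dc Q \ U)) := by ring
        _ ≤ 2 * C3 n A * ((6 * (n : ℝ≥0∞)) ^ n * ∫⁻ x in dc Q \ U, M x) := by gcongr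
        _ = _ := by rw [C4]; ring
    have hin : ∫⁻ x in U, ‖cT k ((star Q).indicator f) x‖ₑ * g x ≤ (a * ∫⁻ x in U, g x) +
        ∑' P : S, ∫⁻ x in dc (P : ℤ × (Fin n → ℤ)), ‖cT k ((star (P : ℤ × (Fin n → ℤ))).indicator f) x‖ₑ * g x := by
      rw [hUI, hUI g, ← ENNReal.tsum_mul_left, ← ENNReal.tsum_add]
      refine ENNReal.tsum_le_tsum fun P => ?_
      rw [← lintegral_const_mul _ hg, ← lintegral_add_left (by fun_prop)]
      refine setLIntegral_mono' (dc_meas _) fun x hx => ?_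
      rw [← add_mul]
      exact mul_le_mul_left (hon _ P.2 x hx) _
    have hout : ∫⁻ x in dc Q \ U, ‖cT k ((star Q).indicator f) x‖ₑ * g x ≤ a * ∫⁻ x in dc Q \ U, g x := by
      rw [← lintegral_const_mul _ hg]
      refine setLIntegral_mono_ae' ((dc_meas Q).diff hUm) ?_
      filter_upwards [hoff] with x hx hxQ
      exact mul_le_mul_left (hx hxQ.1 hxQ.2) _
    have hrec : ∑' P : S, ∫⁻ x in dc (P : ℤ × (Fin n → ℤ)), ‖cT k ((star (P : ℤ × (Fin n → ℤ))).indicator f) x‖ₑ * g x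
        ≤ C4 n A * (∫⁻ x in U, M x) + B * (2⁻¹ ^ (N + 1) * volume (dc Q)) := by
      refine (ENNReal.tsum_le_tsum fun P : S => ih P).trans ?_
      rw [ENNReal.tsum_add, ENNReal.tsum_mul_left, ENNReal.tsum_mul_left, ENNReal.tsum_mul_left, hUI]
      refine add_le_add_right ?_ _
      rw [pow_succ, mul_assoc]
      gcongr
      calc ∑' P : S, volume (dc (P : ℤ × (Fin n → ℤ)))
          = 2⁻¹ * (2 * ∑' P : S, volume (dc (P : ℤ × (Fin n → ℤ)))) := by
            rw [← mul_assoc, ENNReal.inv_mul_cancel (by norm_num) (by norm_num), one_mul]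
        _ ≤ _ := by gcongr
    calc ∫⁻ x in dc Q, ‖cT k ((star Q).indicator f) x‖ₑ * g x
        ≤ ((a * ∫⁻ x in U, g x) + (C4 n A * (∫⁻ x in U, M x) + B * (2⁻¹ ^ (N + 1) * volume (dc Q)))) +
          a * ∫⁻ x in dc Q \ U, g x := by
          rw [hsplit]
          exact add_le_add (hin.trans (add_le_add_right hrec _)) hout
      _ = (a * ∫⁻ x in dc Q, g x) + (C4 n A * (∫⁻ x in U, M x) + B * (2⁻¹ ^ (N + 1) * volume (dc Q))) := by
          rw [hsplit g]; ring
      _ ≤ (C4 n A * ∫⁻ x in dc Q \ U, M x) + (C4 n A * (∫⁻ x in U, M x) + B * (2⁻¹ ^ (N + 1) * volume (dc Q))) := by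
          gcongr
      _ = _ := by rw [hsplit M]; ring

/-- The limit `N → ∞` of `iterate`. -/
lemma local_bound {n : ℕ} (hn : 0 < n) {k : E n → ℝ} {A : NNReal} (hk : CZK k A) {f : E n → ℝ} (hf : FB f)
    {g : E n → ℝ≥0∞} (hg : Measurable g) {G : ℝ≥0∞} (hG : G ≠ ⊤) (hgG : ∀ x, g x ≤ G)
    (Q : ℤ × (Fin n → ℤ)) : ∫⁻ x in dc Q, ‖cT k ((star Q).indicator f) x‖ₑ * g x ≤
      C4 n A * (∫⁻ x in dc Q, emaximal (fun y => ‖f y‖ₑ) x * dmax g x) := by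
  obtain ⟨D, hD⟩ := hk.bdd
  set B : ℝ≥0∞ := ENNReal.ofReal D * (∫⁻ y, ‖f y‖ₑ) * G with hBdef
  have hBt : B ≠ ⊤ := ENNReal.mul_ne_top (ENNReal.mul_ne_top ENNReal.ofReal_ne_top hf.int.2.ne) hG
  have hB : ∀ Q : ℤ × (Fin n → ℤ), ∀ x, ‖cT k ((star Q).indicator f) x‖ₑ * g x ≤ B := by
    intro Q x
    refine mul_le_mul' ?_ (hgG x)
    refine (enorm_integral_le_lintegral_enorm _).trans ?_
    rw [← lintegral_const_mul _ hf.meas.enorm]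
    refine lintegral_mono fun y => ?_
    rw [enorm_mul]
    refine mul_le_mul' ?_ (enorm_indicator_le_enorm_self _ _)
    rw [Real.enorm_eq_ofReal_abs]
    exact ENNReal.ofReal_le_ofReal (hD _)
  have hlim : Tendsto (fun N : ℕ => C4 n A * (∫⁻ x in dc Q, emaximal (fun y => ‖f y‖ₑ) x * dmax g x) +
      B * (2⁻¹ ^ N * volume (dc Q))) atTop
      (𝓝 (C4 n A * (∫⁻ x in dc Q, emaximal (fun y => ‖f y‖ₑ) x * dmax g x) + B * (0 * volume (dc Q)))) := by
    refine Tendsto.const_add _ (ENNReal.Tendsto.const_mul (ENNReal.Tendsto.mul_const ?_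
      (Or.inr (dc_vol_ne_top Q))) (Or.inr hBt))
    exact ENNReal.tendsto_pow_atTop_nhds_zero_of_lt_one (by norm_num)
  have := ge_of_tendsto' hlim fun N => iterate hn hk hf hg hB N Q
  simpa using this

/-- Bilinear control of a Calderón-Zygmund operator by maximal functions. -/
lemma bilinear {n : ℕ} (hn : 0 < n) {k : E n → ℝ} {A : NNReal} (hk : CZK k A) {f : E n → ℝ} (hf : FB f)
    {g : E n → ℝ≥0∞} (hg : Measurable g) {G : ℝ≥0∞} (hG : G ≠ ⊤) (hgG : ∀ x, g x ≤ G)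
    {R : ℝ} (hfR : ∀ x, R < ‖x‖ → f x = 0) (hgR : ∀ x, R < ‖x‖ → g x = 0) :
    ∫⁻ x, ‖cT k f x‖ₑ * g x ≤
      C4 n A * (∫⁻ x, emaximal (fun y => ‖f y‖ₑ) x * dmax g x) := by
  have hn' : (1 : ℝ) ≤ n := by exact_mod_cast hn
  -- on cubes of side at least `R`, every cube that meets the support of `g` has a dilated ball
  -- containing the support of `f`, so the localisation changes nothing
  obtain ⟨m, hm⟩ : ∃ m : ℕ, R ≤ sd (-m) := by
    obtain ⟨m, hm⟩ := pow_unbounded_of_one_lt R (by norm_num : (1 : ℝ) < 2)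
    refine ⟨m, hm.le.trans ?_⟩
    simp [sd]
  have hs := sd_pos (-m)
  have hr : R ≤ n * sd (-m) := hm.trans (by nlinarith)
  have hd : Pairwise (Function.onFun Disjoint fun z : Fin n → ℤ => dc ((-m : ℤ), z)) := by
    intro z z' hz
    refine Set.disjoint_left.2 fun x hx hx' => hz ?_
    have := dc_eq_of_mem (c := ((-m : ℤ), z)) (c' := ((-m : ℤ), z')) rfl hx hx'
    exact (Prod.ext_iff.1 this).2
  have hU : (⋃ z : Fin n → ℤ, dc ((-m : ℤ), z)) = univ :=
    eq_univ_of_forall fun x => mem_iUnion.2 ⟨idx (-m) x, mem_dc_idx _ x⟩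
  have hI : ∀ F : E n → ℝ≥0∞, ∫⁻ x, F x = ∑' z : Fin n → ℤ, ∫⁻ x in dc ((-m : ℤ), z), F x := by
    intro F
    rw [← lintegral_iUnion (fun z => dc_meas _) hd, hU, Measure.restrict_univ]
  rw [hI, hI (fun x => emaximal (fun y => ‖f y‖ₑ) x * dmax g x), ← ENNReal.tsum_mul_left]
  refine ENNReal.tsum_le_tsum fun z => le_trans (le_of_eq ?_) (local_bound hn hk hf hg hG hgG _)
  refine setLIntegral_congr_fun (dc_meas _) fun x hx => ?_
  by_cases hx0 : R < ‖x‖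
  · simp [hgR x hx0]
  have hff : (star ((-m : ℤ), z)).indicator f = f := by
    ext y
    by_cases hy : y ∈ star ((-m : ℤ), z)
    · simp [hy]
    · rw [indicator_of_notMem hy]
      refine (hfR y ?_).symm
      by_contra hyR
      refine hy ?_
      rw [star, Metric.mem_closedBall, dist_eq_norm]
      have h1 := dc_dist hx (corner_mem _)
      have h2 : y - corner ((-m : ℤ), z) = y - x + (x - corner ((-m : ℤ), z)) := by abel
      rw [h2]
      have h3 := norm_add_le (y - x) (x - corner ((-m : ℤ), z))
      have h4 := norm_sub_le y x
      simp only at h1 ⊢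
      linarith
  rw [hff]

/-! ### Plancherel and L² bounds -/

open scoped FourierTransform in
/-- Plancherel's identity for the Fourier integral of a function that is integrable and square
integrable. -/
lemma plancherel {n : ℕ} {u : E n → ℂ} (hu : Integrable u) (hu2 : MemLp u 2) :
    eLpNorm (𝓕 u) 2 volume = eLpNorm u 2 volume := by
  set f : Lp (α := E n) ℂ 2 volume := hu2.toLp u with hf
  have hcont : Continuous (𝓕 u) :=
    VectorFourier.fourierIntegral_continuous (μ := volume) Real.continuous_fourierChar
      (L := innerₗ (E n)) continuous_inner hu
  have h1 : (𝓕 f : Lp (α := E n) ℂ 2 volume) =ᵐ[volume] 𝓕 u := by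
    apply ae_eq_of_integral_contDiff_smul_eq
    · exact (Lp.memLp _).locallyIntegrable (by norm_num)
    · exact hcont.locallyIntegrable
    intro g gs gc
    have hg₁ : HasCompactSupport (Complex.ofRealCLM ∘ g) := gc.comp_left rfl
    have hg₂ : ContDiff ℝ (⊤ : ℕ∞) (Complex.ofRealCLM ∘ g) := by fun_prop
    set G := hg₁.toSchwartzMap hg₂ with hG
    have e1 : ∫ x, g x • (𝓕 f : Lp (α := E n) ℂ 2 volume) x
        = ((𝓕 f : Lp (α := E n) ℂ 2 volume) : TemperedDistribution (E n) ℂ) G := by simp [hG]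
    have e2 : ∫ x, (𝓕 G) x • f x = ∫ x, (𝓕 G) x • u x := by
      apply integral_congr_ae
      filter_upwards [hu2.coeFn_toLp] with x hx
      rw [hf, hx]
    rw [e1, ← Lp.fourier_toTemperedDistribution_eq, TemperedDistribution.fourier_apply,
      Lp.toTemperedDistribution_apply, e2, SchwartzMap.fourier_coe]
    have e3 := VectorFourier.integral_fourierIntegral_smul_eq_flip (L := innerₗ (E n))
      (μ := volume) (ν := volume) Real.continuous_fourierChar continuous_inner G.integrable hu
    simp only [flip_innerₗ] at e3
    refine e3.trans ?_
    apply integral_congr_ae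
    filter_upwards with x
    have : G x = (g x : ℂ) := rfl
    rw [this, Complex.real_smul, smul_eq_mul]
    rfl
  rw [← eLpNorm_congr_ae h1, ← eLpNorm_congr_ae hu2.coeFn_toLp, ← hf]
  have := Lp.norm_fourier_eq f
  rw [Lp.norm_def, Lp.norm_def, ENNReal.toReal_eq_toReal_iff' (Lp.eLpNorm_ne_top _) (Lp.eLpNorm_ne_top _)] at this
  exact this

lemma eLpNorm_two_sq {n : ℕ} {F : Type*} [NormedAddCommGroup F] (u : E n → F) :
    eLpNorm u 2 volume ^ 2 = ∫⁻ x, ‖u x‖ₑ ^ 2 := by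
  rw [eLpNorm_eq_lintegral_rpow_enorm_toReal (by norm_num) (by norm_num)]
  simp only [ENNReal.toReal_ofNat, ENNReal.rpow_ofNat]
  rw [← ENNReal.rpow_natCast, ← ENNReal.rpow_mul]
  norm_num

open scoped FourierTransform in
/-- A bounded Fourier multiplier gives an `L²` bound for the convolution. -/
lemma l2_of_fourier {n : ℕ} {k : E n → ℝ} {A : NNReal} (hki : Integrable k)
    (hk : ∀ w, ‖𝓕 (fun x => (k x : ℂ)) w‖ₑ ≤ A) (h : E n → ℝ) (hi : Integrable h)
    (hb : ∃ B : ℝ, ∀ x, |h x| ≤ B) :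
    ∫⁻ x, ‖cT k h x‖ₑ ^ 2 ≤ (A : ℝ≥0∞) ^ 2 * ∫⁻ x, ‖h x‖ₑ ^ 2 := by
  obtain ⟨B, hB⟩ := hb
  have bd : ∀ x, |cT k h x| ≤ B * ∫ y, |k y| := by
    intro x
    rw [cT]
    calc |∫ y, k (x - y) * h y| ≤ ∫ y, |k (x - y) * h y| := abs_integral_le_integral_abs
      _ ≤ ∫ y, B * |k (x - y)| := by
          apply integral_mono_of_nonneg (ae_of_all _ fun y => abs_nonneg _)
          · exact ((hki.comp_sub_left x).abs.const_mul B)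
          · refine ae_of_all _ fun y => ?_
            simp only [abs_mul, mul_comm B]
            gcongr
            exact hB y
      _ = _ := by
          rw [integral_const_mul]
          congr 1
          exact integral_sub_left_eq_self (fun y => |k y|) volume x
  have hkC : Integrable (fun x => (k x : ℂ)) := hki.ofReal
  have hhC : Integrable (fun x => (h x : ℂ)) := hi.ofReal
  have hconv : (MeasureTheory.convolution (fun x => (h x : ℂ)) (fun x => (k x : ℂ))
      (ContinuousLinearMap.mul ℂ ℂ) volume) = fun x => (cT k h x : ℂ) := by
    ext x
    simp only [convolution, cT, ContinuousLinearMap.mul_apply', ← Complex.ofReal_mul]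
    rw [integral_complex_ofReal]
    simp only [mul_comm]
  have hui : Integrable (fun x => (cT k h x : ℂ)) := by
    rw [← hconv]
    exact hhC.integrable_convolution _ hkC
  have ml : ∀ {v : E n → ℝ} {M : ℝ}, Integrable (fun x => (v x : ℂ)) → (∀ x, |v x| ≤ M) →
      MemLp (fun x => (v x : ℂ)) 2 := by
    intro v M h1 h2
    rw [memLp_two_iff_integrable_sq_norm h1.aestronglyMeasurable]
    simp only [pow_two]
    refine h1.norm.bdd_mul (c := M) h1.norm.aestronglyMeasurable (ae_of_all _ fun x => ?_)
    simpa using h2 x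
  have hu2 := ml hui bd
  have hh2 := ml hhC hB
  have e1 : ∫⁻ x, ‖cT k h x‖ₑ ^ 2 = ∫⁻ x, ‖((cT k h x : ℝ) : ℂ)‖ₑ ^ 2 := by
    simp [← ofReal_norm]
  have e2 : ∫⁻ x, ‖h x‖ₑ ^ 2 = ∫⁻ x, ‖((h x : ℝ) : ℂ)‖ₑ ^ 2 := by
    simp [← ofReal_norm]
  rw [e1, e2, ← eLpNorm_two_sq, ← eLpNorm_two_sq, ← plancherel hui hu2, ← plancherel hhC hh2,
    eLpNorm_two_sq, eLpNorm_two_sq, ← lintegral_const_mul']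
  · refine lintegral_mono fun w => ?_
    rw [← hconv, Real.fourier_mul_convolution_eq hhC hkC, enorm_mul, mul_pow, mul_comm]
    gcongr
    exact hk w
  · exact ENNReal.pow_ne_top ENNReal.coe_ne_top

/-! ### Fourier transform of standard kernels -/

/-- Integrable kernels obeying the standard size and regularity bounds with constant `A`, whose
integral against every radial cutoff vanishes. -/
structure SK {n : ℕ} (k : E n → ℝ) (A : ℝ) : Prop where
  meas : Measurable k
  bdd : ∃ B : ℝ, ∀ x, |k x| ≤ B
  int : Integrable k
  size : ∀ u, |k u| ≤ A / ‖u‖ ^ n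
  reg : ∀ u v, ‖u - v‖ ≤ ‖u‖ / 2 → |k u - k v| ≤ A * ‖u - v‖ / ‖u‖ ^ (n + 1)
  rad : ∀ ρ : ℝ → ℝ, Measurable ρ → (∀ t, |ρ t| ≤ 1) → ∫ x, ρ ‖x‖ * k x = 0

open scoped FourierTransform RealInnerProductSpace in
/-- The Fourier integral near the origin: the integral of `k` over a ball vanishes, so the character
may be replaced by its difference from `1`, which is `O(‖v‖ ‖w‖)`. -/
lemma SK.near {n : ℕ} {k : E n → ℝ} {A : ℝ} (hk : SK k A) (hA : 0 ≤ A) (w : E n) {r : ℝ} (hr : 0 < r) :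
    ‖∫ v, 𝐞 (-⟪v, w⟫) • (Metric.closedBall (0 : E n) r).indicator (fun x => (k x : ℂ)) v‖ₑ
      ≤ ENNReal.ofReal (A * (7 * ‖w‖)) * (2 ^ (n + 1) * vn n * ENNReal.ofReal r) := by
  set m := (Metric.closedBall (0 : E n) r).indicator (fun x => (k x : ℂ)) with hm
  have hmi : Integrable m := hk.int.ofReal.indicator Metric.isClosed_closedBall.measurableSet
  have h0 : ∫ v, m v = 0 := by
    have := hk.rad ((Set.Iic r).indicator fun _ => 1) (measurable_const.indicator measurableSet_Iic)
      (fun t => by by_cases h : t ∈ Set.Iic r <;> simp [h])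
    rw [← Complex.ofReal_inj, ← integral_complex_ofReal, Complex.ofReal_zero] at this
    rw [← this]
    congr 1; ext x
    by_cases h : ‖x‖ ≤ r <;> simp [hm, h, Set.indicator]
  have h1 : ∫ v, 𝐞 (-⟪v, w⟫) • m v = ∫ v, (𝐞 (-⟪v, w⟫) • m v - m v) := by
    rw [integral_sub ((Real.fourierIntegral_convergent_iff w).2 hmi) hmi, h0, sub_zero]
  rw [h1]
  refine (enorm_integral_le_lintegral_enorm _).trans ?_
  calc ∫⁻ v, ‖𝐞 (-⟪v, w⟫) • m v - m v‖ₑ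
      ≤ ∫⁻ v, (Metric.closedBall (0 : E n) r).indicator (fun y =>
          ENNReal.ofReal (A * (7 * ‖w‖)) * ENNReal.ofReal (‖y‖ / ‖y‖ ^ n)) v := by
        refine lintegral_mono fun v => ?_
        by_cases hv : v ∈ Metric.closedBall (0 : E n) r
        · simp only [hm, Set.indicator_of_mem hv]
          rw [← ofReal_norm, ← ENNReal.ofReal_mul (by positivity)]
          apply ENNReal.ofReal_le_ofReal
          have e : (𝐞 (-⟪v, w⟫) • (k v : ℂ) - (k v : ℂ)) =
              (Complex.exp (Complex.I * ((-2 * Real.pi * ⟪v, w⟫ : ℝ) : ℂ)) - 1) * (k v : ℂ) := by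
            rw [Circle.smul_def, Real.fourierChar_apply, smul_eq_mul, sub_mul, one_mul]
            congr 3
            push_cast; ring
          rw [e, norm_mul]
          have e1 := Real.norm_exp_I_mul_ofReal_sub_one_le (x := -2 * Real.pi * ⟪v, w⟫)
          have e2 : ‖(-2 * Real.pi * ⟪v, w⟫ : ℝ)‖ ≤ 7 * (‖v‖ * ‖w‖) := by
            rw [norm_mul, Real.norm_eq_abs, abs_mul]
            have := norm_inner_le_norm (𝕜 := ℝ) v w
            have hpi : |(-2 : ℝ)| * |Real.pi| ≤ 7 := by
              rw [abs_of_pos Real.pi_pos]; norm_num; linarith [Real.pi_lt_d2]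
            gcongr
          have e3 := hk.size v
          rw [Complex.norm_real, Real.norm_eq_abs]
          calc _ ≤ (7 * (‖v‖ * ‖w‖)) * (A / ‖v‖ ^ n) := by
                gcongr; exact e1.trans e2
            _ = _ := by ring
        · simp [hm, Set.indicator_of_notMem hv]
    _ = ENNReal.ofReal (A * (7 * ‖w‖)) *
        ∫⁻ y in Metric.closedBall (0 : E n) r, ENNReal.ofReal (‖y‖ / ‖y‖ ^ n) := by
        rw [lintegral_indicator Metric.isClosed_closedBall.measurableSet, lintegral_const_mul]
        fun_prop
    _ ≤ _ := by gcongr; exact annuli_near hr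

open scoped FourierTransform RealInnerProductSpace in
/-- The Fourier integral outside the ball of radius `r = 1 / ‖w‖`: translation by half a period of
the character changes its sign, and the regularity of `k` controls the resulting difference. -/
lemma SK.far {n : ℕ} {k : E n → ℝ} {A : ℝ} (hk : SK k A) (hA : 0 ≤ A) {w : E n} (hw : w ≠ 0) {r : ℝ}
    (hr : r = 1 / ‖w‖) :
    ‖∫ v, 𝐞 (-⟪v, w⟫) • ((Metric.closedBall (0 : E n) r)ᶜ).indicator (fun x => (k x : ℂ)) v‖ₑ
      ≤ ENNReal.ofReal A * (2 ^ (n + 1) * vn n) * 2 := by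
  have hw0 : 0 < ‖w‖ := norm_pos_iff.2 hw
  have hr0 : 0 < r := by rw [hr]; positivity
  set m := ((Metric.closedBall (0 : E n) r)ᶜ).indicator (fun x => (k x : ℂ)) with hm
  have hmi : Integrable m :=
    hk.int.ofReal.indicator Metric.isClosed_closedBall.measurableSet.compl
  rw [fourierIntegral_eq_half_sub_half_period_translate hw hmi, enorm_smul]
  set z : E n := (1 / (2 * ‖w‖ ^ 2) : ℝ) • w with hz
  have hzn : ‖z‖ = r / 2 := by
    rw [hz, norm_smul, Real.norm_of_nonneg (by positivity), hr]
    field_simp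
  have hhalf : ‖(1 / 2 : ℂ)‖ₑ ≤ 1 := by
    rw [← ofReal_norm, ← ENNReal.ofReal_one]
    apply ENNReal.ofReal_le_ofReal; norm_num
  have hmb : ∀ x, ‖m x‖ ≤ A / r ^ n := by
    intro x
    by_cases hx : ‖x‖ ≤ r
    · have : m x = 0 := by rw [hm, Set.indicator_of_notMem]; simpa using hx
      rw [this, norm_zero]; positivity
    · have : m x = k x := by rw [hm, Set.indicator_of_mem]; simpa using hx
      rw [this, Complex.norm_real, Real.norm_eq_abs]
      push Not at hx
      exact (hk.size x).trans (by gcongr)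
  have hpt : ∀ v, ‖𝐞 (-⟪v, w⟫) • (m v - m (v + z))‖ₑ ≤
      (Metric.closedBall (0 : E n) (2 * r)).indicator (fun _ => ENNReal.ofReal (2 * (A / r ^ n))) v
      + {y : E n | 2 * r ≤ ‖0 - y‖}.indicator
        (fun y => ENNReal.ofReal A * (ENNReal.ofReal (2 * r / ‖0 - y‖ ^ (n + 1)) * 1)) v := by
    intro v
    rw [← ofReal_norm, Circle.norm_smul]
    -- near the sphere of radius `r` the translate may cross the truncation, so only size is available
    by_cases hv : ‖v‖ ≤ 2 * r
    · rw [Set.indicator_of_mem (by simpa using hv)]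
      refine le_trans (ENNReal.ofReal_le_ofReal ?_) le_self_add
      refine (norm_sub_le _ _).trans ?_
      linarith [hmb v, hmb (v + z)]
    · push Not at hv
      have hv2 : v ∈ {y : E n | 2 * r ≤ ‖0 - y‖} := by simpa using hv.le
      rw [Set.indicator_of_mem hv2]
      refine le_trans ?_ le_add_self
      rw [mul_one, ← ENNReal.ofReal_mul hA]
      apply ENNReal.ofReal_le_ofReal
      have h1 : m v = k v := by
        rw [hm, Set.indicator_of_mem]; simp; linarith
      have h2 : m (v + z) = k (v + z) := by
        rw [hm, Set.indicator_of_mem]; simp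
        have := norm_sub_le (v + z) z
        rw [add_sub_cancel_right] at this
        linarith
      rw [h1, h2, ← Complex.ofReal_sub, Complex.norm_real, Real.norm_eq_abs]
      have e : ‖v - (v + z)‖ = r / 2 := by simp [hzn]
      refine (hk.reg v (v + z) (by rw [e]; linarith)).trans ?_
      rw [e, zero_sub, norm_neg, mul_div_assoc]
      gcongr
      linarith
  calc _ ≤ 1 * ∫⁻ v, ‖𝐞 (-⟪v, w⟫) • (m v - m (v + z))‖ₑ := by
        gcongr; exact enorm_integral_le_lintegral_enorm _
    _ ≤ ENNReal.ofReal A * (2 ^ (n + 1) * vn n) + ENNReal.ofReal A * (2 ^ (n + 1) * vn n) := by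
        rw [one_mul]
        refine (lintegral_mono hpt).trans ?_
        rw [lintegral_add_left (measurable_const.indicator Metric.isClosed_closedBall.measurableSet)]
        gcongr
        · rw [lintegral_indicator Metric.isClosed_closedBall.measurableSet, setLIntegral_const,
            volume_cball _ (by positivity), ← mul_assoc, ← mul_assoc,
            ← ENNReal.ofReal_pow (by positivity), ← ENNReal.ofReal_mul (by positivity)]
          gcongr
          have : 2 * (A / r ^ n) * (2 * r) ^ n = A * 2 ^ (n + 1) := by
            rw [mul_pow]; field_simp; ring
          rw [this, ENNReal.ofReal_mul hA, ENNReal.ofReal_pow (by norm_num), ENNReal.ofReal_ofNat]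
        · rw [lintegral_indicator (measurableSet_le measurable_const (by fun_prop)),
            lintegral_const_mul' _ _ ENNReal.ofReal_ne_top]
          gcongr
          refine (annuli_far (fun _ => 1) measurable_const (0 : E n) (by positivity : 0 < 2 * r)).trans ?_
          conv_rhs => rw [← mul_one (2 ^ (n + 1) * vn n)]
          gcongr
          exact bmax_one_le _
    _ = _ := by ring

/-- Dimensional constant in the Fourier transform bound. -/
def C5 (n : ℕ) : ℝ≥0∞ := 9 * (2 ^ (n + 1) * vn n)

lemma C5_ne_top (n : ℕ) : C5 n ≠ ⊤ := by
  unfold C5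
  exact ENNReal.mul_ne_top (by norm_num) (ENNReal.mul_ne_top (by norm_num) (vn_ne_top n))

open scoped FourierTransform RealInnerProductSpace in
/-- The Fourier transform is bounded, uniformly in terms of `A`. -/
lemma SK.fourier {n : ℕ} {k : E n → ℝ} {A : ℝ} (hk : SK k A) (hA : 0 ≤ A) (w : E n) :
    ‖𝓕 (fun x => (k x : ℂ)) w‖ₑ ≤ ENNReal.ofReal A * C5 n := by
  rw [Real.fourier_eq]
  rcases eq_or_ne w 0 with rfl | hw
  · have := hk.rad (fun _ => 1) measurable_const (by simp)
    rw [← Complex.ofReal_inj, ← integral_complex_ofReal, Complex.ofReal_zero] at this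
    simp only [one_mul] at this
    simp [this]
  have hw0 : 0 < ‖w‖ := norm_pos_iff.2 hw
  set r := 1 / ‖w‖ with hr
  have hr0 : 0 < r := by rw [hr]; positivity
  have hms : MeasurableSet (Metric.closedBall (0 : E n) r) := Metric.isClosed_closedBall.measurableSet
  have h1 := hk.near hA w hr0
  have h2 := hk.far hA hw hr
  have h3 : ∫ v, 𝐞 (-⟪v, w⟫) • (k v : ℂ) =
      (∫ v, 𝐞 (-⟪v, w⟫) • (Metric.closedBall (0 : E n) r).indicator (fun x => (k x : ℂ)) v) +
      ∫ v, 𝐞 (-⟪v, w⟫) • ((Metric.closedBall (0 : E n) r)ᶜ).indicator (fun x => (k x : ℂ)) v := by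
    rw [← integral_add ((Real.fourierIntegral_convergent_iff w).2 (hk.int.ofReal.indicator hms))
      ((Real.fourierIntegral_convergent_iff w).2 (hk.int.ofReal.indicator hms.compl))]
    congr 1; ext v
    rw [← smul_add, Set.indicator_self_add_compl_apply]
  rw [h3]
  refine (enorm_add_le _ _).trans ((add_le_add h1 h2).trans (le_of_eq ?_))
  have : ENNReal.ofReal (A * (7 * ‖w‖)) * (2 ^ (n + 1) * vn n * ENNReal.ofReal r)
      = ENNReal.ofReal (A * (7 * ‖w‖) * r) * (2 ^ (n + 1) * vn n) := by
    rw [ENNReal.ofReal_mul (q := r) (by positivity)]; ring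
  rw [this, show A * (7 * ‖w‖) * r = A * 7 by rw [hr]; field_simp, ENNReal.ofReal_mul hA, C5,
    ENNReal.ofReal_ofNat]
  ring

lemma SK.czk {n : ℕ} {k : E n → ℝ} {A : ℝ} (hk : SK k A) (hA : 0 ≤ A) :
    CZK k (A.toNNReal + A.toNNReal * (C5 n).toNNReal) where
  meas := hk.meas
  bdd := hk.bdd
  reg u v h := by
    refine (hk.reg u v h).trans ?_
    gcongr
    push_cast
    rw [Real.coe_toNNReal _ hA]
    exact le_add_of_nonneg_right (mul_nonneg hA (NNReal.coe_nonneg _))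
  l2 h _ hi hb := by
    refine l2_of_fourier hk.int (fun w => ?_) h hi hb
    refine (hk.fourier hA w).trans ?_
    push_cast
    rw [ENNReal.coe_toNNReal (C5_ne_top n)]
    exact le_add_self

/-! ### Homogeneous kernels -/

lemma K_zero {n : ℕ} (hn : 0 < n) (Ω : E n → ℝ) : kernelFn Ω 0 = 0 := by
  simp [kernelFn, hn.ne']

lemma K_smul {n : ℕ} {Ω : E n → ℝ} (hK : IsCZKernel Ω) (x : E n) {t : ℝ} (ht : 0 < t) :
    kernelFn Ω (t • x) = kernelFn Ω x / t ^ n := by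
  rw [kernelFn, kernelFn, hK.hom x t ht, norm_smul, Real.norm_of_nonneg ht.le, mul_pow, div_div,
    mul_comm (t ^ n)]

lemma K_contDiff {n : ℕ} {Ω : E n → ℝ} (hK : IsCZKernel Ω) :
    ContDiffOn ℝ (⊤ : ℕ∞) (kernelFn Ω) {x : E n | x ≠ 0} := by
  refine hK.smooth.div ?_ ?_
  · intro x hx
    exact ((contDiffAt_norm ℝ hx).pow n).contDiffWithinAt
  · intro x hx
    exact pow_ne_zero _ (norm_ne_zero_iff.2 hx)

lemma isOpen_ne_zero' {n : ℕ} : IsOpen {x : E n | x ≠ 0} := isOpen_ne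

lemma K_meas {n : ℕ} {Ω : E n → ℝ} (hK : IsCZKernel Ω) : Measurable (kernelFn Ω) := by
  have h1 : ContinuousOn (kernelFn Ω) {x : E n | x ≠ 0} := (K_contDiff hK).continuousOn
  have h2 : Measurable ({x : E n | x ≠ 0}.indicator (kernelFn Ω)) := by
    classical
    have := h1.measurable_piecewise (continuousOn_const (c := (0 : ℝ)) (s := {x : E n | x ≠ 0}ᶜ))
      isOpen_ne_zero'.measurableSet
    convert this using 1
    ext x
    by_cases hx : x = 0 <;> simp [Set.piecewise, hx]
  have h3 : kernelFn Ω = fun x => ({x : E n | x ≠ 0}.indicator (kernelFn Ω)) x +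
      ({0} : Set (E n)).indicator (fun _ => kernelFn Ω 0) x := by
    ext x
    by_cases hx : x = 0 <;> simp [hx]
  rw [h3]
  exact h2.add (measurable_const.indicator (measurableSet_singleton _))

/-- Size and regularity of a homogeneous kernel that is smooth away from the origin. -/
lemma K_bounds {n : ℕ} (hn : 0 < n) {Ω : E n → ℝ} (hK : IsCZKernel Ω) :
    ∃ A : ℝ, 0 ≤ A ∧ (∀ u, |kernelFn Ω u| ≤ A / ‖u‖ ^ n) ∧
      ∀ u v, ‖u - v‖ ≤ ‖u‖ / 2 →
        |kernelFn Ω u - kernelFn Ω v| ≤ A * ‖u - v‖ / ‖u‖ ^ (n + 1) := by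
  set K := kernelFn Ω with hKd
  set S : Set (E n) := {x | 1 / 2 ≤ ‖x‖ ∧ ‖x‖ ≤ 3 / 2} with hS
  have hSc : IsCompact S := by
    have : S = Metric.closedBall 0 (3 / 2) ∩ {x | 1 / 2 ≤ ‖x‖} := by
      ext x; simp [hS, and_comm]
    rw [this]
    exact (isCompact_closedBall _ _).inter_right (isClosed_le continuous_const continuous_norm)
  have hS0 : S ⊆ {x : E n | x ≠ 0} := by
    rintro x hx rfl
    simp [hS] at hx
    linarith [hx.1]
  obtain ⟨A1, hA1⟩ := hSc.exists_bound_of_continuousOn ((K_contDiff hK).continuousOn.mono hS0)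
  obtain ⟨A2, hA2⟩ := hSc.exists_bound_of_continuousOn
    (((K_contDiff hK).continuousOn_fderiv_of_isOpen isOpen_ne_zero' (by simp)).mono hS0)
  have hunit : ∀ e v : E n, ‖e‖ = 1 → ‖e - v‖ ≤ 1 / 2 → |K e - K v| ≤ A2 * ‖e - v‖ := by
    intro e v he hv
    have hsub : Metric.closedBall e (1 / 2) ⊆ S := by
      intro x hx
      rw [mem_closedBall_iff_norm] at hx
      have h1 := abs_norm_sub_norm_le x e
      rw [he] at h1
      have h2 := abs_le.1 (h1.trans hx)
      exact ⟨by linarith [h2.1], by linarith [h2.2]⟩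
    have := (convex_closedBall e (1 / 2)).norm_image_sub_le_of_norm_fderiv_le (𝕜 := ℝ) (f := K)
      (C := A2) (x := v) (y := e) ?_ (fun x hx => hA2 x (hsub hx)) ?_ ?_
    · exact this
    · intro x hx
      exact (((K_contDiff hK).differentiableOn (by simp)) x (hS0 (hsub hx))).differentiableAt
        (isOpen_ne_zero'.mem_nhds (hS0 (hsub hx)))
    · rw [mem_closedBall_iff_norm, norm_sub_rev]; exact hv
    · simp
  refine ⟨max (max A1 A2) 0, le_max_right _ _, ?_, ?_⟩
  · intro u
    rcases eq_or_ne u 0 with rfl | hu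
    · rw [hKd, K_zero hn, abs_zero]; positivity
    have hu0 : 0 < ‖u‖ := norm_pos_iff.2 hu
    set e : E n := ‖u‖⁻¹ • u with he
    have hue : u = ‖u‖ • e := by rw [he, smul_smul, mul_inv_cancel₀ hu0.ne', one_smul]
    have hen : ‖e‖ = 1 := by rw [he, norm_smul, norm_inv, norm_norm, inv_mul_cancel₀ hu0.ne']
    have h1 : |K e| ≤ A1 := hA1 e ⟨by rw [hen]; norm_num, by rw [hen]; norm_num⟩
    have h2 : K u = K e / ‖u‖ ^ n := by
      conv_lhs => rw [hue]
      exact K_smul hK e hu0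
    rw [h2, abs_div, abs_of_pos (pow_pos hu0 n)]
    gcongr
    exact h1.trans ((le_max_left _ _).trans (le_max_left _ _))
  · intro u v huv
    rcases eq_or_ne u 0 with rfl | hu
    · have : v = 0 := by simpa using huv
      simp [this]
    have hu0 : 0 < ‖u‖ := norm_pos_iff.2 hu
    set e : E n := ‖u‖⁻¹ • u with he
    have hue : u = ‖u‖ • e := by rw [he, smul_smul, mul_inv_cancel₀ hu0.ne', one_smul]
    have hen : ‖e‖ = 1 := by rw [he, norm_smul, norm_inv, norm_norm, inv_mul_cancel₀ hu0.ne']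
    set v' : E n := ‖u‖⁻¹ • v with hv'
    have hvv : v = ‖u‖ • v' := by rw [hv', smul_smul, mul_inv_cancel₀ hu0.ne', one_smul]
    have hd : ‖e - v'‖ = ‖u - v‖ / ‖u‖ := by
      rw [he, hv', ← smul_sub, norm_smul, norm_inv, norm_norm, inv_mul_eq_div]
    have h1 := hunit e v' hen (by rw [hd, div_le_iff₀ hu0]; linarith)
    have h2 : K u = K e / ‖u‖ ^ n := by
      conv_lhs => rw [hue]
      exact K_smul hK e hu0
    have h3 : K v = K v' / ‖u‖ ^ n := by
      conv_lhs => rw [hvv]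
      exact K_smul hK v' hu0
    rw [h2, h3, ← sub_div, abs_div, abs_of_pos (pow_pos hu0 n), pow_succ, mul_comm (‖u‖ ^ n),
      ← div_div, mul_div_assoc, ← hd]
    gcongr
    refine h1.trans ?_
    gcongr
    exact (le_max_right _ _).trans (le_max_left _ _)

/-- Integration in polar coordinates of a radial function times a function homogeneous of degree
zero. -/
lemma polar {n : ℕ} (hn : 0 < n) {Ω : E n → ℝ} (hom : ∀ (x : E n) (t : ℝ), 0 < t → Ω (t • x) = Ω x)
    (ρ : ℝ → ℝ) : ∫ x, ρ ‖x‖ * Ω x =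
      (∫ s : Metric.sphere (0 : E n) 1, Ω s ∂(volume : Measure (E n)).toSphere) *
      ∫ r : Set.Ioi (0 : ℝ), ρ r ∂(Measure.volumeIoiPow (Module.finrank ℝ (E n) - 1)) := by
  have : Nonempty (Fin n) := ⟨⟨0, hn⟩⟩
  rw [← integral_prod_mul (fun s : Metric.sphere (0 : E n) 1 => Ω s)
    (fun r : Set.Ioi (0 : ℝ) => ρ r)]
  calc ∫ x, ρ ‖x‖ * Ω x = ∫ x : ({(0 : E n)}ᶜ : Set (E n)), ρ ‖(x : E n)‖ * Ω x
        ∂((volume : Measure (E n)).comap (↑)) := by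
        rw [integral_subtype_comap (measurableSet_singleton _).compl (fun x : E n => ρ ‖x‖ * Ω x),
          restrict_compl_singleton]
    _ = _ := by
        rw [← ((volume : Measure (E n)).measurePreserving_homeomorphUnitSphereProd).integral_comp
          (Homeomorph.measurableEmbedding _)]
        congr 1; ext x
        have hx : 0 < ‖(x : E n)‖ := norm_pos_iff.2 x.2
        simp only [homeomorphUnitSphereProd_apply_snd_coe, homeomorphUnitSphereProd_apply_fst_coe]
        rw [hom _ _ (inv_pos.2 hx), mul_comm]

/-- The mean zero condition in polar coordinates: `Ω` integrates to zero against every radial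
function. -/
lemma K_rad {n : ℕ} (hn : 0 < n) {Ω : E n → ℝ} (hK : IsCZKernel Ω) (ρ : ℝ → ℝ) :
    ∫ x, ρ ‖x‖ * Ω x = 0 := by
  have hn1 : Nontrivial (E n) := by
    have : Nonempty (Fin n) := ⟨⟨0, hn⟩⟩
    infer_instance
  set ρ₀ : ℝ → ℝ := (Set.Icc 1 2).indicator fun _ => 1 with hρ₀
  have hms : MeasurableSet {x : E n | 1 ≤ ‖x‖ ∧ ‖x‖ ≤ 2} :=
    (measurableSet_le measurable_const measurable_norm).inter
      (measurableSet_le measurable_norm measurable_const)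
  have h1 := polar hn hK.hom ρ₀
  have h2 := polar hn (Ω := fun _ => (1 : ℝ)) (fun _ _ _ => rfl) ρ₀
  have e1 : ∫ x : E n, ρ₀ ‖x‖ * Ω x = 0 := by
    rw [← hK.mean, ← integral_indicator hms]
    congr 1; ext x
    by_cases hx : 1 ≤ ‖x‖ ∧ ‖x‖ ≤ 2 <;> simp [hρ₀, Set.indicator, hx]
  have e2 : ∫ x : E n, ρ₀ ‖x‖ * 1 ≠ 0 := by
    have : ∫ x : E n, ρ₀ ‖x‖ * 1 = (volume {x : E n | 1 ≤ ‖x‖ ∧ ‖x‖ ≤ 2}).toReal := by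
      rw [← Measure.real, ← integral_indicator_one hms]
      congr 1; ext x
      by_cases hx : 1 ≤ ‖x‖ ∧ ‖x‖ ≤ 2 <;> simp [hρ₀, Set.indicator, hx]
    rw [this]
    refine (ENNReal.toReal_pos ?_ ?_).ne'
    · have hop : IsOpen {x : E n | 1 < ‖x‖ ∧ ‖x‖ < 2} :=
        (isOpen_lt continuous_const continuous_norm).inter (isOpen_lt continuous_norm continuous_const)
      obtain ⟨x, hx⟩ := exists_norm_eq (E n) (by norm_num : (0 : ℝ) ≤ 3 / 2)
      have hmem : x ∈ {x : E n | 1 < ‖x‖ ∧ ‖x‖ < 2} := by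
        simp only [mem_ofPred_eq, hx]; norm_num
      have h3 := hop.measure_pos volume ⟨x, hmem⟩
      have hsub : {x : E n | 1 < ‖x‖ ∧ ‖x‖ < 2} ⊆ {x : E n | 1 ≤ ‖x‖ ∧ ‖x‖ ≤ 2} :=
        fun y hy => ⟨hy.1.le, hy.2.le⟩
      exact (h3.trans_le (measure_mono hsub)).ne'
    · refine ((measure_mono fun y hy => ?_).trans_lt
        (Metric.isBounded_closedBall (x := (0 : E n)) (r := 2)).measure_lt_top).ne
      simpa using hy.2
  rw [h2] at e2
  rw [e1] at h1
  have h3 := (mul_eq_zero.1 h1.symm).resolve_right (right_ne_zero_of_mul e2)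
  rw [polar hn hK.hom ρ, h3, zero_mul]

lemma K_rad' {n : ℕ} (hn : 0 < n) {Ω : E n → ℝ} (hK : IsCZKernel Ω) (ρ : ℝ → ℝ) :
    ∫ x, ρ ‖x‖ * kernelFn Ω x = 0 := by
  rw [← K_rad hn hK fun t => ρ t / t ^ n]
  congr 1; ext x
  rw [kernelFn]; ring

/-! ### Truncated kernels -/

/-- Untruncated Calderón-Zygmund kernels: standard size and regularity bounds with constant `A`,
and vanishing integral against radial functions. -/
structure HK {n : ℕ} (K : E n → ℝ) (A : ℝ) : Prop where
  meas : Measurable K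
  nn : 0 ≤ A
  size : ∀ u, |K u| ≤ A / ‖u‖ ^ n
  reg : ∀ u v, ‖u - v‖ ≤ ‖u‖ / 2 → |K u - K v| ≤ A * ‖u - v‖ / ‖u‖ ^ (n + 1)
  rad : ∀ ρ : ℝ → ℝ, ∫ x, ρ ‖x‖ * K x = 0

lemma exists_HK {n : ℕ} (hn : 0 < n) {Ω : E n → ℝ} (hK : IsCZKernel Ω) :
    ∃ A : ℝ, HK (kernelFn Ω) A := by
  obtain ⟨A, h0, h1, h2⟩ := K_bounds hn hK
  exact ⟨A, K_meas hK, h0, h1, h2, K_rad' hn hK⟩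

/-- The Lipschitz radial cutoff equal to `1` for `t ≤ R` and to `0` for `t ≥ 2R`. -/
def cut (R t : ℝ) : ℝ := max 0 (min 1 (2 - t / R))

lemma cut_nonneg (R t : ℝ) : 0 ≤ cut R t := le_max_left _ _

lemma cut_le_one (R t : ℝ) : cut R t ≤ 1 := max_le zero_le_one (min_le_left _ _)

lemma cut_one {R t : ℝ} (hR : 0 < R) (ht : t ≤ R) : cut R t = 1 := by
  have : t / R ≤ 1 := (div_le_one hR).2 ht
  rw [cut, min_eq_left (by linarith)]; simp

lemma cut_zero {R t : ℝ} (hR : 0 < R) (ht : 2 * R ≤ t) : cut R t = 0 := by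
  have : 2 ≤ t / R := (le_div_iff₀ hR).2 ht
  rw [cut, max_eq_left]
  exact (min_le_right _ _).trans (by linarith)

lemma cut_meas (R : ℝ) : Measurable (cut R) := by unfold cut; fun_prop

lemma cut_lip {R s t : ℝ} (hR : 0 < R) (hs : 0 < s) (hst : |s - t| ≤ s / 2) :
    |cut R s - cut R t| ≤ 4 * |s - t| / s := by
  have h1 : s ≤ 2 * t := by linarith [(abs_le.1 hst).2]
  by_cases h : 4 * R ≤ s
  · rw [cut_zero hR (by linarith), cut_zero hR (by linarith)]
    simp; positivity
  push Not at h
  have h2 : |cut R s - cut R t| ≤ |s - t| / R := by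
    unfold cut
    refine (abs_max_sub_max_le_max _ _ _ _).trans (max_le (by simp; positivity) ?_)
    refine (abs_min_sub_min_le_max _ _ _ _).trans (max_le (by simp; positivity) ?_)
    rw [show 2 - s / R - (2 - t / R) = -((s - t) / R) by ring, abs_neg, abs_div, abs_of_pos hR]
  refine h2.trans ?_
  rw [div_le_div_iff₀ hR hs]
  nlinarith [abs_nonneg (s - t)]

/-- Radial truncations at the inner scale `ε`. -/
structure Cut (ψ : ℝ → ℝ) (ε : ℝ) : Prop where
  pos : 0 < ε
  meas : Measurable ψ
  nn : ∀ t, 0 ≤ ψ t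
  le : ∀ t, ψ t ≤ 1
  zero : ∀ t, t ≤ ε → ψ t = 0
  one : ∀ t, 2 * ε ≤ t → ψ t = 1

lemma Cut.smooth {ε : ℝ} (hε : 0 < ε) : Cut (fun t => 1 - cut ε t) ε where
  pos := hε
  meas := (cut_meas ε).const_sub 1
  nn t := by linarith [cut_le_one ε t]
  le t := by linarith [cut_nonneg ε t]
  zero t ht := by rw [cut_one hε ht, sub_self]
  one t ht := by rw [cut_zero hε ht, sub_zero]

lemma Cut.sharp {ε : ℝ} (hε : 0 < ε) : Cut (fun t => if ε < t then 1 else 0) ε where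
  pos := hε
  meas := Measurable.ite measurableSet_Ioi measurable_const measurable_const
  nn t := by positivity
  le t := by split_ifs <;> norm_num
  zero t ht := by rw [if_neg (not_lt.2 ht)]
  one t ht := by rw [if_pos (by linarith)]

lemma HK.size_cut {n : ℕ} {K : E n → ℝ} {A : ℝ} (hK : HK K A) {χ : ℝ → ℝ} (h1 : ∀ t, |χ t| ≤ 1) (u : E n) :
    |K u * χ ‖u‖| ≤ A / ‖u‖ ^ n := by
  rw [abs_mul]
  calc _ ≤ |K u| * 1 := by gcongr; exact h1 _
    _ ≤ _ := by rw [mul_one]; exact hK.size u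

lemma HK.bdd_cut {n : ℕ} {K : E n → ℝ} {A : ℝ} (hK : HK K A) {χ : ℝ → ℝ} (h1 : ∀ t, |χ t| ≤ 1)
    {a : ℝ} (ha : 0 < a) (h0 : ∀ t, t ≤ a → χ t = 0) (u : E n) : |K u * χ ‖u‖| ≤ A / a ^ n := by
  have hA := hK.nn
  by_cases h : ‖u‖ ≤ a
  · rw [h0 _ h]; simp; positivity
  · push Not at h
    refine (hK.size_cut h1 u).trans ?_
    gcongr

lemma HK.int_cut {n : ℕ} {K : E n → ℝ} {A : ℝ} (hK : HK K A) {χ : ℝ → ℝ} (hχ : Measurable χ) (h1 : ∀ t, |χ t| ≤ 1)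
    {a : ℝ} (ha : 0 < a) (h0 : ∀ t, t ≤ a → χ t = 0) {b : ℝ} (hb : ∀ t, b ≤ t → χ t = 0) :
    Integrable fun u => K u * χ ‖u‖ := by
  have hm : Measurable fun u => K u * χ ‖u‖ := hK.meas.mul (hχ.comp measurable_norm)
  have h2 : IntegrableOn (fun u => K u * χ ‖u‖) (Metric.closedBall (0 : E n) b) := by
    refine IntegrableOn.of_bound Metric.isBounded_closedBall.measure_lt_top hm.aestronglyMeasurable
      (A / a ^ n) (ae_of_all _ fun u => hK.bdd_cut h1 ha h0 u)
  rw [← integrable_indicator_iff Metric.isClosed_closedBall.measurableSet] at h2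
  have : (fun u => K u * χ ‖u‖) =
      (Metric.closedBall (0 : E n) b).indicator (fun u => K u * χ ‖u‖) := by
    ext u
    by_cases h : u ∈ Metric.closedBall (0 : E n) b
    · rw [Set.indicator_of_mem h]
    · rw [Set.indicator_of_notMem h, hb, mul_zero]
      rw [mem_closedBall_zero_iff] at h
      exact (not_le.1 h).le
  rw [this]
  exact h2

/-- The kernel `K` smoothly truncated to `δ ≲ ‖x‖ ≲ R`. -/
def kt {n : ℕ} (K : E n → ℝ) (δ R : ℝ) : E n → ℝ := fun x => K x * (cut R ‖x‖ - cut δ ‖x‖)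

lemma cut_diff_abs (δ R t : ℝ) : |cut R t - cut δ t| ≤ 1 := by
  rw [abs_le]
  constructor <;> linarith [cut_nonneg R t, cut_nonneg δ t, cut_le_one R t, cut_le_one δ t]

/-- The smooth truncations are standard kernels with a constant independent of `δ` and `R`. -/
lemma HK.sk {n : ℕ} {K : E n → ℝ} {A : ℝ} (hK : HK K A) {δ R : ℝ} (hδ : 0 < δ) (hR : 0 < R) :
    SK (kt K δ R) (9 * A) := by
  have hA := hK.nn
  have hm := (cut_meas R).sub (cut_meas δ)
  have h0 : ∀ t, t ≤ min δ R → cut R t - cut δ t = 0 := fun t ht => by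
    rw [cut_one hR (ht.trans (min_le_right _ _)), cut_one hδ (ht.trans (min_le_left _ _)), sub_self]
  have h2 : ∀ t, 2 * max δ R ≤ t → cut R t - cut δ t = 0 := fun t ht => by
    rw [cut_zero hR (by linarith [le_max_right δ R]), cut_zero hδ (by linarith [le_max_left δ R]), sub_self]
  have hmin : 0 < min δ R := lt_min hδ hR
  refine ⟨hK.meas.mul (hm.comp measurable_norm), ⟨_, hK.bdd_cut (cut_diff_abs δ R) hmin h0⟩,
    hK.int_cut hm (cut_diff_abs δ R) hmin h0 h2, fun u => ?_, fun u v huv => ?_, fun ρ hρ hρ1 => ?_⟩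
  · refine (hK.size_cut (cut_diff_abs δ R) u).trans ?_
    gcongr; linarith
  · rcases eq_or_ne u 0 with rfl | hu
    · have : v = 0 := by simpa using huv
      simp [this]
    have hu0 : 0 < ‖u‖ := norm_pos_iff.2 hu
    have hn := abs_norm_sub_norm_le u v
    have c1 := cut_lip hR hu0 (hn.trans huv)
    have c2 := cut_lip hδ hu0 (hn.trans huv)
    have c3 : |(cut R ‖u‖ - cut δ ‖u‖) - (cut R ‖v‖ - cut δ ‖v‖)| ≤ 8 * ‖u - v‖ / ‖u‖ := by
      rw [show (cut R ‖u‖ - cut δ ‖u‖) - (cut R ‖v‖ - cut δ ‖v‖) =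
        (cut R ‖u‖ - cut R ‖v‖) - (cut δ ‖u‖ - cut δ ‖v‖) by ring]
      refine (abs_sub _ _).trans ((add_le_add c1 c2).trans ?_)
      rw [← add_div]
      gcongr
      linarith
    rw [kt, kt, show K u * (cut R ‖u‖ - cut δ ‖u‖) - K v * (cut R ‖v‖ - cut δ ‖v‖) =
      (K u - K v) * (cut R ‖v‖ - cut δ ‖v‖) +
      K u * ((cut R ‖u‖ - cut δ ‖u‖) - (cut R ‖v‖ - cut δ ‖v‖)) by ring]
    refine (abs_add_le _ _).trans ?_
    rw [abs_mul, abs_mul]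
    calc _ ≤ (A * ‖u - v‖ / ‖u‖ ^ (n + 1)) * 1 + (A / ‖u‖ ^ n) * (8 * ‖u - v‖ / ‖u‖) := by
          gcongr
          · exact hK.reg u v huv
          · exact cut_diff_abs _ _ _
          · exact hK.size u
      _ = _ := by
          rw [pow_succ]; field_simp; ring
  · rw [← hK.rad fun t => ρ t * (cut R t - cut δ t)]
    congr 1; ext x
    rw [kt]; ring

/-- The tent function of radius `ε`, an unnormalised Lipschitz mollifier. -/
def tent {n : ℕ} (ε : ℝ) (z : E n) : ℝ := max 0 (1 - ‖z‖ / ε)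

lemma tent_nonneg {n : ℕ} (ε : ℝ) (z : E n) : 0 ≤ tent ε z := le_max_left _ _

lemma tent_le_one {n : ℕ} {ε : ℝ} (hε : 0 < ε) (z : E n) : tent ε z ≤ 1 :=
  max_le zero_le_one (by linarith [div_nonneg (norm_nonneg z) hε.le])

lemma tent_zero {n : ℕ} {ε : ℝ} (hε : 0 < ε) {z : E n} (h : ε ≤ ‖z‖) : tent ε z = 0 := by
  have : 1 ≤ ‖z‖ / ε := (one_le_div hε).2 h
  exact max_eq_left (by linarith)

lemma tent_meas {n : ℕ} (ε : ℝ) : Measurable (tent ε : E n → ℝ) := by unfold tent; fun_prop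

lemma tent_lip {n : ℕ} {ε : ℝ} (hε : 0 < ε) (y u : E n) :
    |tent ε (y - u) - tent ε y| ≤ 1 / ε * ‖u‖ := by
  unfold tent
  refine (abs_max_sub_max_le_max _ _ _ _).trans (max_le (by simp; positivity) ?_)
  rw [show 1 - ‖y - u‖ / ε - (1 - ‖y‖ / ε) = 1 / ε * (‖y‖ - ‖y - u‖) by ring, abs_mul, abs_of_pos (by positivity)]
  gcongr
  refine (abs_norm_sub_norm_le _ _).trans ?_
  simp

lemma tent_fb {n : ℕ} {ε : ℝ} (hε : 0 < ε) : FB (tent ε : E n → ℝ) := by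
  refine ⟨tent_meas ε, ?_, ⟨1, fun x => ?_⟩⟩
  · have h2 : IntegrableOn (tent ε) (Metric.closedBall (0 : E n) ε) := by
      refine IntegrableOn.of_bound Metric.isBounded_closedBall.measure_lt_top
        (tent_meas ε).aestronglyMeasurable 1 (ae_of_all _ fun u => ?_)
      rw [Real.norm_of_nonneg (tent_nonneg _ _)]
      exact tent_le_one hε u
    rw [← integrable_indicator_iff Metric.isClosed_closedBall.measurableSet] at h2
    have : (tent ε : E n → ℝ) = (Metric.closedBall (0 : E n) ε).indicator (tent ε) := by
      ext u
      by_cases h : u ∈ Metric.closedBall (0 : E n) ε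
      · rw [Set.indicator_of_mem h]
      · rw [Set.indicator_of_notMem h, tent_zero hε]
        rw [mem_closedBall_zero_iff] at h
        exact (not_le.1 h).le
    rw [this]
    exact h2
  · rw [abs_of_nonneg (tent_nonneg _ _)]
    exact tent_le_one hε x

/-! ### Cotlar's inequality -/

lemma cT_comm {n : ℕ} (k f : E n → ℝ) (x : E n) : cT k f x = ∫ u, k u * f (x - u) := by
  rw [cT, ← integral_sub_left_eq_self (fun u => k u * f (x - u)) volume x]
  simp

/-- Cancellation against a Lipschitz function: a kernel of size `A / ‖u‖ ^ n` with vanishing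
integral over a ball is integrable against functions that vanish at the origin to first order. -/
lemma osc {n : ℕ} {k h : E n → ℝ} {A L r c : ℝ} (hA : 0 ≤ A) (hr : 0 < r)
    (size : ∀ u, |k u| ≤ A / ‖u‖ ^ n) (hki : IntegrableOn k (Metric.closedBall 0 r))
    (hk0 : ∫ u in Metric.closedBall 0 r, k u = 0)
    (hkh : Integrable fun u => k u * h u) (hh : ∀ u, |h u - c| ≤ L * ‖u‖)
    (hz : ∀ u, r < ‖u‖ → k u * h u = 0) :
    ‖∫ u, k u * h u‖ₑ ≤ ENNReal.ofReal (A * L) * (2 ^ (n + 1) * vn n * ENNReal.ofReal r) := by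
  have e1 : ∫ u, k u * h u = ∫ u in Metric.closedBall 0 r, k u * (h u - c) := by
    have : ∫ u in Metric.closedBall 0 r, k u * h u = ∫ u, k u * h u := by
      refine setIntegral_eq_integral_of_forall_compl_eq_zero fun u hu => hz u ?_
      simpa using hu
    rw [← this]
    have e2 : ∀ u, k u * (h u - c) = k u * h u - k u * c := fun u => by ring
    simp_rw [e2]
    rw [integral_sub hkh.integrableOn (hki.mul_const c), integral_mul_const, hk0]
    simp
  rw [e1]
  refine (enorm_integral_le_lintegral_enorm _).trans ?_
  refine le_trans ?_ (mul_le_mul_right (annuli_near hr) _)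
  rw [← lintegral_const_mul _ (by fun_prop)]
  refine lintegral_mono fun u => ?_
  rw [← ofReal_norm, ← ENNReal.ofReal_mul']
  · refine ENNReal.ofReal_le_ofReal ?_
    rw [norm_mul, Real.norm_eq_abs, Real.norm_eq_abs]
    calc _ ≤ (A / ‖u‖ ^ n) * (L * ‖u‖) := by
          gcongr
          · exact size u
          · exact hh u
      _ = _ := by ring
  · positivity

lemma tent_int_lower {n : ℕ} {ε : ℝ} (hε : 0 < ε) :
    ENNReal.ofReal ε ^ n * vn n ≤ 2 ^ (n + 1) * ENNReal.ofReal (∫ z : E n, tent ε z) := by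
  have h : ENNReal.ofReal (∫ z : E n, tent ε z) = ∫⁻ z : E n, ENNReal.ofReal (tent ε z) :=
    ofReal_integral_eq_lintegral_ofReal (tent_fb hε).int (ae_of_all _ fun z => tent_nonneg _ _)
  rw [h]
  have h2 : 2⁻¹ * volume (Metric.closedBall (0 : E n) (ε / 2)) ≤ ∫⁻ z : E n, ENNReal.ofReal (tent ε z) := by
    refine le_trans ?_ (setLIntegral_le_lintegral (Metric.closedBall (0 : E n) (ε / 2)) _)
    rw [← setLIntegral_const]
    refine setLIntegral_mono' Metric.isClosed_closedBall.measurableSet fun z hz => ?_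
    rw [mem_closedBall_zero_iff] at hz
    have : (2⁻¹ : ℝ) ≤ tent ε z := by
      refine le_trans ?_ (le_max_right _ _)
      have : ‖z‖ / ε ≤ 1 / 2 := by rw [div_le_div_iff₀ hε two_pos]; linarith
      linarith
    refine le_trans (le_of_eq ?_) (ENNReal.ofReal_le_ofReal this)
    rw [ENNReal.ofReal_inv_of_pos two_pos]; simp
  refine le_trans (le_of_eq ?_) (mul_le_mul_right h2 _)
  have h22 : (2 : ℝ≥0∞) * 2⁻¹ = 1 := ENNReal.mul_inv_cancel two_ne_zero (by simp)
  have h2n : (2 : ℝ≥0∞) ^ n * ENNReal.ofReal (ε / 2) ^ n = ENNReal.ofReal ε ^ n := by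
    rw [← mul_pow, ← ENNReal.ofReal_ofNat, ← ENNReal.ofReal_mul (by norm_num)]
    congr 2; ring
  rw [volume_cball _ (by positivity), pow_succ, ← h2n]
  calc _ = (2 : ℝ≥0∞) * 2⁻¹ * (2 ^ n * ENNReal.ofReal (ε / 2) ^ n * vn n) := by rw [h22, one_mul]
    _ = _ := by ring

lemma tent_int_upper {n : ℕ} {ε : ℝ} (hε : 0 < ε) :
    ∫⁻ z : E n, ‖tent ε z‖ₑ ≤ ENNReal.ofReal ε ^ n * vn n := by
  rw [← volume_cball (0 : E n) hε.le]
  have : ∀ z : E n, ‖tent ε z‖ₑ ≤ (Metric.closedBall (0 : E n) ε).indicator (fun _ => 1) z := by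
    intro z
    by_cases h : z ∈ Metric.closedBall (0 : E n) ε
    · rw [Set.indicator_of_mem h, ← ofReal_norm, Real.norm_of_nonneg (tent_nonneg _ _)]
      exact ENNReal.ofReal_le_one.2 (tent_le_one hε z)
    · rw [tent_zero hε]
      · simp
      · rw [mem_closedBall_zero_iff] at h; exact (not_le.1 h).le
  refine (lintegral_mono this).trans ?_
  rw [lintegral_indicator Metric.isClosed_closedBall.measurableSet]
  simp

/-- Mollifying `cT k f` by `τ` amounts to convolving `f` with the mollified kernel, by Fubini. -/
lemma cT_assoc {n : ℕ} {k τ f : E n → ℝ} (hk : Measurable k) (hb : ∃ B : ℝ, ∀ x, |k x| ≤ B)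
    (hτ : FB τ) (hf : FB f) (x : E n) : ∫ y, τ (x - y) * cT k f y = cT (cT k τ) f x := by
  have e1 : ∀ y, τ (x - y) * cT k f y = ∫ w, τ (x - y) * (k (y - w) * f w) := fun y => by
    rw [cT, integral_const_mul]
  have e2 : ∀ w, cT k τ (x - w) * f w = ∫ y, τ (x - y) * (k (y - w) * f w) := fun w => by
    rw [cT, ← integral_mul_const,
      ← integral_sub_left_eq_self (fun y => k (x - w - y) * τ y * f w) volume x]
    congr 1; ext y
    rw [show x - w - (x - y) = y - w by abel]; ring
  rw [cT]
  simp_rw [e1, e2]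
  refine integral_integral_swap ?_
  obtain ⟨B, hB⟩ := hb
  have h1 : Integrable (fun z : E n × E n => τ (x - z.1) * f z.2) (volume.prod volume) :=
    (hτ.int.comp_sub_left x).mul_prod hf.int
  have hkm : Measurable fun z : E n × E n => k (z.1 - z.2) :=
    hk.comp (measurable_fst.sub measurable_snd)
  have h2 := h1.bdd_mul (c := B) (f := fun z => k (z.1 - z.2)) hkm.aestronglyMeasurable
    (Eventually.of_forall fun y => hB _)
  have : (Function.uncurry fun y w => τ (x - y) * (k (y - w) * f w)) =
      fun z : E n × E n => k (z.1 - z.2) * (τ (x - z.1) * f z.2) := by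
    ext z; simp [Function.uncurry]; ring
  rw [this]
  exact h2

/-- The kernel truncated by `ψ` near the origin and smoothly cut off at infinity. -/
def kψ {n : ℕ} (K : E n → ℝ) (ψ : ℝ → ℝ) (R : ℝ) : E n → ℝ := fun x => K x * (ψ ‖x‖ * cut R ‖x‖)

lemma Cut.abs_le {ψ : ℝ → ℝ} {ε : ℝ} (h : Cut ψ ε) (R t : ℝ) : |ψ t * cut R t| ≤ 1 := by
  rw [abs_mul, abs_of_nonneg (h.nn t), abs_of_nonneg (cut_nonneg R t)]
  exact mul_le_one₀ (h.le t) (cut_nonneg R t) (cut_le_one R t)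

lemma kψ_meas {n : ℕ} {K : E n → ℝ} {A : ℝ} (hK : HK K A) {ψ : ℝ → ℝ} {ε : ℝ} (h : Cut ψ ε) (R : ℝ) :
    Measurable (kψ K ψ R) :=
  hK.meas.mul ((h.meas.mul (cut_meas R)).comp measurable_norm)

lemma kψ_bdd {n : ℕ} {K : E n → ℝ} {A : ℝ} (hK : HK K A) {ψ : ℝ → ℝ} {ε : ℝ} (h : Cut ψ ε) (R : ℝ)
    (u : E n) : |kψ K ψ R u| ≤ A / ε ^ n :=
  hK.bdd_cut (χ := fun t => ψ t * cut R t) (h.abs_le R) h.pos (fun t ht => by simp [h.zero t ht]) u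

/-- The constant in Cotlar's inequality. -/
def C6 (n : ℕ) (A : ℝ) : ℝ≥0∞ :=
  2 ^ (n + 1) * (1 + (ENNReal.ofReal A * vn n + ENNReal.ofReal (9 * A) * (2 ^ (n + 1) * vn n) * 5) * 4 ^ n
    + ENNReal.ofReal (9 * A) * (2 ^ (n + 1) * vn n))

lemma C6_ne_top (n : ℕ) (A : ℝ) : C6 n A ≠ ⊤ := by
  have := vn_ne_top n
  unfold C6
  finiteness

/-- The difference between `ψ`-truncation and the mollified kernel, near the origin. -/
lemma moll_near {n : ℕ} {K : E n → ℝ} {A : ℝ} (hK : HK K A) {ψ : ℝ → ℝ} {ε δ R : ℝ}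
    (h : Cut ψ ε) (hδ : 0 < δ) (hR : 0 < R) (u : E n) (hu : ‖u‖ ≤ 4 * ε) :
    ‖(∫ z : E n, tent ε z) * kψ K ψ R u - cT (kt K δ R) (tent ε) u‖ₑ ≤
      ENNReal.ofReal A * vn n + ENNReal.ofReal (9 * A) * (2 ^ (n + 1) * vn n) * 5 := by
  have hε := h.pos
  have hA := hK.nn
  have sk := hK.sk hδ hR
  refine (enorm_sub_le).trans (add_le_add ?_ ?_)
  · rw [enorm_mul]
    have h1 : ‖∫ z : E n, tent ε z‖ₑ ≤ ENNReal.ofReal ε ^ n * vn n :=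
      (enorm_integral_le_lintegral_enorm _).trans (tent_int_upper hε)
    have h2 : ‖kψ K ψ R u‖ₑ ≤ ENNReal.ofReal (A / ε ^ n) := by
      rw [← ofReal_norm]; exact ENNReal.ofReal_le_ofReal (kψ_bdd hK h R u)
    refine (mul_le_mul' h1 h2).trans (le_of_eq ?_)
    rw [← ENNReal.ofReal_pow hε.le, mul_right_comm, ← ENNReal.ofReal_mul (by positivity)]
    congr 2; field_simp
  · rw [cT_comm]
    refine (osc (r := 5 * ε) (L := 1 / ε) (c := tent ε u) (by positivity : 0 ≤ 9 * A) (by positivity) sk.size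
      sk.int.integrableOn ?_ ?_ (fun z => tent_lip hε u z) ?_).trans (le_of_eq ?_)
    · have := sk.rad (fun t => if t ≤ 5 * ε then 1 else 0)
        (Measurable.ite measurableSet_Iic measurable_const measurable_const)
        (fun t => by split_ifs <;> simp)
      rw [← integral_indicator Metric.isClosed_closedBall.measurableSet, ← this]
      congr 1; ext z
      by_cases hz : ‖z‖ ≤ 5 * ε
      · rw [Set.indicator_of_mem (mem_closedBall_zero_iff.2 hz), if_pos hz, one_mul]
      · rw [Set.indicator_of_notMem (fun h => hz (mem_closedBall_zero_iff.1 h)), if_neg hz, zero_mul]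
    · exact ((sk.int.mul_bdd (c := 1) ((tent_meas ε).comp (measurable_const.sub measurable_id)).aestronglyMeasurable
        (Eventually.of_forall fun z => by
          rw [Real.norm_of_nonneg (tent_nonneg _ _)]; exact tent_le_one hε _)))
    · intro z hz
      rw [tent_zero hε, mul_zero]
      have := norm_sub_norm_le z u
      rw [norm_sub_rev] at this
      linarith
    · have e : ENNReal.ofReal (9 * A * (1 / ε)) * ENNReal.ofReal (5 * ε) = ENNReal.ofReal (9 * A) * 5 := by
        rw [← ENNReal.ofReal_mul (by positivity), ← ENNReal.ofReal_ofNat, ← ENNReal.ofReal_mul (by positivity)]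
        congr 1; field_simp
      calc _ = (ENNReal.ofReal (9 * A * (1 / ε)) * ENNReal.ofReal (5 * ε)) * (2 ^ (n + 1) * vn n) := by ring
        _ = _ := by rw [e]; ring

/-- The same difference away from the origin: the two truncations of `K` coincide there, and the
regularity of the kernel gains a factor `ε / ‖u‖`. -/
lemma moll_far {n : ℕ} {K : E n → ℝ} {A : ℝ} (hK : HK K A) {ψ : ℝ → ℝ} {ε δ R : ℝ}
    (h : Cut ψ ε) (hδ : 0 < δ) (hδε : δ ≤ ε) (hR : 0 < R) (u : E n) (hu : 4 * ε ≤ ‖u‖) :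
    ‖(∫ z : E n, tent ε z) * kψ K ψ R u - cT (kt K δ R) (tent ε) u‖ₑ ≤
      ENNReal.ofReal ε ^ n * vn n * (ENNReal.ofReal (9 * A) * ENNReal.ofReal (4 * ε / ‖u‖ ^ (n + 1))) := by
  have hε := h.pos
  have hA := hK.nn
  have sk := hK.sk hδ hR
  have e : kψ K ψ R u = kt K δ R u := by
    rw [kψ, kt, h.one _ (by linarith), cut_zero hδ (by linarith), one_mul, sub_zero]
  have e2 : (∫ z : E n, tent ε z) * kψ K ψ R u - cT (kt K δ R) (tent ε) u =
      ∫ z, (kt K δ R u - kt K δ R (u - z)) * tent ε z := by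
    simp_rw [sub_mul]
    rw [integral_sub, e, mul_comm, ← integral_const_mul]
    · rfl
    · exact (tent_fb hε).int.const_mul _
    · exact cT_int sk.meas sk.bdd (tent_fb hε).int u
  rw [e2]
  refine (enorm_integral_le_lintegral_enorm _).trans ?_
  refine le_trans ?_ (mul_le_mul_left (tent_int_upper hε) _)
  rw [← lintegral_mul_const _ (tent_meas ε).enorm]
  refine lintegral_mono fun z => ?_
  by_cases hz : ε ≤ ‖z‖
  · rw [tent_zero hε hz]; simp
  · push Not at hz
    rw [enorm_mul, mul_comm]
    gcongr
    rw [← ENNReal.ofReal_mul (by positivity), ← ofReal_norm]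
    refine ENNReal.ofReal_le_ofReal ?_
    refine (sk.reg u (u - z) (by rw [_root_.sub_sub_cancel]; linarith)).trans ?_
    rw [_root_.sub_sub_cancel, mul_div_assoc]
    gcongr
    linarith

/-- Cotlar's inequality: truncations are dominated by the maximal function of a fixed smoother
truncation plus the maximal function of `f`. -/
lemma cotlar {n : ℕ} {K : E n → ℝ} {A : ℝ} (hK : HK K A) {ψ : ℝ → ℝ} {ε δ R : ℝ}
    (h : Cut ψ ε) (hδ : 0 < δ) (hδε : δ ≤ ε) (hR : 0 < R) {f : E n → ℝ} (hf : FB f) (x : E n) :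
    ‖cT (kψ K ψ R) f x‖ₑ ≤
      C6 n A * (bmax (fun y => ‖cT (kt K δ R) f y‖ₑ) x + bmax (fun y => ‖f y‖ₑ) x) := by
  have hε := h.pos
  have sk := hK.sk hδ hR
  set k := kt K δ R
  set c := ∫ z : E n, tent ε z
  set N := ENNReal.ofReal ε ^ n * vn n with hN
  set b1 := bmax (fun y => ‖cT k f y‖ₑ) x
  set b2 := bmax (fun y => ‖f y‖ₑ) x
  set D := fun u => c * kψ K ψ R u - cT k (tent ε) u with hD
  have hkψm := kψ_meas hK h R
  have hτm : Measurable (cT k (tent ε)) := cT_meas sk.meas (tent_meas ε)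
  have hτb : ∃ B : ℝ, ∀ u, |cT k (tent ε) u| ≤ B := by
    obtain ⟨B, hB⟩ := sk.bdd
    refine ⟨∫ z : E n, B * tent ε z, fun u => ?_⟩
    refine (norm_integral_le_integral_norm (fun y => k (u - y) * tent ε y)).trans ?_
    refine integral_mono (cT_int sk.meas sk.bdd (tent_fb hε).int u).norm ((tent_fb hε).int.const_mul _) fun z => ?_
    simp only [norm_mul, Real.norm_of_nonneg (tent_nonneg ε z)]
    exact mul_le_mul_of_nonneg_right (hB _) (tent_nonneg _ _)
  have e1 : c * cT (kψ K ψ R) f x = cT D f x + ∫ y, tent ε (x - y) * cT k f y := by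
    rw [cT_assoc sk.meas sk.bdd (tent_fb hε) hf, cT, cT, cT, ← integral_const_mul, ← integral_add]
    · congr 1; ext y; simp only [hD]; ring
    · have := (cT_int hkψm ⟨_, kψ_bdd hK h R⟩ hf.int x).const_mul c
      have h2 := cT_int hτm hτb hf.int x
      have e : (fun y => D (x - y) * f y) = fun y => c * (kψ K ψ R (x - y) * f y) - cT k (tent ε) (x - y) * f y := by
        ext y; simp only [hD]; ring
      rw [e]; exact this.sub h2
    · exact cT_int hτm hτb hf.int x
  have i1 : ‖∫ y, tent ε (x - y) * cT k f y‖ₑ ≤ N * b1 := by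
    refine le_trans ?_ (lintegral_cball_le _ x hε)
    refine (enorm_integral_le_lintegral_enorm _).trans ?_
    rw [← lintegral_indicator Metric.isClosed_closedBall.measurableSet]
    refine lintegral_mono fun y => ?_
    by_cases hy : y ∈ Metric.closedBall x ε
    · rw [Set.indicator_of_mem hy, enorm_mul]
      refine (mul_le_mul_left ?_ _).trans (one_mul _).le
      rw [← ofReal_norm, Real.norm_of_nonneg (tent_nonneg _ _)]
      exact ENNReal.ofReal_le_one.2 (tent_le_one hε _)
    · rw [Set.indicator_of_notMem hy, tent_zero hε]
      · simp
      · rw [Metric.mem_closedBall, dist_comm, dist_eq_norm] at hy; exact (not_le.1 hy).le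
  set d0 := ENNReal.ofReal A * vn n + ENNReal.ofReal (9 * A) * (2 ^ (n + 1) * vn n) * 5 with hd0
  have i2 : ‖cT D f x‖ₑ ≤ d0 * (4 ^ n * N * b2) + N * ENNReal.ofReal (9 * A) * (2 ^ (n + 1) * vn n * b2) := by
    have j1 := lintegral_cball_le (fun y => ‖f y‖ₑ) x (r := 4 * ε) (by positivity)
    have j2 := annuli_far (fun y => ‖f y‖ₑ) hf.meas.enorm x (δ := 4 * ε) (by positivity)
    have e4 : ENNReal.ofReal (4 * ε) ^ n * vn n = 4 ^ n * N := by
      rw [ENNReal.ofReal_mul (by norm_num), mul_pow, ENNReal.ofReal_ofNat, mul_assoc]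
    rw [e4] at j1
    refine le_trans ?_ (add_le_add (mul_le_mul_right j1 _) (mul_le_mul_right j2 _))
    have hms : MeasurableSet {y : E n | 4 * ε ≤ ‖x - y‖} :=
      measurableSet_le measurable_const (by fun_prop)
    rw [← lintegral_const_mul _ hf.meas.enorm, ← lintegral_const_mul _ (by have := hf.meas.enorm; fun_prop),
      ← lintegral_indicator Metric.isClosed_closedBall.measurableSet, ← lintegral_indicator hms,
      ← lintegral_add_left ((hf.meas.enorm.const_mul d0).indicator Metric.isClosed_closedBall.measurableSet)]
    refine (enorm_integral_le_lintegral_enorm _).trans (lintegral_mono fun y => ?_)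
    rw [enorm_mul]
    rcases le_total ‖x - y‖ (4 * ε) with hy | hy
    · refine le_trans ?_ le_self_add
      rw [Set.indicator_of_mem (by rwa [Metric.mem_closedBall, dist_comm, dist_eq_norm])]
      gcongr
      exact moll_near hK h hδ hR _ hy
    · refine le_trans ?_ le_add_self
      have hm : y ∈ {y : E n | 4 * ε ≤ ‖x - y‖} := hy
      rw [Set.indicator_of_mem hm, ← mul_assoc, mul_assoc N]
      gcongr
      exact moll_far hK h hδ hδε hR _ hy
  have hc : N ≤ 2 ^ (n + 1) * ‖c‖ₑ := by
    have : ‖c‖ₑ = ENNReal.ofReal c := by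
      rw [← ofReal_norm, Real.norm_of_nonneg (integral_nonneg fun z => tent_nonneg _ _)]
    rw [this]
    exact tent_int_lower hε
  have hN0 : N ≠ 0 := mul_ne_zero (pow_ne_zero _ (by simpa using hε)) (vn_ne_zero n)
  have hNt : N ≠ ⊤ := ENNReal.mul_ne_top (by finiteness) (vn_ne_top n)
  rw [← ENNReal.mul_le_mul_iff_right hN0 hNt]
  calc N * ‖cT (kψ K ψ R) f x‖ₑ ≤ 2 ^ (n + 1) * ‖c‖ₑ * ‖cT (kψ K ψ R) f x‖ₑ := by gcongr
    _ = 2 ^ (n + 1) * ‖c * cT (kψ K ψ R) f x‖ₑ := by rw [enorm_mul, mul_assoc]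
    _ ≤ 2 ^ (n + 1) * ((d0 * (4 ^ n * N * b2) + N * ENNReal.ofReal (9 * A) * (2 ^ (n + 1) * vn n * b2)) + N * b1) := by
        rw [e1]; gcongr
        exact (enorm_add_le _ _).trans (add_le_add i2 i1)
    _ = N * (2 ^ (n + 1) * (1 * b1 + (d0 * 4 ^ n + ENNReal.ofReal (9 * A) * (2 ^ (n + 1) * vn n)) * b2)) := by ring
    _ ≤ N * (2 ^ (n + 1) * ((1 + d0 * 4 ^ n + ENNReal.ofReal (9 * A) * (2 ^ (n + 1) * vn n)) * b1 +
          (1 + d0 * 4 ^ n + ENNReal.ofReal (9 * A) * (2 ^ (n + 1) * vn n)) * b2)) := by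
        gcongr
        · rw [add_assoc]; exact le_self_add
        · exact le_add_self
    _ = N * (C6 n A * (b1 + b2)) := by rw [C6, ← hd0]; ring

/-! ### Almost everywhere existence of the principal value -/

/-- Weak type `(2,2)` of the maximal function, deduced from weak type `(1,1)` applied to `F ^ 2` by
means of `F ≤ s + F ^ 2 / s`. -/
lemma bmax_weak2 {n : ℕ} (hn : 0 < n) (F : E n → ℝ≥0∞) {s : ℝ≥0∞}
    (hs : s ≠ 0) (hs' : s ≠ ⊤) : s ^ 2 * volume {x | 2 * s < bmax F x} ≤ 4 ^ n * ∫⁻ y, F y ^ 2 := by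
  by_cases hF : ∫⁻ y, F y ^ 2 = ⊤
  · rw [hF, ENNReal.mul_top (by positivity)]; exact le_top
  refine le_trans ?_ (bmax_weak hn (fun y => F y ^ 2) hF (pow_ne_zero 2 hs) (ENNReal.pow_ne_top hs'))
  refine mul_le_mul_right (measure_mono fun x hx => ?_) _
  rw [Set.mem_ofPred_eq] at hx ⊢
  have hss : s⁻¹ * s = 1 := ENNReal.inv_mul_cancel hs hs'
  have hp : ∀ a : ℝ≥0∞, a ≤ s + s⁻¹ * a ^ 2 := fun a => by
    rcases le_total a s with h | h
    · exact h.trans le_self_add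
    · refine le_trans ?_ le_add_self
      calc a = s⁻¹ * (s * a) := by rw [← mul_assoc, hss, one_mul]
        _ ≤ s⁻¹ * (a * a) := by gcongr
        _ = _ := by rw [sq]
  have hb : bmax F x ≤ s + s⁻¹ * bmax (fun y => F y ^ 2) x := by
    refine iSup₂_le fun r hr => ?_
    have hv0 := (Metric.measure_closedBall_pos volume x hr).ne'
    have hvt := (Metric.isBounded_closedBall (x := x) (r := r)).measure_lt_top (μ := volume).ne
    rw [ENNReal.div_le_iff hv0 hvt]
    refine (lintegral_mono fun y => hp (F y)).trans ?_
    rw [lintegral_add_left measurable_const, lintegral_const_mul' _ _ (ENNReal.inv_ne_top.2 hs), setLIntegral_const,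
      add_mul, mul_assoc]
    gcongr
    rw [volume_cball x hr.le, mul_comm (bmax _ _)]
    exact lintegral_cball_le (fun y => F y ^ 2) x hr
  have h1 : s + s < s + s⁻¹ * bmax (fun y => F y ^ 2) x := by
    rw [← two_mul]; exact hx.trans_le hb
  have h2 := lt_of_add_lt_add_left h1
  calc s ^ 2 = s * s := sq s
    _ < s * (s⁻¹ * bmax (fun y => F y ^ 2) x) := (ENNReal.mul_lt_mul_iff_right hs hs').2 h2
    _ = _ := by rw [← mul_assoc, ENNReal.mul_inv_cancel hs hs', one_mul]

/-- The uniform Calderón-Zygmund constant of all truncations of a kernel with constant `A`. -/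
def CA (n : ℕ) (A : ℝ) : NNReal := (9 * A).toNNReal + (9 * A).toNNReal * (C5 n).toNNReal

lemma HK.czk {n : ℕ} {K : E n → ℝ} {A : ℝ} (hK : HK K A) {δ R : ℝ} (hδ : 0 < δ) (hR : 0 < R) :
    CZK (kt K δ R) (CA n A) :=
  (hK.sk hδ hR).czk (by have := hK.nn; positivity)

lemma C6_ne_zero (n : ℕ) (A : ℝ) : C6 n A ≠ 0 := by
  unfold C6
  refine mul_ne_zero (by positivity) ?_
  rw [add_assoc]
  exact ne_of_gt (zero_lt_one.trans_le le_self_add)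

/-- The weak type `(2,2)` bound for the maximal truncation. -/
lemma max_trunc {n : ℕ} (hn : 0 < n) {K : E n → ℝ} {A : ℝ} (hK : HK K A) {R : ℝ} (hR : 0 < R)
    {f : E n → ℝ} (hf : FB f) {s : ℝ≥0∞} (hs : s ≠ 0) (hs' : s ≠ ⊤) :
    s ^ 2 * volume {x | ∃ ψ ε, Cut ψ ε ∧ C6 n A * (4 * s) < ‖cT (kψ K ψ R) f x‖ₑ} ≤
      4 ^ n * ((CA n A : ℝ≥0∞) ^ 2 + 1) * ∫⁻ x, ‖f x‖ₑ ^ 2 := by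
  set S : ℕ → Set (E n) := fun N => {x | ∃ ψ ε, Cut ψ ε ∧ 1 / ((N : ℝ) + 1) ≤ ε ∧ C6 n A * (4 * s) < ‖cT (kψ K ψ R) f x‖ₑ} with hS
  have hmono : Monotone S := by
    rintro N M hNM x ⟨ψ, ε, h1, h2, h3⟩
    refine ⟨ψ, ε, h1, le_trans ?_ h2, h3⟩
    have : (N : ℝ) ≤ M := by exact_mod_cast hNM
    gcongr
  have hU : {x | ∃ ψ ε, Cut ψ ε ∧ C6 n A * (4 * s) < ‖cT (kψ K ψ R) f x‖ₑ} ⊆ ⋃ N, S N := by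
    rintro x ⟨ψ, ε, h1, h3⟩
    obtain ⟨N, hN⟩ := exists_nat_one_div_lt h1.pos
    exact mem_iUnion.2 ⟨N, ψ, ε, h1, hN.le, h3⟩
  refine (mul_le_mul_right (measure_mono hU) _).trans ?_
  rw [hmono.measure_iUnion, ENNReal.mul_iSup]
  refine iSup_le fun N => ?_
  set δ : ℝ := 1 / ((N : ℝ) + 1) with hδ
  have hδ0 : 0 < δ := by positivity
  have hsub : S N ⊆ {x | 2 * s < bmax (fun y => ‖cT (kt K δ R) f y‖ₑ) x} ∪ {x | 2 * s < bmax (fun y => ‖f y‖ₑ) x} := by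
    rintro x ⟨ψ, ε, h1, h2, h3⟩
    have h4 := h3.trans_le (cotlar hK h1 hδ0 h2 hR hf x)
    have h5 := (ENNReal.mul_lt_mul_iff_right (C6_ne_zero n A) (C6_ne_top n A)).1 h4
    by_contra hcon
    rw [mem_union, not_or, Set.mem_ofPred_eq, Set.mem_ofPred_eq, not_lt, not_lt] at hcon
    refine absurd h5 (not_lt.2 ((add_le_add hcon.1 hcon.2).trans (le_of_eq ?_)))
    ring
  calc s ^ 2 * volume (S N) ≤ s ^ 2 * (volume {x | 2 * s < bmax (fun y => ‖cT (kt K δ R) f y‖ₑ) x} +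
        volume {x | 2 * s < bmax (fun y => ‖f y‖ₑ) x}) := by
        gcongr; exact (measure_mono hsub).trans (measure_union_le _ _)
    _ ≤ (4 ^ n * ∫⁻ y, ‖cT (kt K δ R) f y‖ₑ ^ 2) + 4 ^ n * ∫⁻ y, ‖f y‖ₑ ^ 2 := by
        rw [mul_add]
        exact add_le_add (bmax_weak2 hn _ hs hs') (bmax_weak2 hn _ hs hs')
    _ ≤ 4 ^ n * ((CA n A : ℝ≥0∞) ^ 2 * ∫⁻ y, ‖f y‖ₑ ^ 2) + 4 ^ n * ∫⁻ y, ‖f y‖ₑ ^ 2 := by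
        gcongr
        exact (hK.czk hδ0 hR).l2 f hf.meas hf.int hf.bdd
    _ = _ := by ring

/-- Truncations of the singular integral of a Lipschitz function are Cauchy, uniformly in `x`. -/
lemma cauchy_lip {n : ℕ} {K : E n → ℝ} {A : ℝ} (hK : HK K A) {R : ℝ}
    {g : E n → ℝ} (hg : FB g) {L : NNReal} (hL : LipschitzWith L g) (x : E n) {a : ℝ} {ψ ψ' : ℝ → ℝ} {ε ε' : ℝ}
    (h : Cut ψ ε) (h' : Cut ψ' ε') (ha : ε < a) (ha' : ε' < a) :
    ‖cT (kψ K ψ R) g x - cT (kψ K ψ' R) g x‖ₑ ≤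
      ENNReal.ofReal (A * L) * (2 ^ (n + 1) * vn n * ENNReal.ofReal (2 * a)) := by
  set χ : ℝ → ℝ := fun t => ψ t * cut R t - ψ' t * cut R t with hχ
  have hχm : Measurable χ := (h.meas.mul (cut_meas R)).sub (h'.meas.mul (cut_meas R))
  have hχ1 : ∀ t, |χ t| ≤ 1 := fun t => by
    have a1 := h.abs_le R t
    have a2 := h'.abs_le R t
    have b1 := mul_nonneg (h.nn t) (cut_nonneg R t)
    have b2 := mul_nonneg (h'.nn t) (cut_nonneg R t)
    rw [abs_le] at *
    constructor <;> simp only [hχ] <;> linarith [a1.2, a2.2]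
  have hε := h.pos
  have hε' := h'.pos
  have hm : 0 < min ε ε' := lt_min hε hε'
  have hχ0 : ∀ t, t ≤ min ε ε' → χ t = 0 := fun t ht => by
    simp only [hχ]
    rw [h.zero t (ht.trans (min_le_left _ _)), h'.zero t (ht.trans (min_le_right _ _))]; ring
  have hχ2 : ∀ t, 2 * a ≤ t → χ t = 0 := fun t ht => by
    simp only [hχ]
    rw [h.one t (by linarith), h'.one t (by linarith)]; ring
  have hi := hK.int_cut hχm hχ1 hm hχ0 hχ2
  have e : cT (kψ K ψ R) g x - cT (kψ K ψ' R) g x = ∫ u, (K u * χ ‖u‖) * g (x - u) := by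
    rw [cT, cT, ← integral_sub (cT_int (kψ_meas hK h R) ⟨_, kψ_bdd hK h R⟩ hg.int x)
      (cT_int (kψ_meas hK h' R) ⟨_, kψ_bdd hK h' R⟩ hg.int x),
      ← integral_sub_left_eq_self (fun u => (K u * χ ‖u‖) * g (x - u)) volume x]
    congr 1; ext y
    simp only [kψ, hχ, _root_.sub_sub_cancel]; ring
  rw [e]
  obtain ⟨B, hB⟩ := hg.bdd
  refine osc (c := g x) hK.nn (by linarith) (fun u => hK.size_cut hχ1 u) hi.integrableOn ?_ ?_ ?_ ?_
  · rw [← hK.rad χ]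
    rw [setIntegral_eq_integral_of_forall_compl_eq_zero]
    · congr 1; ext u; ring
    · intro u hu
      rw [hχ2, mul_zero]
      rw [mem_closedBall_zero_iff] at hu
      exact (not_le.1 hu).le
  · exact hi.mul_bdd (c := B) (hg.meas.comp (measurable_const.sub measurable_id)).aestronglyMeasurable
      (Eventually.of_forall fun u => hB _)
  · intro u
    have := hL.dist_le_mul (x - u) x
    rw [Real.dist_eq, dist_eq_norm] at this
    simpa using this
  · intro u hu
    rw [hχ2 _ hu.le]; ring

/-- Bounded integrable functions are approximated in `L²` by Lipschitz ones of the same kind. -/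
lemma exists_lip {n : ℕ} {f : E n → ℝ} (hf : FB f) {η : ℝ≥0∞} (hη : η ≠ 0) :
    ∃ g : E n → ℝ, FB g ∧ (∃ L, LipschitzWith L g) ∧ ∫⁻ x, ‖f x - g x‖ₑ ^ 2 ≤ η := by
  obtain ⟨B, hB⟩ := hf.bdd
  have hf2 : MemLp f 2 := by
    refine ⟨hf.meas.aestronglyMeasurable, ?_⟩
    have h1 : eLpNorm f 2 volume ^ 2 ≠ ⊤ := by
      rw [eLpNorm_two_sq]
      refine ne_top_of_le_ne_top (ENNReal.mul_ne_top (a := ENNReal.ofReal B) ENNReal.ofReal_ne_top hf.int.2.ne)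
        (bdd_sq hf.meas (ae_of_all _ fun x => ?_))
      rw [← ofReal_norm]
      exact ENNReal.ofReal_le_ofReal (hB x)
    exact lt_of_le_of_ne le_top fun h => h1 (by rw [h]; simp)
  obtain ⟨ζ, hζ0, hζ⟩ : ∃ ζ : ℝ, 0 < ζ ∧ ENNReal.ofReal ζ ^ 2 ≤ η := by
    obtain ⟨m, hm⟩ := ENNReal.exists_inv_nat_lt hη
    have hm0 : (0 : ℝ) < (m : ℝ) + 1 := by positivity
    refine ⟨((m : ℝ) + 1)⁻¹, by positivity, ?_⟩
    have h1 : ENNReal.ofReal ((m : ℝ) + 1)⁻¹ ≤ (m : ℝ≥0∞)⁻¹ := by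
      rw [ENNReal.ofReal_inv_of_pos hm0]
      refine ENNReal.inv_le_inv.2 ?_
      rw [ENNReal.ofReal_add (by positivity) zero_le_one, ENNReal.ofReal_natCast]
      exact le_self_add
    have h2 : ENNReal.ofReal ((m : ℝ) + 1)⁻¹ ≤ 1 :=
      ENNReal.ofReal_le_one.2 (inv_le_one_of_one_le₀ (by linarith [(Nat.cast_nonneg m : (0 : ℝ) ≤ m)]))
    calc _ ≤ 1 * (m : ℝ≥0∞)⁻¹ := by rw [sq]; gcongr
      _ ≤ η := by rw [one_mul]; exact hm.le
  obtain ⟨g, hg1, hg2, hg3⟩ := MemLp.exist_eLpNorm_sub_le (by norm_num) (by norm_num) hf2 hζ0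
  obtain ⟨C, hC⟩ := hg1.exists_bound_of_continuous hg2.continuous
  refine ⟨g, ⟨hg2.continuous.measurable, hg2.continuous.integrable_of_hasCompactSupport hg1,
    ⟨C, hC⟩⟩, ⟨_, (ContDiff.lipschitzWith_of_hasCompactSupport hg1 hg2 (by simp)).choose_spec⟩, ?_⟩
  have := eLpNorm_two_sq (f - g)
  simp only [Pi.sub_apply] at this
  rw [← this]
  exact (pow_le_pow_left' hg3 2).trans hζ

lemma cT_sub {n : ℕ} {K : E n → ℝ} {A : ℝ} (hK : HK K A) {R : ℝ} {ψ : ℝ → ℝ} {ε : ℝ} (h : Cut ψ ε)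
    {f g : E n → ℝ} (hf : FB f) (hg : FB g) (x : E n) :
    cT (kψ K ψ R) f x = cT (kψ K ψ R) g x + cT (kψ K ψ R) (fun y => f y - g y) x := by
  have e : ∀ y, kψ K ψ R (x - y) * (f y - g y) = kψ K ψ R (x - y) * f y - kψ K ψ R (x - y) * g y :=
    fun y => by ring
  simp only [cT, e]
  rw [integral_sub (cT_int (kψ_meas hK h R) ⟨_, kψ_bdd hK h R⟩ hf.int x)
      (cT_int (kψ_meas hK h R) ⟨_, kψ_bdd hK h R⟩ hg.int x)]
  ring

/-- Almost everywhere, the truncations form a Cauchy family as the inner scale tends to zero, no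
matter which profiles are used. -/
lemma pv_cauchy {n : ℕ} (hn : 0 < n) {K : E n → ℝ} {A : ℝ} (hK : HK K A) {R : ℝ} (hR : 0 < R)
    {f : E n → ℝ} (hf : FB f) {s : ℝ≥0∞} (hs : s ≠ 0) (hs' : s ≠ ⊤) :
    ∀ᵐ x, ∃ a : ℝ, 0 < a ∧ ∀ ψ ε ψ' ε', Cut ψ ε → Cut ψ' ε' → ε < a → ε' < a →
      ‖cT (kψ K ψ R) f x - cT (kψ K ψ' R) f x‖ₑ ≤ s + (C6 n A * (4 * s) + C6 n A * (4 * s)) := by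
  rw [ae_iff]
  set B := {x : E n | ¬ ∃ a : ℝ, 0 < a ∧ ∀ ψ ε ψ' ε', Cut ψ ε → Cut ψ' ε' → ε < a → ε' < a →
      ‖cT (kψ K ψ R) f x - cT (kψ K ψ' R) f x‖ₑ ≤ s + (C6 n A * (4 * s) + C6 n A * (4 * s))} with hB
  set Q := (4 : ℝ≥0∞) ^ n * ((CA n A : ℝ≥0∞) ^ 2 + 1) with hQ
  have hQt : Q ≠ ⊤ := by finiteness
  have hQ0 : Q ≠ 0 := mul_ne_zero (by positivity) (zero_lt_one.trans_le le_add_self).ne'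
  have key : ∀ η : ℝ≥0∞, η ≠ 0 → s ^ 2 * volume B ≤ Q * η := by
    intro η hη
    obtain ⟨g, hg, ⟨L, hL⟩, hgf⟩ := exists_lip hf hη
    have hh : FB fun y => f y - g y := by
      obtain ⟨b1, hb1⟩ := hf.bdd
      obtain ⟨b2, hb2⟩ := hg.bdd
      exact ⟨hf.meas.sub hg.meas, hf.int.sub hg.int, b1 + b2, fun x =>
        (abs_sub _ _).trans (add_le_add (hb1 x) (hb2 x))⟩
    refine le_trans ?_ ((max_trunc hn hK hR hh hs hs').trans (mul_le_mul_right hgf _))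
    refine mul_le_mul_right (measure_mono fun x hx => ?_) _
    by_contra hcon
    refine hx ?_
    -- the scale below which the truncations applied to the Lipschitz part differ by at most `s`
    set V := ENNReal.ofReal (A * L) * (2 ^ (n + 1) * vn n) with hV
    have hVt : V ≠ ⊤ := ENNReal.mul_ne_top ENNReal.ofReal_ne_top (ENNReal.mul_ne_top (by finiteness) (vn_ne_top n))
    have ht : Tendsto (fun a : ℝ => V * ENNReal.ofReal (2 * a)) (𝓝[>] 0) (𝓝 0) := by
      have h1 : Tendsto (fun a : ℝ => ENNReal.ofReal (2 * a)) (𝓝[>] 0) (𝓝 0) := by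
        have : Tendsto (fun a : ℝ => ENNReal.ofReal (2 * a)) (𝓝 0) (𝓝 (ENNReal.ofReal (2 * 0))) :=
          (ENNReal.continuous_ofReal.comp (continuous_const.mul continuous_id)).tendsto 0
        simp only [mul_zero, ENNReal.ofReal_zero] at this
        exact this.mono_left nhdsWithin_le_nhds
      have := ENNReal.Tendsto.const_mul h1 (Or.inr hVt)
      simpa using this
    obtain ⟨a, ha, ha0⟩ := ((ht.eventually (gt_mem_nhds (pos_iff_ne_zero.2 hs))).and self_mem_nhdsWithin).exists
    refine ⟨a, ha0, fun ψ ε ψ' ε' h h' h1 h2 => ?_⟩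
    have k1 := cauchy_lip hK (R := R) hg hL x h h' h1 h2
    have k2 : ‖cT (kψ K ψ R) (fun y => f y - g y) x‖ₑ ≤ C6 n A * (4 * s) :=
      not_lt.1 fun hc => hcon ⟨ψ, ε, h, hc⟩
    have k3 : ‖cT (kψ K ψ' R) (fun y => f y - g y) x‖ₑ ≤ C6 n A * (4 * s) :=
      not_lt.1 fun hc => hcon ⟨ψ', ε', h', hc⟩
    rw [cT_sub hK h hf hg, cT_sub hK h' hf hg, add_sub_add_comm]
    refine (enorm_add_le _ _).trans (add_le_add (k1.trans ?_) (enorm_sub_le.trans (add_le_add k2 k3)))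
    rw [← mul_assoc]
    exact ha.le
  by_contra hne
  have hpos : s ^ 2 * volume B ≠ 0 := mul_ne_zero (pow_ne_zero _ hs) hne
  by_cases htop : volume B = ⊤
  · have := key 1 one_ne_zero
    rw [htop, ENNReal.mul_top (pow_ne_zero _ hs), mul_one, top_le_iff] at this
    exact hQt this
  · have hfin : s ^ 2 * volume B ≠ ⊤ := ENNReal.mul_ne_top (ENNReal.pow_ne_top hs') htop
    have := key (s ^ 2 * volume B / (2 * Q)) (ENNReal.div_ne_zero.2 ⟨hpos, by finiteness⟩)
    have e : Q * (s ^ 2 * volume B / (2 * Q)) = (s ^ 2 * volume B) / 2 := by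
      rw [mul_comm 2 Q, ← mul_div_assoc, ENNReal.mul_div_mul_left _ _ hQ0 hQt]
    rw [e] at this
    exact absurd (ENNReal.half_lt_self hpos hfin) (not_lt.2 this)

/-- Existence almost everywhere of the principal value, which is also the limit of the smoothly
truncated integrals. -/
lemma pv_exists {n : ℕ} (hn : 0 < n) {Ω : E n → ℝ} {A : ℝ} (hK : HK (kernelFn Ω) A) {f : E n → ℝ}
    (hf : FB f) (hfc : HasCompactSupport f) :
    ∀ᵐ x, Tendsto (fun N : ℕ => cT (kt (kernelFn Ω) (1 / ((N : ℝ) + 1)) ((N : ℝ) + 1)) f x) atTop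
      (𝓝 (Tsing Ω f x)) := by
  set K := kernelFn Ω
  have hae : ∀ᵐ x, ∀ M : ℕ, ∀ m : ℕ, ∃ a : ℝ, 0 < a ∧ ∀ ψ ε ψ' ε', Cut ψ ε → Cut ψ' ε' → ε < a → ε' < a →
      ‖cT (kψ K ψ ((M : ℝ) + 1)) f x - cT (kψ K ψ' ((M : ℝ) + 1)) f x‖ₑ ≤ ((m : ℝ≥0∞) + 1)⁻¹ +
        (C6 n A * (4 * ((m : ℝ≥0∞) + 1)⁻¹) + C6 n A * (4 * ((m : ℝ≥0∞) + 1)⁻¹)) := by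
    refine ae_all_iff.2 fun M => ae_all_iff.2 fun m => ?_
    refine pv_cauchy hn hK (by positivity) hf ?_ ?_
    · exact ENNReal.inv_ne_zero.2 (by finiteness)
    · exact ENNReal.inv_ne_top.2 (zero_lt_one.trans_le le_add_self).ne'
  filter_upwards [hae] with x hx
  obtain ⟨r, hr⟩ := hfc.isCompact.isBounded.subset_closedBall x
  obtain ⟨M, hM⟩ := exists_nat_ge r
  have hfar : ∀ u, (M : ℝ) + 1 < ‖u‖ → f (x - u) = 0 := by
    intro u hu
    by_contra hne
    have := hr (subset_tsupport f hne)
    rw [Metric.mem_closedBall, dist_eq_norm] at this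
    simp at this
    linarith
  have hM1 : (0 : ℝ) < (M : ℝ) + 1 := by positivity
  -- the Cauchy property, in terms of an arbitrary real tolerance
  have hcauchy : ∀ η : ℝ, 0 < η → ∃ a : ℝ, 0 < a ∧ ∀ ψ ε ψ' ε', Cut ψ ε → Cut ψ' ε' → ε < a → ε' < a →
      dist (cT (kψ K ψ ((M : ℝ) + 1)) f x) (cT (kψ K ψ' ((M : ℝ) + 1)) f x) ≤ η := by
    intro η hη
    set W := 1 + (C6 n A * 4 + C6 n A * 4) with hW
    have hWt : W ≠ ⊤ := by have := C6_ne_top n A; finiteness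
    have hη' : ENNReal.ofReal η / W ≠ 0 := ENNReal.div_ne_zero.2 ⟨by simpa using hη, hWt⟩
    obtain ⟨m, hm⟩ := ENNReal.exists_inv_nat_lt hη'
    obtain ⟨a, ha, h⟩ := hx M m
    refine ⟨a, ha, fun ψ ε ψ' ε' h1 h2 h3 h4 => ?_⟩
    have h5 := h ψ ε ψ' ε' h1 h2 h3 h4
    have h6 : ((m : ℝ≥0∞) + 1)⁻¹ ≤ ENNReal.ofReal η / W :=
      (ENNReal.inv_le_inv.2 le_self_add).trans hm.le
    have h7 : ((m : ℝ≥0∞) + 1)⁻¹ + (C6 n A * (4 * ((m : ℝ≥0∞) + 1)⁻¹) + C6 n A * (4 * ((m : ℝ≥0∞) + 1)⁻¹))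
        = W * ((m : ℝ≥0∞) + 1)⁻¹ := by rw [hW]; ring
    rw [h7] at h5
    have h8 := h5.trans ((mul_le_mul_right h6 W).trans ENNReal.mul_div_le)
    rw [← ofReal_norm] at h8
    rw [dist_eq_norm]
    exact (ENNReal.ofReal_le_ofReal_iff hη.le).1 h8
  have esharp : ∀ ε : ℝ, Teps Ω ε f x = cT (kψ K (fun t => if ε < t then 1 else 0) ((M : ℝ) + 1)) f x := by
    intro ε
    have hm : MeasurableSet {y : E n | ε < ‖y‖} := measurableSet_lt measurable_const measurable_norm
    rw [cT_comm, Teps, ← integral_indicator hm]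
    congr 1; ext u
    by_cases hu : ε < ‖u‖
    · have hu' : u ∈ {y : E n | ε < ‖y‖} := hu
      rw [Set.indicator_of_mem hu', kψ, if_pos hu]
      by_cases h2 : ‖u‖ ≤ (M : ℝ) + 1
      · rw [cut_one hM1 h2]; simp [K]
      · rw [hfar u (not_le.1 h2)]; simp
    · have hu' : u ∉ {y : E n | ε < ‖y‖} := hu
      rw [Set.indicator_of_notMem hu', kψ, if_neg hu]; simp
  have esmooth : ∀ N : ℕ, M ≤ N → cT (kt K (1 / ((N : ℝ) + 1)) ((N : ℝ) + 1)) f x =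
      cT (kψ K (fun t => 1 - cut (1 / ((N : ℝ) + 1)) t) ((M : ℝ) + 1)) f x := by
    intro N hN
    have hN' : (M : ℝ) ≤ N := by exact_mod_cast hN
    rw [cT_comm, cT_comm]
    congr 1; ext u
    by_cases h2 : ‖u‖ ≤ (M : ℝ) + 1
    · rw [kt, kψ, cut_one hM1 h2, cut_one (by positivity) (by linarith)]; ring
    · rw [hfar u (not_le.1 h2)]; simp
  set b : ℕ → ℝ := fun N => cT (kψ K (fun t => 1 - cut (1 / ((N : ℝ) + 1)) t) ((M : ℝ) + 1)) f x with hb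
  have hsm : ∀ N : ℕ, Cut (fun t => 1 - cut (1 / ((N : ℝ) + 1)) t) (1 / ((N : ℝ) + 1)) := fun N =>
    Cut.smooth (by positivity)
  have hsmall : ∀ a : ℝ, 0 < a → ∃ N0 : ℕ, ∀ N, N0 ≤ N → 1 / ((N : ℝ) + 1) < a := by
    intro a ha
    obtain ⟨N0, hN0⟩ := exists_nat_one_div_lt ha
    refine ⟨N0, fun N hN => lt_of_le_of_lt ?_ hN0⟩
    have : (N0 : ℝ) ≤ N := by exact_mod_cast hN
    gcongr
  have hbc : CauchySeq b := by
    refine Metric.cauchySeq_iff.2 fun η hη => ?_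
    obtain ⟨a, ha, h⟩ := hcauchy (η / 2) (by positivity)
    obtain ⟨N0, hN0⟩ := hsmall a ha
    exact ⟨N0, fun i hi j hj => (h _ _ _ _ (hsm i) (hsm j) (hN0 i hi) (hN0 j hj)).trans_lt (by linarith)⟩
  obtain ⟨L, hL⟩ := cauchySeq_tendsto_of_complete hbc
  have hT : Tendsto (fun ε => Teps Ω ε f x) (𝓝[>] (0 : ℝ)) (𝓝 L) := by
    refine Metric.tendsto_nhds.2 fun η hη => ?_
    obtain ⟨a, ha, h⟩ := hcauchy (η / 2) (by positivity)
    filter_upwards [self_mem_nhdsWithin, nhdsWithin_le_nhds (gt_mem_nhds ha)] with ε hε0 hεa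
    obtain ⟨N0, hN0⟩ := hsmall a ha
    have h1 : Tendsto (fun N => dist (Teps Ω ε f x) (b N)) atTop (𝓝 (dist (Teps Ω ε f x) L)) :=
      tendsto_const_nhds.dist hL
    have h2 : dist (Teps Ω ε f x) L ≤ η / 2 := by
      refine le_of_tendsto h1 (eventually_atTop.2 ⟨N0, fun N hN => ?_⟩)
      rw [esharp]
      exact h _ _ _ _ (Cut.sharp hε0) (hsm N) hεa (hN0 N hN)
    linarith
  have hlim : Tsing Ω f x = L := hT.limUnder_eq
  rw [hlim]
  refine hL.congr' (eventually_atTop.2 ⟨M, fun N hN => (esmooth N hN).symm⟩)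

/-! ### Duality and the variable exponent bound -/

lemma MemLinftyC.fb {n : ℕ} {f : E n → ℝ} (hf : MemLinftyC f) : FB f := by
  obtain ⟨hm, ⟨C, hC⟩, hc⟩ := hf
  refine ⟨hm, ?_, ⟨C, hC⟩⟩
  have h2 : IntegrableOn f (tsupport f) :=
    IntegrableOn.of_bound hc.isCompact.measure_lt_top hm.aestronglyMeasurable C
      (ae_of_all _ fun u => hC u)
  rw [← integrable_indicator_iff (isClosed_tsupport f).measurableSet] at h2
  have : f = (tsupport f).indicator f := by
    ext u
    by_cases h : u ∈ tsupport f
    · rw [Set.indicator_of_mem h]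
    · rw [Set.indicator_of_notMem h, image_eq_zero_of_notMem_tsupport h]
  rw [this]
  exact h2

/-- A bound `‖u‖ < α` on the Luxemburg norm makes the modular of `u / α` at most one. -/
lemma modular_le_one {n : ℕ} {p : E n → ℝ} (hp : ∀ x, 0 ≤ p x) {u : E n → ℝ≥0∞} {α : ℝ≥0∞}
    (h : eLux p u < α) : ∫⁻ x, (u x / α) ^ p x ≤ 1 := by
  obtain ⟨l, ⟨-, hl⟩, hlα⟩ := sInf_lt_iff.1 h
  refine le_trans (lintegral_mono fun x => ?_) hl
  exact ENNReal.rpow_le_rpow (ENNReal.div_le_div_left hlα.le _) (hp x)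

/-- If `p x = 1`, the conjugate exponent at `x` would be the junk value `1 / 0 = 0`, which is less
than `1`. -/
lemma conj_gt_one {n : ℕ} {p : E n → ℝ} (hp : GoodExp p) (hp' : GoodExp (conjExp p)) (x : E n) :
    1 < p x := by
  refine lt_of_le_of_ne (hp.2.1 x) fun h => ?_
  have := hp'.2.1 x
  rw [conjExp, ← h] at this
  norm_num at this

lemma conj_holder {n : ℕ} {p : E n → ℝ} {x : E n} (h : 1 < p x) :
    (p x).HolderConjugate (conjExp p x) := Real.HolderConjugate.conjExponent h

/-- Hölder's inequality in modular form. -/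
lemma holder_mod {n : ℕ} {p : E n → ℝ} (hpm : Measurable p) (hp1 : ∀ x, 1 < p x)
    {u v : E n → ℝ≥0∞} (hv : Measurable v) {α β : ℝ≥0∞} (hα : α ≠ 0) (hα' : α ≠ ⊤) (hβ : β ≠ 0) (hβ' : β ≠ ⊤)
    (h1 : ∫⁻ x, (u x / α) ^ p x ≤ 1) (h2 : ∫⁻ x, (v x / β) ^ conjExp p x ≤ 1) :
    ∫⁻ x, u x * v x ≤ 2 * (α * β) := by
  have key : ∀ x, u x * v x ≤ (α * β) * ((u x / α) ^ p x + (v x / β) ^ conjExp p x) := by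
    intro x
    have hc := conj_holder (hp1 x)
    have hle : ∀ (a : ℝ≥0∞) {r : ℝ}, 1 < r → a / ENNReal.ofReal r ≤ a := fun a r hr => by
      refine ENNReal.div_le_of_le_mul ?_
      calc a = a * 1 := (mul_one a).symm
        _ ≤ _ := by gcongr; exact ENNReal.one_le_ofReal.2 hr.le
    have hy := (ENNReal.young_inequality (u x / α) (v x / β) hc).trans
      (add_le_add (hle _ hc.lt) (hle _ hc.symm.lt))
    calc u x * v x = (α * (u x / α)) * (β * (v x / β)) := by
          rw [ENNReal.mul_div_cancel hα hα', ENNReal.mul_div_cancel hβ hβ']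
      _ = (α * β) * ((u x / α) * (v x / β)) := by ring
      _ ≤ _ := by gcongr
  have hpm' : Measurable (conjExp p) := hpm.div (hpm.sub_const 1)
  refine (lintegral_mono key).trans ?_
  rw [lintegral_const_mul' _ _ (ENNReal.mul_ne_top hα' hβ'),
    lintegral_add_right _ ((hv.div_const β).pow hpm')]
  calc _ ≤ α * β * (1 + 1) := by gcongr
    _ = _ := by ring

/-- The norm bound, in terms of the bounds `c`, `c'` of the maximal operator on `L^{p(·)}` and
`L^{p'(·)}`. The added `1` makes the inequality in the duality argument strict. -/
def Cfin (n : ℕ) (A : ℝ) (c c' : ℝ≥0∞) : ℝ≥0∞ := C4 n (CA n A) * (2 * ((c + 1) * (c' + 1))) + 1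

/-- The truncated operators are uniformly bounded, in modular form. If the modular `m` of the image
exceeded `1`, testing the bilinear bound against `(|T f| / λ) ^ (p - 1)`, whose norm in `L^{p'(·)}` is
at most `m`, would give a contradiction. The test function is automatically bounded with compact support, since
the truncated kernel and `f` are. -/
lemma trunc_bound {n : ℕ} (hn : 0 < n) {K : E n → ℝ} {A : ℝ} (hK : HK K A) {p : E n → ℝ}
    (hp : GoodExp p) (hp' : GoodExp (conjExp p)) {c c' : ℝ≥0∞} (hc : c ≠ ⊤) (hc' : c' ≠ ⊤)
    (hM : ∀ f : E n → ℝ, AEStronglyMeasurable f volume → eLux p (maximal f) ≤ c * vNorm p f)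
    (hM' : ∀ f : E n → ℝ, AEStronglyMeasurable f volume →
      eLux (conjExp p) (maximal f) ≤ c' * vNorm (conjExp p) f)
    {f : E n → ℝ} (hf : MemLinftyC f) {θ : ℝ≥0∞} (hθ : vNorm p f < θ) (hθ' : θ ≠ ⊤)
    {δ R : ℝ} (hδ : 0 < δ) (hR : 0 < R) :
    ∫⁻ x, (‖cT (kt K δ R) f x‖ₑ / (Cfin n A c c' * θ)) ^ p x ≤ 1 := by
  have hfb := hf.fb
  have hθ0 : θ ≠ 0 := (pos_of_gt hθ).ne'
  have sk := hK.sk hδ hR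
  have hcz := hK.czk hδ hR
  have hp1 := conj_gt_one hp hp'
  set k := kt K δ R with hk
  set F : E n → ℝ≥0∞ := fun x => ‖cT k f x‖ₑ with hF
  have hFm : Measurable F := (cT_meas sk.meas hfb.meas).enorm
  have hC4t := C4_ne_top n (CA n A)
  have hCt : Cfin n A c c' ≠ ⊤ := by unfold Cfin; finiteness
  have hC0 : Cfin n A c c' ≠ 0 := by unfold Cfin; exact (zero_lt_one.trans_le le_add_self).ne'
  set lam := Cfin n A c c' * θ with hlam
  have hl0 : lam ≠ 0 := mul_ne_zero hC0 hθ0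
  have hlt : lam ≠ ⊤ := ENNReal.mul_ne_top hCt hθ'
  obtain ⟨B, hB⟩ := hp.2.2.2
  -- `F` is bounded
  obtain ⟨b, hbt, hb⟩ : ∃ b : ℝ≥0∞, b ≠ ⊤ ∧ ∀ x, F x ≤ b := by
    obtain ⟨C, hC⟩ := sk.bdd
    refine ⟨ENNReal.ofReal C * ∫⁻ y, ‖f y‖ₑ, ENNReal.mul_ne_top ENNReal.ofReal_ne_top hfb.int.2.ne, fun x => ?_⟩
    refine (enorm_integral_le_lintegral_enorm _).trans ?_
    rw [← lintegral_const_mul _ hfb.meas.enorm]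
    refine lintegral_mono fun y => ?_
    rw [enorm_mul]
    gcongr
    rw [← ofReal_norm]
    exact ENNReal.ofReal_le_ofReal (hC _)
  -- `f` and `F` vanish far away
  obtain ⟨r, hfr, hFr⟩ : ∃ r : ℝ, (∀ x, r < ‖x‖ → f x = 0) ∧ ∀ x, r < ‖x‖ → F x = 0 := by
    obtain ⟨r0, hr0⟩ := hf.2.2.isCompact.isBounded.subset_closedBall 0
    have hfr : ∀ x, r0 < ‖x‖ → f x = 0 := fun x hx => by
      by_contra hne
      have := hr0 (subset_tsupport f hne)
      rw [mem_closedBall_zero_iff] at this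
      linarith
    have hm : 0 < 2 * max δ R := by positivity
    refine ⟨r0 + 2 * max δ R, fun x hx => hfr x (by linarith), fun x hx => ?_⟩
    have : cT k f x = 0 := by
      rw [cT]
      refine integral_eq_zero_of_ae (ae_of_all _ fun y => ?_)
      simp only [Pi.zero_apply]
      by_cases hy : r0 < ‖y‖
      · rw [hfr y hy, mul_zero]
      · have h1 : ‖x‖ ≤ ‖x - y‖ + ‖y‖ := by simpa using norm_add_le (x - y) y
        rw [hk, kt, cut_zero hR (by linarith [le_max_right δ R]), cut_zero hδ (by linarith [le_max_left δ R])]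
        ring
    simp [hF, this]
  set q : ℝ≥0∞ := max 1 (b / lam) with hq
  have hqt : q ≠ ⊤ := max_ne_top one_ne_top (ENNReal.div_ne_top hbt hl0)
  have hFq : ∀ x, F x / lam ≤ q := fun x => (ENNReal.div_le_div_right (hb x) _).trans (le_max_right _ _)
  have hFlt : ∀ x, F x / lam ≠ ⊤ := fun x => ne_top_of_le_ne_top hqt (hFq x)
  have hpow : ∀ x, p x ≤ B → ∀ e, 0 ≤ e → e ≤ p x → (F x / lam) ^ e ≤ q ^ B := fun x hx e h0 he =>
    (ENNReal.rpow_le_rpow (hFq x) h0).trans (ENNReal.rpow_le_rpow_of_exponent_le (le_max_left _ _) (he.trans hx))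
  have hqB : q ^ B ≠ ⊤ := ENNReal.rpow_ne_top_of_ne_zero (zero_lt_one.trans_le (le_max_left _ _)).ne' hqt
  set m := ∫⁻ x, (F x / lam) ^ p x with hm
  by_contra hcon
  have hm1 : 1 < m := not_le.1 hcon
  have hm0 : m ≠ 0 := (zero_lt_one.trans hm1).ne'
  have hmt : m ≠ ⊤ := by
    refine ne_top_of_le_ne_top (ENNReal.mul_ne_top hqB ((Metric.isBounded_closedBall (x := (0 : E n)) (r := r)).measure_lt_top (μ := volume)).ne) ?_
    rw [← setLIntegral_const, ← lintegral_indicator Metric.isClosed_closedBall.measurableSet]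
    refine lintegral_mono_ae ?_
    filter_upwards [hB] with x hx
    by_cases h : x ∈ Metric.closedBall (0 : E n) r
    · rw [Set.indicator_of_mem h]
      exact hpow x hx _ (zero_le_one.trans (hp1 x).le) le_rfl
    · rw [mem_closedBall_zero_iff, not_le] at h
      rw [hFr x h, ENNReal.zero_div, ENNReal.zero_rpow_of_pos (zero_lt_one.trans (hp1 x))]
      exact zero_le
  -- the dual function, set to zero on the null set where the exponent exceeds its bound
  set g : E n → ℝ≥0∞ := {x | p x ≤ B}.indicator fun x => (F x / lam) ^ (p x - 1) with hg
  have hBm : MeasurableSet {x | p x ≤ B} := measurableSet_le hp.1 measurable_const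
  have hgm : Measurable g := ((hFm.div_const _).pow (hp.1.sub_const 1)).indicator hBm
  have hgB : ∀ x, g x ≤ q ^ B := fun x => by
    by_cases h : x ∈ {x | p x ≤ B}
    · rw [hg, Set.indicator_of_mem h]
      exact hpow x h _ (by linarith [hp1 x]) (by linarith)
    · rw [hg, Set.indicator_of_notMem h]; exact zero_le
  have hgt : ∀ x, g x ≠ ⊤ := fun x => ne_top_of_le_ne_top hqB (hgB x)
  have hgr : ∀ x, r < ‖x‖ → g x = 0 := fun x hx => by
    by_cases h : x ∈ {x | p x ≤ B}
    · rw [hg, Set.indicator_of_mem h, hFr x hx, ENNReal.zero_div, ENNReal.zero_rpow_of_pos (by linarith [hp1 x])]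
    · rw [hg, Set.indicator_of_notMem h]
  have hgae : ∀ᵐ x, g x = (F x / lam) ^ (p x - 1) := by
    filter_upwards [hB] with x hx
    have h : x ∈ {x | p x ≤ B} := hx
    rw [hg, Set.indicator_of_mem h]
  have hFg : ∫⁻ x, F x * g x = lam * m := by
    rw [hm, ← lintegral_const_mul' _ _ hlt]
    refine lintegral_congr_ae ?_
    filter_upwards [hgae] with x hx
    rw [hx]
    have e : (F x / lam) ^ p x = (F x / lam) * (F x / lam) ^ (p x - 1) := by
      by_cases h0 : F x / lam = 0
      · rw [h0, ENNReal.zero_rpow_of_pos (zero_lt_one.trans (hp1 x)), zero_mul]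
      · conv_lhs => rw [show p x = 1 + (p x - 1) by ring]
        rw [ENNReal.rpow_add _ _ h0 (hFlt x), ENNReal.rpow_one]
    rw [e, ← mul_assoc, ENNReal.mul_div_cancel hl0 hlt]
  have hgtoReal : ∀ y, ENNReal.ofReal |(g y).toReal| = g y := fun y => by
    rw [abs_of_nonneg ENNReal.toReal_nonneg, ENNReal.ofReal_toReal (hgt y)]
  have hgn : vNorm (conjExp p) (fun y => (g y).toReal) ≤ m := by
    refine sInf_le ⟨hm0, ?_⟩
    simp only [hgtoReal]
    calc ∫⁻ x, (g x / m) ^ conjExp p x ≤ ∫⁻ x, m⁻¹ * (F x / lam) ^ p x := by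
          refine lintegral_mono_ae ?_
          filter_upwards [hgae] with x hx
          have hcj := conj_holder (hp1 x)
          have h0 := hcj.symm.pos
          rw [hx, ENNReal.div_rpow_of_nonneg _ _ h0.le, ← ENNReal.rpow_mul,
            hcj.sub_one_mul_conj, div_eq_mul_inv, mul_comm]
          gcongr
          conv_lhs => rw [← ENNReal.rpow_one m]
          exact ENNReal.rpow_le_rpow_of_exponent_le hm1.le hcj.symm.lt.le
      _ = 1 := by
          rw [lintegral_const_mul' _ _ (ENNReal.inv_ne_top.2 hm0), ENNReal.inv_mul_cancel hm0 hmt]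
  have hlt1 : ∀ {a d t : ℝ≥0∞}, a ≠ ⊤ → t ≠ 0 → t ≠ ⊤ → d ≤ a * t → d < (a + 1) * t := by
    intro a d t ha ht0 ht' hd
    refine hd.trans_lt ?_
    rw [add_mul, one_mul]
    exact ENNReal.lt_add_right (ENNReal.mul_ne_top ha ht') ht0
  have h1 : ∫⁻ x, (emaximal (fun y => ‖f y‖ₑ) x / ((c + 1) * θ)) ^ p x ≤ 1 := by
    refine modular_le_one (fun x => zero_le_one.trans (hp1 x).le) (hlt1 hc hθ0 hθ' ?_)
    have e : emaximal (fun y => ‖f y‖ₑ) = maximal f := by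
      unfold maximal; simp only [Real.enorm_eq_ofReal_abs]
    rw [e]
    exact (hM f hfb.meas.aestronglyMeasurable).trans (mul_le_mul_right hθ.le _)
  have h2 : ∫⁻ x, (dmax g x / ((c' + 1) * m)) ^ conjExp p x ≤ 1 := by
    have h0 : ∀ x, 0 ≤ conjExp p x := fun x => zero_le_one.trans (hp'.2.1 x)
    refine le_trans (lintegral_mono fun x => ?_) (modular_le_one (u := emaximal g) h0 (hlt1 hc' hm0 hmt ?_))
    · exact ENNReal.rpow_le_rpow (ENNReal.div_le_div_right (dmax_le g x) _) (h0 x)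
    · have e : emaximal g = maximal fun y => (g y).toReal := by
        unfold maximal; simp only [hgtoReal]
      rw [e]
      exact (hM' _ hgm.ennreal_toReal.aestronglyMeasurable).trans (mul_le_mul_right hgn _)
  have h3 := holder_mod hp.1 hp1 (dmax_meas g) (mul_ne_zero (zero_lt_one.trans_le le_add_self).ne' hθ0)
    (by finiteness) (mul_ne_zero (zero_lt_one.trans_le le_add_self).ne' hm0) (by finiteness) h1 h2
  have h4 := bilinear hn hcz hfb hgm hqB hgB hfr hgr
  have h5 := h4.trans (mul_le_mul_right h3 _)
  change ∫⁻ x, F x * g x ≤ _ at h5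
  rw [hFg] at h5
  have h6 : (θ * m) * Cfin n A c c' ≤ (θ * m) * (C4 n (CA n A) * (2 * ((c + 1) * (c' + 1)))) := by
    calc _ = lam * m := by rw [hlam]; ring
      _ ≤ _ := h5
      _ = _ := by ring
  rw [ENNReal.mul_le_mul_iff_right (mul_ne_zero hθ0 hm0) (ENNReal.mul_ne_top hθ' hmt)] at h6
  exact absurd h6 (not_le.2 (ENNReal.lt_add_right (by finiteness) one_ne_zero))

/-- The modular bound passes to the principal value by Fatou's lemma. -/
lemma Tsing_bound {n : ℕ} (hn : 0 < n) {Ω : E n → ℝ} {A : ℝ} (hK : HK (kernelFn Ω) A) {p : E n → ℝ}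
    (hp : Measurable p) {f : E n → ℝ} (hf : MemLinftyC f) {lam : ℝ≥0∞} (hl : lam ≠ 0)
    (h : ∀ δ R, 0 < δ → 0 < R → ∫⁻ x, (‖cT (kt (kernelFn Ω) δ R) f x‖ₑ / lam) ^ p x ≤ 1) :
    vNorm p (Tsing Ω f) ≤ lam := by
  refine sInf_le ⟨hl, ?_⟩
  set u : ℕ → E n → ℝ≥0∞ := fun N x =>
    (‖cT (kt (kernelFn Ω) (1 / ((N : ℝ) + 1)) ((N : ℝ) + 1)) f x‖ₑ / lam) ^ p x with hu
  have hum : ∀ N, Measurable (u N) := fun N =>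
    ((cT_meas (hK.sk (by positivity) (by positivity)).meas hf.1).enorm.div_const _).pow hp
  calc _ = ∫⁻ x, liminf (fun N => u N x) atTop := by
        refine lintegral_congr_ae ?_
        filter_upwards [pv_exists hn hK hf.fb hf.2.2] with x hx
        rw [← Real.enorm_eq_ofReal_abs]
        refine (Tendsto.liminf_eq ?_).symm
        exact (ENNReal.continuous_rpow_const.tendsto _).comp
          (ENNReal.Tendsto.div_const hx.enorm (Or.inr hl))
    _ ≤ liminf (fun N => ∫⁻ x, u N x) atTop := lintegral_liminf_le hum
    _ ≤ 1 := by
        refine liminf_le_of_frequently_le' (Eventually.frequently (Eventually.of_forall fun N => ?_))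
        exact h _ _ (by positivity) (by positivity)

/-- Theorem on boundedness of `T`: if `p, p' ∈ 𝓜(ℝⁿ)`, then there is a
constant `c_p` such that `‖Tf‖_{L^{p(·)}} ≤ c_p ‖f‖_{L^{p(·)}}` for every `f` in the dense
class `L^∞_c` (whence `T` extends to a bounded operator on `L^{p(·)}(ℝⁿ)`). -/
theorem statement2 {n : ℕ} (hn : 0 < n) (p Ω : E n → ℝ) (hK : IsCZKernel Ω)
    (hp : MemClassM p) (hp' : MemClassM (conjExp p)) :
    ∃ c : ℝ, 0 < c ∧ ∀ f : E n → ℝ, MemLinftyC f →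
      vNorm p (Tsing Ω f) ≤ ENNReal.ofReal c * vNorm p f := by
  obtain ⟨A, hA⟩ := exists_HK hn hK
  obtain ⟨hg, c, hc, hM⟩ := hp
  obtain ⟨hg', c', hc', hM'⟩ := hp'
  have hC4t := C4_ne_top n (CA n A)
  have hCt : Cfin n A c c' ≠ ⊤ := by unfold Cfin; finiteness
  have hC0 : Cfin n A c c' ≠ 0 := by unfold Cfin; exact (zero_lt_one.trans_le le_add_self).ne'
  refine ⟨(Cfin n A c c').toReal, ENNReal.toReal_pos hC0 hCt, fun f hf => ?_⟩
  rw [ENNReal.ofReal_toReal hCt]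
  by_contra hcon
  rw [not_le, mul_comm] at hcon
  -- a level strictly between the norm of `f` and the supposed excess
  obtain ⟨θ, h1, h2⟩ := exists_between ((ENNReal.lt_div_iff_mul_lt (Or.inl hC0) (Or.inl hCt)).2 hcon)
  have h3 := (ENNReal.lt_div_iff_mul_lt (Or.inl hC0) (Or.inl hCt)).1 h2
  rw [mul_comm] at h3
  have hθt : θ ≠ ⊤ := (h2.trans_le le_top).ne
  refine absurd h3 (not_lt.2 (Tsing_bound hn hA hg.1 hf (mul_ne_zero hC0 (pos_of_gt h1).ne') fun δ R hδ hR => ?_))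
  exact trunc_bound hn hA hg hg' hc hc' hM hM' hf h1 hθt hδ hR

end VarExp
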